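/- For any elliptic curve E defined over the field of algebraic numbers, the field generated over ℚ by the entries of a period matrix of E (the periods and quasi-periods ω₁, ω₂, η₁, η₂ together with 2πi) has transcendence degree at least 2 over ℚ. -/

import Mathlib

/-!
The proof is an application of Gelfond's method. Suppose that the field generated by the entries of
the period matrix contains no two algebraically independent elements. Then the periods, the
quasi-periods, `g₂` and `e₁ = ℘(ω₁/2)` are all algebraic over `ℚ(θ)` for one transcendental number
`θ`. Such numbers act, up to a common denominator, by matrices over `ℤ[θ]` (`exists_rep`); the
predicate `Sz` records the degree and the length of these matrices.

For every large `n`, Siegel's lemma over `ℤ[θ]` (`siegel`, `exists_auxCoeff`) yields a nonzero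
`F(z) = ∑ P i j k * z ^ i * ℘(z) ^ j * ζ(z) ^ k`, with exponents below `Λ` and coefficients in
`ℤ[θ]`, that vanishes to order `T` at the points `ω₁/2 + mω₁ + nω₂` with `m, n < S`. The
derivatives of `z`, `℘`, `℘'`, `ζ` are polynomials in these functions and `g₂`, so that the
conditions are linear equations with coefficients of bounded size.

Let `s` be the size of the largest box `m, n < s` of zeros of order `T`. The zero estimate
(`zero_estimate`) gives `s < 2Λ`: by the quasi-periodicity of `z` and `ζ`, the function `F` restricted
to a translate by `mω₁ + nω₂` is a polynomial in `m` and `n`, and enough zeros force its coefficients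
to vanish, provided that `ω₁η₂ - ω₂η₁ ≠ 0`. The latter (`legendre_ne_zero`) follows from the
nonvanishing of the discriminant. Hence some derivative of `F` of order `< T` at a point just outside
of the box is the first that does not vanish there (`exists_first_nonzero`). The maximum principle on
a large parallelogram, applied to `F` divided by its zeros and multiplied by its poles, bounds it
by about `exp (-T s²)` (`analytic_estimate`).

Taking the norm to `ℚ(θ)` (`Sz.exists_polynomial`), with `Λ` proportional to `n⁸`, `T = n¹⁰` and
`S = n⁷`, one obtains for every large `n` a nonzero integer polynomial of degree `O(n¹⁰)` and
logarithmic Mahler measure `O(n¹¹)` whose value at `θ` is at most `exp (-n²²)`. This contradicts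
Gelfond's transcendence criterion (`gelfond_criterion`).
-/

open scoped BigOperators

/-- The lattice point `m ω₁ + n ω₂` attached to `(m, n) ∈ ℤ²`. -/
noncomputable def latticePt (ω₁ ω₂ : ℂ) (v : ℤ × ℤ) : ℂ :=
  (v.1 : ℂ) * ω₁ + (v.2 : ℂ) * ω₂

/-- The Eisenstein series `∑' 1/ω^k` over the nonzero points of the lattice `ℤω₁ + ℤω₂`. -/
noncomputable def eisenstein (ω₁ ω₂ : ℂ) (k : ℕ) : ℂ :=
  ∑' v : {v : ℤ × ℤ // v ≠ 0}, (latticePt ω₁ ω₂ v.1) ^ (-(k : ℤ))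

/-- The Weierstrass invariant `g₂ = 60 ∑' ω⁻⁴` of the lattice `ℤω₁ + ℤω₂`. -/
noncomputable def weierstrassG2 (ω₁ ω₂ : ℂ) : ℂ := 60 * eisenstein ω₁ ω₂ 4

/-- The Weierstrass invariant `g₃ = 140 ∑' ω⁻⁶` of the lattice `ℤω₁ + ℤω₂`. -/
noncomputable def weierstrassG3 (ω₁ ω₂ : ℂ) : ℂ := 140 * eisenstein ω₁ ω₂ 6

/-- The Weierstrass zeta function of the lattice `ℤω₁ + ℤω₂`:
`ζ(z) = 1/z + ∑' (1/(z-ω) + 1/ω + z/ω²)`. -/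
noncomputable def weierstrassZeta (ω₁ ω₂ z : ℂ) : ℂ :=
  1 / z + ∑' v : {v : ℤ × ℤ // v ≠ 0},
    (1 / (z - latticePt ω₁ ω₂ v.1) + 1 / latticePt ω₁ ω₂ v.1 + z / latticePt ω₁ ω₂ v.1 ^ 2)

/-- The quasi-period `η = 2 ζ(ω/2)` attached to a period `ω` of the lattice `ℤω₁ + ℤω₂`
(the integral of the differential of the second kind against the corresponding cycle). -/
noncomputable def quasiPeriod (ω₁ ω₂ ω : ℂ) : ℂ := 2 * weierstrassZeta ω₁ ω₂ (ω / 2)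

/-! ### Gelfond's transcendence criterion -/

namespace PeriodTrdeg

lemma norm_det_le_prod_sum {n : Type*} [Fintype n] [DecidableEq n] (A : Matrix n n ℂ) :
    ‖A.det‖ ≤ ∏ j, ∑ i, ‖A i j‖ := by
  rw [Matrix.det_apply]
  calc ‖∑ σ : Equiv.Perm n, Equiv.Perm.sign σ • ∏ i, A (σ i) i‖
      ≤ ∑ σ : Equiv.Perm n, ∏ i, ‖A (σ i) i‖ := by
        refine (norm_sum_le _ _).trans (Finset.sum_le_sum fun σ _ => ?_)
        rcases Int.units_eq_one_or (Equiv.Perm.sign σ) with h | h <;>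
          simp [h, norm_prod]
    _ ≤ ∑ f : n → n, ∏ i, ‖A (f i) i‖ := by
        have hinj : Function.Injective (fun σ : Equiv.Perm n => (σ : n → n)) :=
          fun a b h => Equiv.ext (congrFun h)
        rw [← Finset.sum_image (s := Finset.univ) (g := fun σ : Equiv.Perm n => (σ : n → n))
          (f := fun f : n → n => ∏ i, ‖A (f i) i‖) (fun a _ b _ h => hinj h)]
        exact Finset.sum_le_sum_of_subset_of_nonneg (Finset.subset_univ _)
          (fun _ _ _ => Finset.prod_nonneg fun _ _ => norm_nonneg _)
    _ = ∏ j, ∑ i, ‖A i j‖ := by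
        rw [Finset.prod_univ_sum, Fintype.piFinset_univ]

/-- If `v A = w`, Cramer's rule bounds `det A * v k` by the entries of `w` and the column sums of
`A`. -/
lemma norm_det_mul_le {n : Type*} [Fintype n] [DecidableEq n] (A : Matrix n n ℂ) (v w : n → ℂ)
    (h : Matrix.vecMul v A = w) (B : n → ℝ) (hB1 : ∀ j, 1 ≤ B j)
    (hB : ∀ j, ∑ i, ‖A i j‖ ≤ B j) (k : n) :
    ‖A.det * v k‖ ≤ (∑ j, ‖w j‖) * ∏ j, B j := by
  have h1 : A.det * v k = ∑ j, w j * Matrix.cramer A (Pi.single k 1) j := by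
    have h2 := Matrix.mulVec_cramer A (Pi.single k (1 : ℂ))
    have h3 : v ⬝ᵥ (A.mulVec (Matrix.cramer A (Pi.single k 1))) =
        w ⬝ᵥ Matrix.cramer A (Pi.single k 1) := by
      rw [Matrix.dotProduct_mulVec, h]
    rw [h2] at h3
    simpa [dotProduct, Pi.single_apply, mul_comm] using h3
  rw [h1, Finset.sum_mul]
  refine (norm_sum_le _ _).trans (Finset.sum_le_sum fun j _ => ?_)
  rw [norm_mul]
  refine mul_le_mul_of_nonneg_left ?_ (norm_nonneg _)
  rw [Matrix.cramer_apply]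
  refine (norm_det_le_prod_sum _).trans ?_
  refine Finset.prod_le_prod (fun _ _ => Finset.sum_nonneg fun _ _ => norm_nonneg _) fun l _ => ?_
  by_cases hl : l = j
  · subst hl
    simp only [Matrix.updateCol_self]
    refine le_trans ?_ (hB1 l)
    rw [Finset.sum_eq_single k] <;> simp +contextual
  · simpa [Matrix.updateCol_ne hl] using hB l

/-- The Mahler measure of an integer polynomial. -/
noncomputable def mahler (p : Polynomial ℤ) : ℝ :=
  (p.map (Int.castRingHom ℂ)).mahlerMeasure

lemma mahler_mul (p q : Polynomial ℤ) : mahler (p * q) = mahler p * mahler q := by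
  simp [mahler, Polynomial.mahlerMeasure_mul]

lemma one_le_mahler {p : Polynomial ℤ} (hp : p ≠ 0) : 1 ≤ mahler p :=
  Polynomial.one_le_mahlerMeasure_of_ne_zero hp

/-- The length is at most `2 ^ deg` times the Mahler measure, because the `i`-th coefficient is at
most `binom(d, i)` times it. -/
lemma sum_coeff_le_mahler (p : Polynomial ℤ) (d : ℕ) (hd : p.natDegree = d) :
    ∑ i ∈ Finset.range (d + 1), ‖(p.coeff i : ℂ)‖ ≤ 2 ^ d * mahler p := by
  have : (2 : ℝ) ^ d = ∑ i ∈ Finset.range (d + 1), (d.choose i : ℝ) := by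
    exact_mod_cast (Nat.sum_range_choose d).symm
  rw [this, Finset.sum_mul]
  refine Finset.sum_le_sum fun i _ => ?_
  have h := (p.map (Int.castRingHom ℂ)).norm_coeff_le_choose_mul_mahlerMeasure i
  rw [Polynomial.coeff_map, Polynomial.natDegree_map_eq_of_injective
    (RingHom.injective_int _), hd] at h
  simpa [mahler] using h

/-- The length of a column of the Sylvester matrix, which consists of the coefficients of `p`
shifted by `j`. -/
lemma sum_shift_le (p : Polynomial ℤ) (d N j : ℕ) (hd : p.natDegree = d) :
    ∑ i : Fin N, ‖(if (i : ℕ) ∈ Set.Icc j (j + d) then (p.coeff (i - j) : ℂ) else 0)‖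
      ≤ 2 ^ d * mahler p := by
  refine le_trans ?_ (sum_coeff_le_mahler p d hd)
  rw [Fin.sum_univ_eq_sum_range
    (fun i => ‖(if i ∈ Set.Icc j (j + d) then (p.coeff (i - j) : ℂ) else 0)‖) N]
  calc _ ≤ ∑ i ∈ (Finset.range (d + 1)).image (· + j),
        ‖(if i ∈ Set.Icc j (j + d) then (p.coeff (i - j) : ℂ) else 0)‖ := by
        rw [← Finset.sum_filter_ne_zero]
        refine Finset.sum_le_sum_of_subset_of_nonneg ?_ (fun _ _ _ => norm_nonneg _)
        intro i hi
        simp only [Finset.mem_filter, Finset.mem_range, ne_eq, norm_eq_zero, ite_eq_right_iff,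
          not_forall] at hi
        obtain ⟨_, h, _⟩ := hi
        simp only [Set.mem_Icc] at h
        simp only [Finset.mem_image, Finset.mem_range]
        exact ⟨i - j, by omega, by omega⟩
    _ = _ := by
        rw [Finset.sum_image (by intro a _ b _ h; simpa using h)]
        refine Finset.sum_congr rfl fun i hi => ?_
        have : i < d + 1 := by simpa using hi
        rw [if_pos (by simp; omega)]
        simp

/-- The product of the row vector of powers of `θ` with a column of the Sylvester matrix. -/
lemma sum_shift_eval (p : Polynomial ℤ) (d N j : ℕ) (hd : p.natDegree = d) (hN : j + d < N)
    (θ : ℂ) :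
    ∑ i : Fin N, θ ^ (i : ℕ) *
      (if (i : ℕ) ∈ Set.Icc j (j + d) then (p.coeff (i - j) : ℂ) else 0)
      = θ ^ j * Polynomial.aeval θ p := by
  rw [Fin.sum_univ_eq_sum_range (fun i => θ ^ i *
    (if i ∈ Set.Icc j (j + d) then (p.coeff (i - j) : ℂ) else 0)) N]
  rw [Polynomial.aeval_eq_sum_range, hd, Finset.mul_sum]
  symm
  calc _ = ∑ i ∈ (Finset.range (d + 1)).image (· + j), θ ^ i *
        (if i ∈ Set.Icc j (j + d) then (p.coeff (i - j) : ℂ) else 0) := by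
        rw [Finset.sum_image (by intro a _ b _ h; simpa using h)]
        refine Finset.sum_congr rfl fun i hi => ?_
        have : i < d + 1 := by simpa using hi
        rw [if_pos (by simp; omega)]
        simp [pow_add]; ring
    _ = _ := by
        refine Finset.sum_subset ?_ ?_
        · intro i hi
          simp only [Finset.mem_image, Finset.mem_range] at hi ⊢
          omega
        · intro i _ hi
          rw [if_neg, mul_zero]
          simp only [Finset.mem_image, Finset.mem_range, Set.mem_Icc, not_exists] at hi ⊢
          intro h
          exact hi (i - j) (by omega)

lemma resultant_ne_zero_of_irreducible {Q R : Polynomial ℤ} (hQ : Irreducible Q)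
    (hR : Irreducible R) (hQd : Q.natDegree ≠ 0) (hRd : R.natDegree ≠ 0)
    (hne : ¬ Associated Q R) : Q.resultant R ≠ 0 := by
  have hQp := hQ.isPrimitive hQd
  have hRp := hR.isPrimitive hRd
  have h1 := (hQp.irreducible_iff_irreducible_map_fraction_map (K := ℚ)).1 hQ
  have h2 := (hRp.irreducible_iff_irreducible_map_fraction_map (K := ℚ)).1 hR
  have hco : IsCoprime (Q.map (algebraMap ℤ ℚ)) (R.map (algebraMap ℤ ℚ)) := by
    rw [h1.coprime_iff_not_dvd]
    intro hd
    apply hne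
    have := (Polynomial.IsPrimitive.Int.dvd_iff_map_cast_dvd_map_cast Q R hQp).2
      (by simpa using hd)
    exact hQ.associated_of_dvd hR this
  have h3 := Polynomial.resultant_ne_zero _ _ hco
  rw [Polynomial.natDegree_map_eq_of_injective (RingHom.injective_int _),
    Polynomial.natDegree_map_eq_of_injective (RingHom.injective_int _),
    Polynomial.resultant_map_map] at h3
  intro h
  exact h3 (by rw [h]; simp)

/-- Liouville-type inequality: two distinct irreducible integer polynomials cannot both be
very small at the same point. -/
lemma one_le_of_not_associated {Q R : Polynomial ℤ} (hQ : Irreducible Q)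
    (hR : Irreducible R) (hQd : Q.natDegree ≠ 0) (hRd : R.natDegree ≠ 0)
    (hne : ¬ Associated Q R) (θ : ℂ) (t : ℝ) (ht : 1 ≤ t) (hθ : ‖θ‖ ≤ t) :
    1 ≤ (Q.natDegree + R.natDegree : ℝ) * t ^ (Q.natDegree + R.natDegree) *
      (‖Polynomial.aeval θ Q‖ + ‖Polynomial.aeval θ R‖) *
      ((2 ^ R.natDegree * mahler R) ^ Q.natDegree *
        (2 ^ Q.natDegree * mahler Q) ^ R.natDegree) := by
  set m := Q.natDegree with hm
  set n := R.natDegree with hn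
  have hres := resultant_ne_zero_of_irreducible hQ hR hQd hRd hne
  let A : Matrix (Fin (m + n)) (Fin (m + n)) ℂ :=
    (Polynomial.sylvester Q R m n).map (Int.castRingHom ℂ)
  have hA1 : 1 ≤ ‖A.det‖ := by
    have : A.det = ((Q.resultant R : ℤ) : ℂ) := by
      rw [Polynomial.resultant]
      exact ((Int.castRingHom ℂ).map_det _).symm
    rw [this, Complex.norm_intCast]
    exact_mod_cast Int.one_le_abs hres
  have hcol1 : ∀ i (j : Fin m), A i (Fin.castAdd n j) =
      if (i : ℕ) ∈ Set.Icc (j : ℕ) (j + n) then (R.coeff (i - j) : ℂ) else 0 := by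
    intro i j
    simp only [A, Matrix.map_apply, Polynomial.sylvester, Matrix.of_apply, Fin.addCases_left]
    split_ifs <;> simp
  have hcol2 : ∀ i (j : Fin n), A i (Fin.natAdd m j) =
      if (i : ℕ) ∈ Set.Icc (j : ℕ) (j + m) then (Q.coeff (i - j) : ℂ) else 0 := by
    intro i j
    simp only [A, Matrix.map_apply, Polynomial.sylvester, Matrix.of_apply, Fin.addCases_right]
    split_ifs <;> simp
  have hge : ∀ (p : Polynomial ℤ), p ≠ 0 → 1 ≤ 2 ^ p.natDegree * mahler p := fun p hp =>
    one_le_mul_of_one_le_of_one_le (one_le_pow₀ (by norm_num)) (one_le_mahler hp)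
  let B : Fin (m + n) → ℝ := fun j => j.addCases (fun _ => 2 ^ n * mahler R)
    (fun _ => 2 ^ m * mahler Q)
  have key := norm_det_mul_le A (fun i => θ ^ (i : ℕ)) _ rfl B
    (by
      intro j
      refine Fin.addCases (fun j => ?_) (fun j => ?_) j
      · simpa [B] using hge R hR.ne_zero
      · simpa [B] using hge Q hQ.ne_zero)
    (by
      intro j
      refine Fin.addCases (fun j => ?_) (fun j => ?_) j
      · simp only [hcol1, B, Fin.addCases_left]
        exact sum_shift_le R n _ _ rfl
      · simp only [hcol2, B, Fin.addCases_right]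
        exact sum_shift_le Q m _ _ rfl)
    ⟨0, by omega⟩
  simp only [pow_zero, mul_one] at key
  refine hA1.trans (key.trans ?_)
  have hprod : ∏ j, B j = (2 ^ n * mahler R) ^ m * (2 ^ m * mahler Q) ^ n := by
    rw [Fin.prod_univ_add]; simp [B]
  rw [hprod]
  refine mul_le_mul_of_nonneg_right ?_ ?_
  · have hw : ∀ j, ‖Matrix.vecMul (fun i : Fin (m + n) => θ ^ (i : ℕ)) A j‖ ≤
        t ^ (m + n) * (‖Polynomial.aeval θ Q‖ + ‖Polynomial.aeval θ R‖) := by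
      have hp : ∀ j ≤ m + n, ‖θ ^ j‖ ≤ t ^ (m + n) := fun j hj => by
        rw [norm_pow]
        exact (pow_le_pow_left₀ (norm_nonneg _) hθ j).trans (pow_le_pow_right₀ ht hj)
      intro j
      refine Fin.addCases (fun j => ?_) (fun j => ?_) j
      · simp only [Matrix.vecMul, dotProduct, hcol1]
        rw [sum_shift_eval R n _ _ rfl (by omega), norm_mul]
        exact mul_le_mul (hp _ (by omega)) (by simp) (norm_nonneg _) (by positivity)
      · simp only [Matrix.vecMul, dotProduct, hcol2]
        rw [sum_shift_eval Q m _ _ rfl (by omega), norm_mul]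
        exact mul_le_mul (hp _ (by omega)) (by simp) (norm_nonneg _) (by positivity)
    refine (Finset.sum_le_sum fun j _ => hw j).trans (le_of_eq ?_)
    simp; ring
  · have h1 := hge R hR.ne_zero
    have h2 := hge Q hQ.ne_zero
    have : 0 ≤ 2 ^ n * mahler R := by linarith
    have : 0 ≤ 2 ^ m * mahler Q := by linarith
    positivity

open Polynomial in
/-- Some nonconstant irreducible factor of `P` inherits the smallness of `P` at `θ`: a quantity of
the form `‖Q(θ)‖ * exp (κ (n¹¹ deg Q + n¹⁰ log M(Q)))` is multiplicative in `Q`, at least `1` on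
constants, and smaller than `1` at `P`. -/
lemma exists_small_irreducible (θ : ℂ) (C : ℝ) (hC : 1 ≤ C) (n : ℕ) (hn : 1 ≤ n) (P : ℤ[X])
    (hP : P ≠ 0) (hd : (P.natDegree : ℝ) ≤ C * n ^ 10)
    (hM : Real.log (mahler P) ≤ C * n ^ 11) (hs : ‖aeval θ P‖ ≤ Real.exp (-(n : ℝ) ^ 22)) :
    ∃ Q : ℤ[X], Irreducible Q ∧ Q.natDegree ≠ 0 ∧ (Q.natDegree : ℝ) ≤ C * n ^ 10 ∧
      Real.log (mahler Q) ≤ C * n ^ 11 ∧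
      ‖aeval θ Q‖ ≤ Real.exp (-(n / (4 * C)) *
        (Q.natDegree * n ^ 11 + n ^ 10 * Real.log (mahler Q))) := by
  have hn' : (1 : ℝ) ≤ n := by exact_mod_cast hn
  set κ : ℝ := n / (4 * C) with hκ
  have hκ0 : 0 ≤ κ := by positivity
  let φ : ℤ[X] → ℝ := fun Q => ‖aeval θ Q‖ *
    Real.exp (κ * (Q.natDegree * n ^ 11 + n ^ 10 * Real.log (mahler Q)))
  have hlog : ∀ Q : ℤ[X], Q ≠ 0 → 0 ≤ Real.log (mahler Q) := fun Q hQ =>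
    Real.log_nonneg (one_le_mahler hQ)
  have hexp : ∀ Q : ℤ[X], Q ≠ 0 →
      1 ≤ Real.exp (κ * (Q.natDegree * n ^ 11 + n ^ 10 * Real.log (mahler Q))) := by
    intro Q hQ
    rw [Real.one_le_exp_iff]
    have := hlog Q hQ
    positivity
  have hconst : ∀ Q : ℤ[X], Q ≠ 0 → Q.natDegree = 0 → 1 ≤ φ Q := by
    intro Q hQ h0
    refine one_le_mul_of_one_le_of_one_le ?_ (hexp Q hQ)
    obtain ⟨z, rfl⟩ := natDegree_eq_zero.1 h0
    have hz : z ≠ 0 := by rintro rfl; simp at hQ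
    rw [aeval_C, algebraMap_int_eq, eq_intCast, Complex.norm_intCast]
    exact_mod_cast Int.one_le_abs hz
  have hφmul : ∀ Q R : ℤ[X], Q ≠ 0 → R ≠ 0 → φ (Q * R) = φ Q * φ R := by
    intro Q R hQ hR
    have h1 := one_le_mahler hQ
    have h2 := one_le_mahler hR
    simp only [φ]
    rw [natDegree_mul hQ hR, mahler_mul, Real.log_mul (by linarith) (by linarith), map_mul,
      norm_mul]
    push_cast
    rw [show κ * (((Q.natDegree : ℝ) + R.natDegree) * n ^ 11 +
      n ^ 10 * (Real.log (mahler Q) + Real.log (mahler R))) =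
      κ * (Q.natDegree * n ^ 11 + n ^ 10 * Real.log (mahler Q)) +
      κ * (R.natDegree * n ^ 11 + n ^ 10 * Real.log (mahler R)) by ring, Real.exp_add]
    ring
  by_contra hcon
  have hall : ∀ Q : ℤ[X], Irreducible Q → Q ∣ P → 1 ≤ φ Q := by
    intro Q hQ hQP
    by_cases h0 : Q.natDegree = 0
    · exact hconst Q hQ.ne_zero h0
    obtain ⟨R, rfl⟩ := hQP
    have hR : R ≠ 0 := right_ne_zero_of_mul hP
    by_contra hlt
    apply hcon
    refine ⟨Q, hQ, h0, le_trans ?_ hd, le_trans ?_ hM, ?_⟩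
    · rw [natDegree_mul hQ.ne_zero hR]; push_cast; linarith [Nat.cast_nonneg (α := ℝ) R.natDegree]
    · have h1 := one_le_mahler hQ.ne_zero
      have h2 := one_le_mahler hR
      rw [mahler_mul, Real.log_mul (by linarith) (by linarith)]
      linarith [hlog R hR]
    · rw [neg_mul, Real.exp_neg, ← one_div, le_div_iff₀ (Real.exp_pos _)]
      exact (not_le.1 hlt).le
  have hP1 : 1 ≤ φ P := by
    have : ∀ R : ℤ[X], R ≠ 0 → R ∣ P → 1 ≤ φ R := by
      intro R
      induction R using WfDvdMonoid.induction_on_irreducible with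
      | zero => intro h; exact absurd rfl h
      | unit u hu =>
        intro h _
        exact hconst u h (natDegree_eq_zero_of_isUnit hu)
      | mul a i ha hi ih =>
        intro h hdv
        rw [hφmul i a hi.ne_zero ha]
        exact one_le_mul_of_one_le_of_one_le (hall i hi ((dvd_mul_right _ _).trans hdv))
          (ih ha ((dvd_mul_left _ _).trans hdv))
    exact this P hP dvd_rfl
  have hlt : φ P < 1 := by
    calc φ P ≤ Real.exp (-(n : ℝ) ^ 22) * Real.exp (κ * (C * n ^ 10 * n ^ 11 +
          n ^ 10 * (C * n ^ 11))) := by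
          refine mul_le_mul hs (Real.exp_le_exp.2 ?_) (Real.exp_pos _).le (Real.exp_pos _).le
          gcongr
      _ < 1 := by
          rw [← Real.exp_add, Real.exp_lt_one_iff]
          have : κ * (C * n ^ 10 * n ^ 11 + n ^ 10 * (C * n ^ 11)) = (n : ℝ) ^ 22 / 2 := by
            rw [hκ]; field_simp; ring
          rw [this]
          have : (0 : ℝ) < (n : ℝ) ^ 22 := by positivity
          linarith
  linarith

/-- The arithmetic behind `associated_of_small`: the exponent in the Liouville inequality is at most
a constant multiple of the weight `a n¹¹ + n¹⁰ log M(Q)`. -/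
lemma exponent_bound (a b hQ hR τ C N : ℝ) (ha : 1 ≤ a) (hb : 0 ≤ b) (hb' : b ≤ C * N ^ 10)
    (hhQ : 0 ≤ hQ) (hhR' : hR ≤ C * N ^ 11) (hτ : 0 ≤ τ) (hN : 1 ≤ N)
    (hC : 0 ≤ C) :
    (1 + τ) * (a + b) + a * (b + hR) + b * (a + hQ) ≤
      ((1 + τ) * (1 + C) + 4 * C) * (a * N ^ 11 + N ^ 10 * hQ) := by
  have hN10 : N ^ 10 ≤ N ^ 11 := pow_le_pow_right₀ hN (by norm_num)
  have hN11 : 1 ≤ N ^ 11 := one_le_pow₀ hN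
  have e1 : a ≤ a * N ^ 11 := le_mul_of_one_le_right (by linarith) hN11
  have e2 : b ≤ C * (a * N ^ 11) := by
    have : N ^ 10 ≤ a * N ^ 11 := hN10.trans (le_mul_of_one_le_left (by linarith) ha)
    exact hb'.trans (mul_le_mul_of_nonneg_left this hC)
  have e3 : a * b ≤ C * (a * N ^ 11) := by
    calc a * b ≤ a * (C * N ^ 11) := by
          refine mul_le_mul_of_nonneg_left (hb'.trans ?_) (by linarith)
          exact mul_le_mul_of_nonneg_left hN10 hC
      _ = _ := by ring
  have e4 : a * hR ≤ C * (a * N ^ 11) := by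
    calc a * hR ≤ a * (C * N ^ 11) := mul_le_mul_of_nonneg_left hhR' (by linarith)
      _ = _ := by ring
  have e5 : b * hQ ≤ C * (N ^ 10 * hQ) := by
    calc b * hQ ≤ (C * N ^ 10) * hQ := mul_le_mul_of_nonneg_right hb' hhQ
      _ = _ := by ring
  have e6 : (1 + τ) * (a + b) ≤ (1 + τ) * ((1 + C) * (a * N ^ 11)) :=
    mul_le_mul_of_nonneg_left (by linarith) (by linarith)
  have e7 : 0 ≤ N ^ 10 * hQ := by positivity
  have e8 : 0 ≤ ((1 + τ) * (1 + C) + 3 * C) * (N ^ 10 * hQ) := by positivity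
  have e9 : 0 ≤ C * (a * N ^ 11) := by positivity
  nlinarith

/-- The contrapositive of `one_le_of_not_associated`, in exponential form. -/
lemma associated_of_small {Q R : Polynomial ℤ} (hQ : Irreducible Q)
    (hR : Irreducible R) (hQd : Q.natDegree ≠ 0) (hRd : R.natDegree ≠ 0) (θ : ℂ) (τ : ℝ)
    (hτ : 0 ≤ τ) (hθ : ‖θ‖ ≤ Real.exp τ) (Y : ℝ)
    (hY : (1 + τ) * (Q.natDegree + R.natDegree) +
      Q.natDegree * (R.natDegree + Real.log (mahler R)) +
      R.natDegree * (Q.natDegree + Real.log (mahler Q)) ≤ Y)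
    (h1 : ‖Polynomial.aeval θ Q‖ ≤ Real.exp (-Y - 1))
    (h2 : ‖Polynomial.aeval θ R‖ ≤ Real.exp (-Y - 1)) : Associated Q R := by
  by_contra hne
  have key := one_le_of_not_associated hQ hR hQd hRd hne θ (Real.exp τ)
    (Real.one_le_exp hτ) hθ
  have hM : ∀ p : Polynomial ℤ, p ≠ 0 → ∀ k l : ℕ,
      (2 ^ k * mahler p) ^ l ≤ Real.exp (l * (k + Real.log (mahler p))) := by
    intro p hp k l
    rw [Real.exp_nat_mul, Real.exp_add, Real.exp_log (by linarith [one_le_mahler hp])]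
    have := one_le_mahler hp
    have h2 : (2 : ℝ) ^ k ≤ Real.exp k := by
      rw [← mul_one (k : ℝ), Real.exp_nat_mul]
      exact pow_le_pow_left₀ (by norm_num) (by linarith [Real.add_one_le_exp 1]) k
    gcongr
  have hdeg : (Q.natDegree + R.natDegree : ℝ) * Real.exp τ ^ (Q.natDegree + R.natDegree) ≤
      Real.exp ((1 + τ) * (Q.natDegree + R.natDegree)) := by
    rw [← Real.exp_nat_mul, add_mul 1 τ, Real.exp_add, one_mul]
    push_cast
    rw [mul_comm τ]
    gcongr
    linarith [Real.add_one_le_exp (Q.natDegree + R.natDegree : ℝ)]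
  have hfin : (1 : ℝ) ≤ Real.exp ((1 + τ) * (Q.natDegree + R.natDegree)) *
      (Real.exp (-Y - 1) + Real.exp (-Y - 1)) *
      (Real.exp (Q.natDegree * (R.natDegree + Real.log (mahler R))) *
        Real.exp (R.natDegree * (Q.natDegree + Real.log (mahler Q)))) := by
    refine key.trans ?_
    have hq := one_le_mahler hQ.ne_zero
    have hr := one_le_mahler hR.ne_zero
    refine mul_le_mul (mul_le_mul hdeg (add_le_add h1 h2) (by positivity) (by positivity))
      (mul_le_mul (hM R hR.ne_zero _ _) (hM Q hQ.ne_zero _ _) ?_ (by positivity)) ?_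
      (by positivity) <;> positivity
  have : Real.exp ((1 + τ) * (Q.natDegree + R.natDegree)) *
      (Real.exp (-Y - 1) + Real.exp (-Y - 1)) *
      (Real.exp (Q.natDegree * (R.natDegree + Real.log (mahler R))) *
        Real.exp (R.natDegree * (Q.natDegree + Real.log (mahler Q)))) =
      2 * Real.exp (((1 + τ) * (Q.natDegree + R.natDegree) +
      Q.natDegree * (R.natDegree + Real.log (mahler R)) +
      R.natDegree * (Q.natDegree + Real.log (mahler Q))) + (-Y - 1)) := by
    simp only [Real.exp_add]; ring
  rw [this] at hfin
  have h3 : Real.exp (((1 + τ) * (Q.natDegree + R.natDegree) +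
      Q.natDegree * (R.natDegree + Real.log (mahler R)) +
      R.natDegree * (Q.natDegree + Real.log (mahler Q))) + (-Y - 1)) ≤ Real.exp (-1) :=
    Real.exp_le_exp.2 (by linarith)
  have h4 : Real.exp (-1) < 1 / 2 := by
    have := Real.exp_neg_one_lt_d9; linarith
  linarith

open Polynomial in
/-- A form of Gelfond's transcendence criterion: for transcendental `θ` there cannot exist, for all
large `n` at once, nonzero integer polynomials of degree `O(n¹⁰)` and logarithmic Mahler measure
`O(n¹¹)` whose value at `θ` is at most `exp (-n²²)`. -/
theorem gelfond_criterion (θ : ℂ) (hθ : Transcendental ℤ θ) (C : ℝ) (hC : 1 ≤ C) (N₀ : ℕ)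
    (P : ℕ → ℤ[X])
    (hP : ∀ n ≥ N₀, P n ≠ 0 ∧ ((P n).natDegree : ℝ) ≤ C * n ^ 10 ∧
      Real.log (mahler (P n)) ≤ C * n ^ 11 ∧
      ‖aeval θ (P n)‖ ≤ Real.exp (-(n : ℝ) ^ 22)) : False := by
  have hex : ∀ n : ℕ, max N₀ 1 ≤ n → ∃ Q : ℤ[X], Irreducible Q ∧ Q.natDegree ≠ 0 ∧
      (Q.natDegree : ℝ) ≤ C * n ^ 10 ∧ Real.log (mahler Q) ≤ C * n ^ 11 ∧
      ‖aeval θ Q‖ ≤ Real.exp (-(n / (4 * C)) *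
        (Q.natDegree * n ^ 11 + n ^ 10 * Real.log (mahler Q))) := by
    intro n hn
    obtain ⟨h1, h2, h3, h4⟩ := hP n (le_trans (le_max_left _ _) hn)
    exact exists_small_irreducible θ C hC n (le_trans (le_max_right _ _) hn) (P n) h1 h2 h3 h4
  choose! Q hQi hQd hQd' hQM hQs using hex
  obtain ⟨τ, hτ, hθτ⟩ : ∃ τ : ℝ, 0 ≤ τ ∧ ‖θ‖ ≤ Real.exp τ :=
    ⟨‖θ‖, norm_nonneg _, by linarith [Real.add_one_le_exp ‖θ‖]⟩
  set C' : ℝ := 2048 * C with hC'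
  set G : ℝ := (1 + τ) * (1 + C') + 4 * C' with hG
  have hG0 : 0 ≤ G := by positivity
  obtain ⟨N₁, hN₁⟩ := exists_nat_ge ((G + 1) * (4 * C))
  set N := max (max N₀ 1) N₁ with hN
  have hge : ∀ n, N ≤ n → max N₀ 1 ≤ n := fun n hn => (le_max_left _ _).trans hn
  have hκ : ∀ n : ℕ, N ≤ n → G + 1 ≤ n / (4 * C) := by
    intro n hn
    rw [le_div_iff₀ (by positivity)]
    exact hN₁.trans (by exact_mod_cast (le_max_right _ _).trans hn)
  have hw : ∀ n : ℕ, N ≤ n → (n : ℝ) ≤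
      (Q n).natDegree * n ^ 11 + n ^ 10 * Real.log (mahler (Q n)) := by
    intro n hn
    have hn1 : (1 : ℝ) ≤ n := by exact_mod_cast (le_max_right N₀ 1).trans (hge n hn)
    have h1 : (1 : ℝ) ≤ (Q n).natDegree := by
      exact_mod_cast Nat.one_le_iff_ne_zero.2 (hQd n (hge n hn))
    have h2 := Real.log_nonneg (one_le_mahler (hQi n (hge n hn)).ne_zero)
    have h3 : (n : ℝ) ≤ (n : ℝ) ^ 11 := le_self_pow₀ hn1 (by norm_num)
    have h4 : (n : ℝ) ^ 11 ≤ (Q n).natDegree * (n : ℝ) ^ 11 :=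
      le_mul_of_one_le_left (by positivity) h1
    have : 0 ≤ (n : ℝ) ^ 10 * Real.log (mahler (Q n)) := by positivity
    linarith
  have hsmall : ∀ n : ℕ, N ≤ n → ∀ Y : ℝ,
      Y ≤ G * ((Q n).natDegree * n ^ 11 + n ^ 10 * Real.log (mahler (Q n))) →
      ‖aeval θ (Q n)‖ ≤ Real.exp (-Y - 1) := by
    intro n hn Y hY
    refine (hQs n (hge n hn)).trans (Real.exp_le_exp.2 ?_)
    have h1 := hw n hn
    have hn1 : (1 : ℝ) ≤ n := by exact_mod_cast (le_max_right N₀ 1).trans (hge n hn)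
    have h2 := mul_le_mul_of_nonneg_right (hκ n hn) (le_trans (by linarith) h1)
    linarith
  -- Consecutive irreducible polynomials are both small at `θ`, hence associated.
  have hstep : ∀ n : ℕ, N ≤ n → Associated (Q n) (Q (n + 1)) := by
    intro n hn
    have hn1 : (1 : ℝ) ≤ n := by exact_mod_cast (le_max_right N₀ 1).trans (hge n hn)
    have hn' : N ≤ n + 1 := hn.trans (Nat.le_succ n)
    have hi := hQi n (hge n hn)
    have hi' := hQi (n + 1) (hge _ hn')
    have hd := hQd n (hge n hn)
    have hd' := hQd (n + 1) (hge _ hn')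
    have l1 := Real.log_nonneg (one_le_mahler hi.ne_zero)
    have l2 := Real.log_nonneg (one_le_mahler hi'.ne_zero)
    have d1 : (1 : ℝ) ≤ (Q n).natDegree := by exact_mod_cast Nat.one_le_iff_ne_zero.2 hd
    have d2 : (1 : ℝ) ≤ (Q (n + 1)).natDegree := by exact_mod_cast Nat.one_le_iff_ne_zero.2 hd'
    have b1 := hQd' n (hge n hn)
    have b2 := hQd' (n + 1) (hge _ hn')
    have m1 := hQM n (hge n hn)
    have m2 := hQM (n + 1) (hge _ hn')
    push_cast at b2 m2
    have p10 : ((n : ℝ) + 1) ^ 10 ≤ 2048 * (n : ℝ) ^ 10 := by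
      calc ((n : ℝ) + 1) ^ 10 ≤ (2 * (n : ℝ)) ^ 10 := by gcongr; linarith
        _ = 1024 * (n : ℝ) ^ 10 := by ring
        _ ≤ _ := by gcongr; norm_num
    have p11 : ((n : ℝ) + 1) ^ 11 ≤ 2048 * (n : ℝ) ^ 11 := by
      calc ((n : ℝ) + 1) ^ 11 ≤ (2 * (n : ℝ)) ^ 11 := by gcongr; linarith
        _ = _ := by ring
    refine associated_of_small hi hi' hd hd' θ τ hτ hθτ _ le_rfl (hsmall n hn _ ?_)
      (hsmall (n + 1) hn' _ ?_)
    · refine exponent_bound _ _ _ _ τ C' n d1 (by linarith) ?_ l1 ?_ hτ hn1 (by positivity)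
      · calc _ ≤ _ := b2
          _ ≤ C * (2048 * (n : ℝ) ^ 10) := by gcongr
          _ = _ := by rw [hC']; ring
      · calc _ ≤ _ := m2
          _ ≤ C * (2048 * (n : ℝ) ^ 11) := by gcongr
          _ = _ := by rw [hC']; ring
    · have hCC : C ≤ C' := by rw [hC']; linarith
      have := exponent_bound ((Q (n + 1)).natDegree) ((Q n).natDegree)
        (Real.log (mahler (Q (n + 1)))) (Real.log (mahler (Q n))) τ C' ((n + 1 : ℕ) : ℝ) d2
        (by linarith) ?_ l2 ?_ hτ (by push_cast; linarith) (by positivity)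
      · refine le_trans (le_of_eq ?_) this
        ring
      · refine b1.trans ?_
        gcongr
        linarith
      · refine m1.trans ?_
        gcongr
        linarith
  have hassoc : ∀ k : ℕ, Associated (Q N) (Q (N + k)) := by
    intro k
    induction k with
    | zero => exact Associated.refl _
    | succ k ih => exact ih.trans (hstep (N + k) (Nat.le_add_right _ _))
  have hval : ∀ k : ℕ, ‖aeval θ (Q N)‖ = ‖aeval θ (Q (N + k))‖ := by
    intro k
    obtain ⟨u, hu⟩ := hassoc k
    obtain ⟨r, hr, hru⟩ := Polynomial.isUnit_iff.1 u.isUnit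
    rw [← hu, ← hru, map_mul, norm_mul]
    rcases Int.isUnit_iff.1 hr with h | h <;> simp [h]
  have hne : aeval θ (Q N) ≠ 0 := by
    intro h
    exact hθ ⟨Q N, (hQi N (hge N le_rfl)).ne_zero, h⟩
  -- All `Q n` are associated to `Q N`, whose value at `θ` is therefore below every `exp (-k)`.
  have hpos : 0 < ‖aeval θ (Q N)‖ := norm_pos_iff.2 hne
  obtain ⟨k, hk⟩ := exists_nat_ge (1 / ‖aeval θ (Q N)‖)
  have hN1 : N ≤ N + k := Nat.le_add_right _ _
  have h1 : ‖aeval θ (Q N)‖ ≤ Real.exp (-(k : ℝ)) := by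
    rw [hval k]
    refine (hQs (N + k) (hge _ hN1)).trans (Real.exp_le_exp.2 ?_)
    have h1 := hw (N + k) hN1
    have h2 := hκ (N + k) hN1
    have h3 : (k : ℝ) ≤ ((N + k : ℕ) : ℝ) := by push_cast; linarith [Nat.cast_nonneg (α := ℝ) N]
    have h4 : 0 ≤ (k : ℝ) := Nat.cast_nonneg _
    nlinarith
  rw [div_le_iff₀ hpos] at hk
  have h2 : Real.exp (-(k : ℝ)) * Real.exp k = 1 := by rw [← Real.exp_add]; simp
  have h3 := Real.add_one_le_exp (k : ℝ)
  have h4 : (k : ℝ) * ‖aeval θ (Q N)‖ ≤ k * Real.exp (-(k : ℝ)) := by gcongr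
  have h5 : 0 < Real.exp (-(k : ℝ)) := Real.exp_pos _
  nlinarith

end PeriodTrdeg

/-! ### Sizes of numbers algebraic over `ℚ(θ)` -/

namespace PeriodTrdeg

open Polynomial in
/-- The length of an integer polynomial: the sum of the absolute values of its coefficients. -/
noncomputable def plen (p : ℤ[X]) : ℝ := ∑ i ∈ p.support, |(p.coeff i : ℝ)|

section plen
open Polynomial

lemma plen_eq {p : ℤ[X]} {s : Finset ℕ} (h : p.support ⊆ s) :
    plen p = ∑ i ∈ s, |(p.coeff i : ℝ)| := by
  refine Finset.sum_subset h fun i _ hi => ?_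
  simp [notMem_support_iff.1 hi]

lemma plen_nonneg (p : ℤ[X]) : 0 ≤ plen p := Finset.sum_nonneg fun _ _ => abs_nonneg _

lemma plen_zero : plen 0 = 0 := by simp [plen]

lemma plen_add_le (p q : ℤ[X]) : plen (p + q) ≤ plen p + plen q := by
  rw [plen_eq (p := p + q) (s := p.support ∪ q.support) support_add,
    plen_eq (p := p) (s := p.support ∪ q.support) Finset.subset_union_left,
    plen_eq (p := q) (s := p.support ∪ q.support) Finset.subset_union_right,
    ← Finset.sum_add_distrib]
  refine Finset.sum_le_sum fun i _ => ?_
  push_cast [coeff_add]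
  exact abs_add_le _ _

lemma plen_sum_le {ι : Type*} (s : Finset ι) (f : ι → ℤ[X]) :
    plen (∑ i ∈ s, f i) ≤ ∑ i ∈ s, plen (f i) := by
  classical
  induction s using Finset.induction_on with
  | empty => simp [plen_zero]
  | insert a s ha ih =>
    rw [Finset.sum_insert ha, Finset.sum_insert ha]
    exact (plen_add_le _ _).trans (by linarith)

lemma plen_C_mul (a : ℤ) (p : ℤ[X]) : plen (C a * p) = |(a : ℝ)| * plen p := by
  rw [plen_eq (p := C a * p) (s := p.support), plen, Finset.mul_sum]
  · refine Finset.sum_congr rfl fun i _ => ?_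
    rw [coeff_C_mul]; push_cast; rw [abs_mul]
  · intro i hi
    rw [mem_support_iff, coeff_C_mul] at hi
    exact mem_support_iff.2 (right_ne_zero_of_mul hi)

lemma plen_X_pow_mul (n : ℕ) (p : ℤ[X]) : plen (X ^ n * p) = plen p := by
  rw [plen_eq (p := X ^ n * p) (s := p.support.image (n + ·)),
    Finset.sum_image (by intro a _ b _ h; simpa using h), plen]
  · refine Finset.sum_congr rfl fun i _ => ?_
    rw [add_comm, coeff_X_pow_mul]
  · intro i hi
    rw [mem_support_iff, coeff_X_pow_mul'] at hi
    split_ifs at hi with h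
    · exact Finset.mem_image.2 ⟨i - n, mem_support_iff.2 hi, by omega⟩
    · exact absurd rfl hi

lemma plen_mul_le (p q : ℤ[X]) : plen (p * q) ≤ plen p * plen q := by
  conv_lhs => rw [p.as_sum_support_C_mul_X_pow, Finset.sum_mul]
  refine (plen_sum_le _ _).trans ?_
  rw [plen, Finset.sum_mul]
  refine Finset.sum_le_sum fun i _ => ?_
  rw [mul_assoc, plen_C_mul, plen_X_pow_mul, plen]

lemma plen_one : plen 1 = 1 := by
  rw [plen_eq (p := 1) (s := {0}) (by exact support_C_subset (1 : ℤ))]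
  simp

lemma plen_prod_le {ι : Type*} (s : Finset ι) (f : ι → ℤ[X]) :
    plen (∏ i ∈ s, f i) ≤ ∏ i ∈ s, plen (f i) := by
  classical
  induction s using Finset.induction_on with
  | empty => simp [plen_one]
  | insert a s ha ih =>
    rw [Finset.prod_insert ha, Finset.prod_insert ha]
    exact (plen_mul_le _ _).trans (mul_le_mul_of_nonneg_left ih (plen_nonneg _))

lemma plen_neg (p : ℤ[X]) : plen (-p) = plen p := by simp [plen]

lemma norm_aeval_le (p : ℤ[X]) (D : ℕ) (hD : p.natDegree ≤ D) (θ : ℂ) (t : ℝ) (ht : 1 ≤ t)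
    (hθ : ‖θ‖ ≤ t) : ‖aeval θ p‖ ≤ plen p * t ^ D := by
  rw [plen_eq (p := p) (s := Finset.range (D + 1)), aeval_eq_sum_range' (n := D + 1) (by omega),
    Finset.sum_mul]
  · refine (norm_sum_le _ _).trans (Finset.sum_le_sum fun i hi => ?_)
    simp only [zsmul_eq_mul, norm_mul, norm_pow, Complex.norm_intCast]
    refine mul_le_mul_of_nonneg_left ?_ (abs_nonneg _)
    exact (pow_le_pow_left₀ (norm_nonneg _) hθ i).trans
      (pow_le_pow_right₀ ht (by simpa [Nat.lt_succ_iff] using hi))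
  · intro i hi
    have := le_natDegree_of_mem_supp i hi
    simp; omega

lemma mahler_le_plen (p : ℤ[X]) : mahler p ≤ plen p := by
  refine (mahlerMeasure_le_sum_norm_coeff _).trans (le_of_eq ?_)
  rw [sum_def, support_map_of_injective _ (RingHom.injective_int _)]
  simp [plen]

lemma plen_det_le {ι : Type*} [Fintype ι] [DecidableEq ι] (M : Matrix ι ι ℤ[X]) :
    plen M.det ≤ ∏ i, ∑ j, plen (M i j) := by
  rw [← Matrix.det_transpose, Matrix.det_apply]
  calc _ ≤ ∑ σ : Equiv.Perm ι, ∏ i, plen (M i (σ i)) := by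
        refine (plen_sum_le _ _).trans (Finset.sum_le_sum fun σ _ => ?_)
        rcases Int.units_eq_one_or (Equiv.Perm.sign σ) with h | h <;>
          simp [h, plen_neg, plen_prod_le]
    _ ≤ ∑ f : ι → ι, ∏ i, plen (M i (f i)) := by
        have hinj : Function.Injective (fun σ : Equiv.Perm ι => (σ : ι → ι)) :=
          fun a b h => Equiv.ext (congrFun h)
        rw [← Finset.sum_image (s := Finset.univ) (g := fun σ : Equiv.Perm ι => (σ : ι → ι))
          (f := fun f : ι → ι => ∏ i, plen (M i (f i))) (fun a _ b _ h => hinj h)]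
        exact Finset.sum_le_sum_of_subset_of_nonneg (Finset.subset_univ _)
          (fun _ _ _ => Finset.prod_nonneg fun _ _ => plen_nonneg _)
    _ = _ := by
        rw [Finset.prod_univ_sum, Fintype.piFinset_univ]

lemma natDegree_det_le {ι : Type*} [Fintype ι] [DecidableEq ι] (M : Matrix ι ι ℤ[X]) (D : ℕ)
    (h : ∀ i j, (M i j).natDegree ≤ D) : M.det.natDegree ≤ Fintype.card ι * D := by
  rw [Matrix.det_apply]
  refine natDegree_sum_le_of_forall_le _ _ fun σ _ => ?_
  have h1 : (∏ i, M (σ i) i).natDegree ≤ Fintype.card ι * D := by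
    refine (natDegree_prod_le _ _).trans ?_
    refine (Finset.sum_le_card_nsmul _ _ D fun i _ => h _ _).trans ?_
    simp
  rcases Int.units_eq_one_or (Equiv.Perm.sign σ) with h | h <;> simpa [h] using h1

end plen

section Sz
open Polynomial
variable {ι : Type*} [Fintype ι]

/-- `Sz θ v x D H` says that multiplication by `x` maps the `ℤ[θ]`-span of the family `v` into
itself, and is given there by a matrix over `ℤ[X]` (specialised at `θ`) whose entries have degree
at most `D` and whose rows have total length at most `H`. -/
def Sz (θ : ℂ) (v : ι → ℂ) (x : ℂ) (D : ℕ) (H : ℝ) : Prop :=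
  ∃ M : Matrix ι ι ℤ[X], (∀ i, ∑ j, aeval θ (M i j) * v j = x * v i) ∧
    (∀ i j, (M i j).natDegree ≤ D) ∧ (∀ i, ∑ j, plen (M i j) ≤ H)

variable {θ : ℂ} {v : ι → ℂ}

lemma Sz.mono {x : ℂ} {D D' : ℕ} {H H' : ℝ} (h : Sz θ v x D H) (hD : D ≤ D') (hH : H ≤ H') :
    Sz θ v x D' H' := by
  obtain ⟨M, h1, h2, h3⟩ := h
  exact ⟨M, h1, fun i j => (h2 i j).trans hD, fun i => (h3 i).trans hH⟩

lemma Sz.nonneg [Nonempty ι] {x : ℂ} {D : ℕ} {H : ℝ} (h : Sz θ v x D H) : 0 ≤ H := by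
  obtain ⟨M, h1, h2, h3⟩ := h
  exact (Finset.sum_nonneg fun _ _ => plen_nonneg _).trans (h3 (Classical.arbitrary ι))

lemma Sz.zero (D : ℕ) : Sz θ v 0 D 0 :=
  ⟨0, by simp, by simp, by simp [plen_zero]⟩

lemma Sz.one : Sz θ v 1 0 1 := by
  classical
  refine ⟨1, fun i => ?_, fun i j => ?_, fun i => ?_⟩
  · rw [Finset.sum_eq_single i] <;> simp +contextual [Matrix.one_apply]
    intro b hb h; exact absurd h.symm hb
  · rw [Matrix.one_apply]; split_ifs <;> simp
  · rw [Finset.sum_eq_single i]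
    · simp [plen_one]
    · intro b _ hb
      rw [Matrix.one_apply_ne (Ne.symm hb), plen_zero]
    · simp

lemma Sz.add {x y : ℂ} {D : ℕ} {H H' : ℝ} (h : Sz θ v x D H) (h' : Sz θ v y D H') :
    Sz θ v (x + y) D (H + H') := by
  obtain ⟨M, h1, h2, h3⟩ := h
  obtain ⟨M', h1', h2', h3'⟩ := h'
  refine ⟨M + M', fun i => ?_, fun i j => ?_, fun i => ?_⟩
  · simp only [Matrix.add_apply, map_add, add_mul, Finset.sum_add_distrib, h1, h1']
  · exact (natDegree_add_le _ _).trans (max_le (h2 i j) (h2' i j))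
  · calc _ ≤ ∑ j, (plen (M i j) + plen (M' i j)) :=
          Finset.sum_le_sum fun j _ => plen_add_le _ _
      _ ≤ _ := by rw [Finset.sum_add_distrib]; exact add_le_add (h3 i) (h3' i)

lemma Sz.sum {κ : Type*} (s : Finset κ) (x : κ → ℂ) (H : κ → ℝ) (D : ℕ)
    (h : ∀ k ∈ s, Sz θ v (x k) D (H k)) : Sz θ v (∑ k ∈ s, x k) D (∑ k ∈ s, H k) := by
  classical
  induction s using Finset.induction_on with
  | empty => simpa using Sz.zero D
  | insert a s ha ih =>
    rw [Finset.sum_insert ha, Finset.sum_insert ha]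
    exact (h a (by simp)).add (ih fun k hk => h k (by simp [hk]))

lemma Sz.int_mul {x : ℂ} {D : ℕ} {H : ℝ} (a : ℤ) (h : Sz θ v x D H) :
    Sz θ v (a * x) D (|(a : ℝ)| * H) := by
  obtain ⟨M, h1, h2, h3⟩ := h
  refine ⟨fun i j => C a * M i j, fun i => ?_, fun i j => ?_, fun i => ?_⟩
  · simp only [map_mul, aeval_C, mul_assoc, ← Finset.mul_sum, h1]
    simp
  · exact (natDegree_C_mul_le _ _).trans (h2 i j)
  · simp only [plen_C_mul, ← Finset.mul_sum]
    exact mul_le_mul_of_nonneg_left (h3 i) (abs_nonneg _)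

lemma Sz.X_pow_mul {x : ℂ} {D : ℕ} {H : ℝ} (l : ℕ) (h : Sz θ v x D H) :
    Sz θ v (θ ^ l * x) (l + D) H := by
  obtain ⟨M, h1, h2, h3⟩ := h
  refine ⟨fun i j => X ^ l * M i j, fun i => ?_, fun i j => ?_, fun i => ?_⟩
  · simp only [map_mul, map_pow, aeval_X, mul_assoc, ← Finset.mul_sum, h1]
  · refine natDegree_mul_le.trans (add_le_add (natDegree_X_pow_le _) (h2 i j))
  · simpa only [plen_X_pow_mul] using h3 i

lemma Sz.mul [Nonempty ι] {x y : ℂ} {D D' : ℕ} {H H' : ℝ} (h : Sz θ v x D H)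
    (h' : Sz θ v y D' H') : Sz θ v (x * y) (D + D') (H * H') := by
  have hH := h.nonneg
  have hH' := h'.nonneg
  obtain ⟨M, h1, h2, h3⟩ := h
  obtain ⟨M', h1', h2', h3'⟩ := h'
  refine ⟨M * M', fun i => ?_, fun i j => ?_, fun i => ?_⟩
  · simp only [Matrix.mul_apply, map_sum, map_mul, Finset.sum_mul]
    rw [Finset.sum_comm]
    calc _ = ∑ k, aeval θ (M i k) * ∑ j, aeval θ (M' k j) * v j := by
          refine Finset.sum_congr rfl fun k _ => ?_
          rw [Finset.mul_sum]
          exact Finset.sum_congr rfl fun j _ => by ring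
      _ = y * ∑ k, aeval θ (M i k) * v k := by
          rw [Finset.mul_sum]
          exact Finset.sum_congr rfl fun k _ => by rw [h1']; ring
      _ = _ := by rw [h1]; ring
  · rw [Matrix.mul_apply]
    refine natDegree_sum_le_of_forall_le _ _ fun k _ => ?_
    exact natDegree_mul_le.trans (add_le_add (h2 _ _) (h2' _ _))
  · calc _ ≤ ∑ j, ∑ k, plen (M i k) * plen (M' k j) := by
          refine Finset.sum_le_sum fun j _ => ?_
          rw [Matrix.mul_apply]
          exact (plen_sum_le _ _).trans (Finset.sum_le_sum fun k _ => plen_mul_le _ _)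
      _ = ∑ k, plen (M i k) * ∑ j, plen (M' k j) := by
          rw [Finset.sum_comm]
          exact Finset.sum_congr rfl fun k _ => (Finset.mul_sum _ _ _).symm
      _ ≤ ∑ k, plen (M i k) * H' :=
          Finset.sum_le_sum fun k _ => mul_le_mul_of_nonneg_left (h3' k) (plen_nonneg _)
      _ = (∑ k, plen (M i k)) * H' := (Finset.sum_mul _ _ _).symm
      _ ≤ _ := mul_le_mul_of_nonneg_right (h3 i) hH'

lemma Sz.pow [Nonempty ι] {x : ℂ} {D : ℕ} {H : ℝ} (h : Sz θ v x D H) (n : ℕ) :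
    Sz θ v (x ^ n) (n * D) (H ^ n) := by
  induction n with
  | zero => simpa using Sz.one
  | succ n ih =>
    rw [pow_succ, pow_succ, Nat.succ_mul]
    exact ih.mul h

lemma Sz.prod [Nonempty ι] {κ : Type*} (s : Finset κ) (x : κ → ℂ) (H : κ → ℝ) (D : κ → ℕ)
    (h : ∀ k ∈ s, Sz θ v (x k) (D k) (H k)) :
    Sz θ v (∏ k ∈ s, x k) (∑ k ∈ s, D k) (∏ k ∈ s, H k) := by
  classical
  induction s using Finset.induction_on with
  | empty => simpa using Sz.one
  | insert a s ha ih =>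
    rw [Finset.prod_insert ha, Finset.prod_insert ha, Finset.sum_insert ha]
    exact (h a (by simp)).mul (ih fun k hk => h k (by simp [hk]))

/-- The norm from `ℚ(θ)(v)` to `ℚ(θ)`: a nonzero `x` of bounded size yields a nonzero integer
polynomial of bounded size whose value at `θ` is as small as `x`. -/
lemma Sz.exists_polynomial [Nonempty ι] {x : ℂ} {D : ℕ} {H : ℝ} (h : Sz θ v x D H) (hx : x ≠ 0)
    (hind : ∀ w : ι → ℤ[X], ∑ i, aeval θ (w i) * v i = 0 → w = 0) (hH : 1 ≤ H) (t : ℝ)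
    (ht : 1 ≤ t) (hθ : ‖θ‖ ≤ t) (k : ι) :
    ∃ P : ℤ[X], P ≠ 0 ∧ P.natDegree ≤ Fintype.card ι * D ∧
      Real.log (mahler P) ≤ Fintype.card ι * Real.log H ∧
      ‖aeval θ P‖ * ‖v k‖ ≤ ‖x‖ * (∑ j, ‖v j‖) * (H * t ^ D) ^ Fintype.card ι := by
  classical
  obtain ⟨M, h1, h2, h3⟩ := h
  have hdet : M.det ≠ 0 := by
    intro h0
    obtain ⟨w, hw, hw0⟩ := Matrix.exists_vecMul_eq_zero_iff.2 h0
    apply hw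
    apply hind
    have h4 : ∑ j, aeval θ (Matrix.vecMul w M j) * v j = 0 := by rw [hw0]; simp
    have h5 : ∑ j, aeval θ (Matrix.vecMul w M j) * v j = x * ∑ i, aeval θ (w i) * v i := by
      simp only [Matrix.vecMul, dotProduct, map_sum, map_mul, Finset.sum_mul]
      rw [Finset.sum_comm, Finset.mul_sum]
      refine Finset.sum_congr rfl fun i _ => ?_
      calc _ = aeval θ (w i) * ∑ j, aeval θ (M i j) * v j := by
            rw [Finset.mul_sum]; exact Finset.sum_congr rfl fun j _ => by ring
        _ = _ := by rw [h1]; ring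
    rw [h5] at h4
    exact (mul_eq_zero.1 h4).resolve_left hx
  refine ⟨M.det, hdet, natDegree_det_le M D h2, ?_, ?_⟩
  · rw [← Real.log_pow]
    refine Real.log_le_log (by linarith [one_le_mahler hdet]) ?_
    refine (mahler_le_plen _).trans ((plen_det_le M).trans ?_)
    refine (Finset.prod_le_prod (fun _ _ => Finset.sum_nonneg fun _ _ => plen_nonneg _)
      fun i _ => h3 i).trans ?_
    simp
  · have key := norm_det_mul_le ((M.map (aeval θ)).transpose) v (fun i => x * v i)
      (by
        ext i
        simp only [Matrix.vecMul_transpose, Matrix.mulVec, dotProduct, Matrix.map_apply, h1])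
      (fun _ => H * t ^ D) (fun _ => one_le_mul_of_one_le_of_one_le hH (one_le_pow₀ ht))
      (by
        intro i
        simp only [Matrix.transpose_apply, Matrix.map_apply]
        calc _ ≤ ∑ j, plen (M i j) * t ^ D :=
              Finset.sum_le_sum fun j _ => norm_aeval_le _ D (h2 i j) θ t ht hθ
          _ ≤ _ := by rw [← Finset.sum_mul]; exact mul_le_mul_of_nonneg_right (h3 i) (by positivity))
      k
    rw [Matrix.det_transpose] at key
    have hd : (M.map (aeval θ)).det = aeval θ M.det := by
      have := (aeval (R := ℤ) θ).map_det M
      rw [this]; rfl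
    rw [hd, norm_mul] at key
    refine key.trans (le_of_eq ?_)
    simp [← Finset.mul_sum]

end Sz

section MvLen
open MvPolynomial

variable {σ : Type*}

/-- The length of an integer polynomial in several variables. -/
noncomputable def mlen (p : MvPolynomial σ ℤ) : ℝ := ∑ m ∈ p.support, |((MvPolynomial.coeff m p : ℤ) : ℝ)|

lemma mlen_eq {p : MvPolynomial σ ℤ} {s : Finset (σ →₀ ℕ)} (h : p.support ⊆ s) :
    mlen p = ∑ i ∈ s, |((MvPolynomial.coeff i p : ℤ) : ℝ)| := by
  refine Finset.sum_subset h fun i _ hi => ?_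
  simp [notMem_support_iff.1 hi]

lemma mlen_nonneg (p : MvPolynomial σ ℤ) : 0 ≤ mlen p := Finset.sum_nonneg fun _ _ => abs_nonneg _

lemma mlen_zero : mlen (0 : MvPolynomial σ ℤ) = 0 := by simp [mlen]

lemma mlen_add_le (p q : MvPolynomial σ ℤ) : mlen (p + q) ≤ mlen p + mlen q := by
  classical
  rw [mlen_eq (p := p + q) (s := p.support ∪ q.support) support_add,
    mlen_eq (p := p) (s := p.support ∪ q.support) Finset.subset_union_left,
    mlen_eq (p := q) (s := p.support ∪ q.support) Finset.subset_union_right,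
    ← Finset.sum_add_distrib]
  refine Finset.sum_le_sum fun i _ => ?_
  push_cast [coeff_add]
  exact abs_add_le _ _

lemma mlen_sum_le {ι : Type*} (s : Finset ι) (f : ι → MvPolynomial σ ℤ) :
    mlen (∑ i ∈ s, f i) ≤ ∑ i ∈ s, mlen (f i) := by
  classical
  induction s using Finset.induction_on with
  | empty => simp [mlen_zero]
  | insert a s ha ih =>
    rw [Finset.sum_insert ha, Finset.sum_insert ha]
    exact (mlen_add_le _ _).trans (by linarith)

lemma mlen_monomial (m : σ →₀ ℕ) (a : ℤ) : mlen (monomial m a) = |(a : ℝ)| := by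
  classical
  rw [mlen_eq (s := {m}) (support_monomial_subset)]
  simp

lemma mlen_monomial_mul (m : σ →₀ ℕ) (a : ℤ) (p : MvPolynomial σ ℤ) :
    mlen (monomial m a * p) ≤ |(a : ℝ)| * mlen p := by
  conv_lhs => rw [p.as_sum, Finset.mul_sum]
  refine (mlen_sum_le _ _).trans ?_
  rw [mlen, Finset.mul_sum]
  refine Finset.sum_le_sum fun i _ => ?_
  rw [monomial_mul, mlen_monomial]
  push_cast
  rw [abs_mul]

/-- Evaluating an integer polynomial of total degree at most `a`, after clearing denominators by
the `a`-th power of a common denominator. -/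
lemma Sz.aeval [Fintype σ] {ι : Type*} [Fintype ι] [Nonempty ι] {θ : ℂ} {v : ι → ℂ}
    (p : MvPolynomial σ ℤ) (a : ℕ) (hp : p.totalDegree ≤ a) (y : σ → ℂ) (d : ℂ) (D : ℕ) (h : ℝ)
    (hd : Sz θ v d D h) (hy : ∀ k, Sz θ v (d * y k) D h) :
    Sz θ v (d ^ a * MvPolynomial.aeval y p) (a * D) (mlen p * h ^ a) := by
  have : d ^ a * MvPolynomial.aeval y p =
      ∑ m ∈ p.support, ((MvPolynomial.coeff m p : ℤ) : ℂ) * (d ^ a * ∏ k, y k ^ m k) := by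
    rw [MvPolynomial.aeval_def, MvPolynomial.eval₂_eq', Finset.mul_sum]
    refine Finset.sum_congr rfl fun m _ => ?_
    simp; ring
  rw [this, mlen, Finset.sum_mul]
  refine Sz.sum _ _ _ _ fun m hm => ?_
  refine Sz.int_mul _ ?_
  have hdeg : ∑ k, m k ≤ a := by
    have := (le_totalDegree hm).trans hp
    rwa [Finsupp.sum_fintype _ _ (fun _ => rfl)] at this
  have heq : d ^ a * ∏ k, y k ^ m k = d ^ (a - ∑ k, m k) * ∏ k, (d * y k) ^ m k := by
    simp only [mul_pow, Finset.prod_mul_distrib, Finset.prod_pow_eq_pow_sum]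
    rw [← mul_assoc, ← pow_add, Nat.sub_add_cancel hdeg]
  rw [heq]
  have h1 := (hd.pow (a - ∑ k, m k)).mul
    (Sz.prod Finset.univ (fun k => (d * y k) ^ m k) (fun k => h ^ m k) (fun k => m k * D)
      fun k _ => (hy k).pow (m k))
  refine h1.mono ?_ ?_
  · rw [← Finset.sum_mul, ← add_mul, Nat.sub_add_cancel hdeg]
  · rw [Finset.prod_pow_eq_pow_sum, ← pow_add, Nat.sub_add_cancel hdeg]

end MvLen

section exists_rep
open Polynomial

/-- Some nonzero integer polynomial in `θ` is a denominator for a given element of `ℚ(θ)`. -/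
lemma exists_denominator (θ : ℂ) (x : ℂ)
    (hx : x ∈ IntermediateField.adjoin ℚ {θ}) :
    ∃ d : ℤ[X], d ≠ 0 ∧ ∃ p : ℤ[X], aeval θ d * x = aeval θ p := by
  have h_clear : ∀ r : ℚ[X], ∃ b : ℤ, b ≠ 0 ∧ ∃ p : ℤ[X], (b : ℂ) * aeval θ r = aeval θ p := by
    intro r
    obtain ⟨b, hb, h⟩ := IsLocalization.integerNormalization_spec (nonZeroDivisors ℤ) r
    refine ⟨b, nonZeroDivisors.ne_zero hb,
      IsLocalization.integerNormalization (nonZeroDivisors ℤ) r, ?_⟩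
    rw [← aeval_map_algebraMap ℚ θ (IsLocalization.integerNormalization (nonZeroDivisors ℤ) r)]
    rw [show (Polynomial.map (algebraMap ℤ ℚ)
      (IsLocalization.integerNormalization (nonZeroDivisors ℤ) r)) = _ from h]
    simp
  obtain ⟨r, s, hrs⟩ := (IntermediateField.mem_adjoin_simple_iff ℚ x).1 hx
  by_cases hs : aeval θ s = 0
  · exact ⟨1, one_ne_zero, 0, by simp [hrs, hs]⟩
  obtain ⟨b, hb, p, hp⟩ := h_clear r
  obtain ⟨c, hc, q, hq⟩ := h_clear s
  have hc' : (c : ℂ) ≠ 0 := by exact_mod_cast hc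
  have hb' : (b : ℂ) ≠ 0 := by exact_mod_cast hb
  refine ⟨C b * q, ?_, C c * p, ?_⟩
  · intro h
    have h2 : aeval θ (C b * q) = 0 := by rw [h]; simp
    rw [map_mul, ← hq] at h2
    simp [hb, hc, hs] at h2
  · rw [map_mul, map_mul, ← hq, ← hp, hrs, aeval_C, aeval_C]
    simp only [algebraMap_int_eq, eq_intCast]
    field_simp

/-- One denominator that serves for a finite family in `ℚ(θ)`. -/
lemma exists_common_denominator {κ : Type*} [Fintype κ] (θ : ℂ)
    (x : κ → ℂ) (hx : ∀ k, x k ∈ IntermediateField.adjoin ℚ {θ}) :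
    ∃ d : ℤ[X], d ≠ 0 ∧ ∀ k, ∃ p : ℤ[X], aeval θ d * x k = aeval θ p := by
  classical
  choose d hd p hp using fun k => exists_denominator θ (x k) (hx k)
  refine ⟨∏ k, d k, Finset.prod_ne_zero_iff.2 fun k _ => hd k, fun k => ?_⟩
  refine ⟨(∏ j ∈ Finset.univ.erase k, d j) * p k, ?_⟩
  rw [map_mul, ← hp k, ← Finset.mul_prod_erase _ _ (Finset.mem_univ k), map_mul]
  ring

/-- Finitely many numbers algebraic over `ℚ(θ)` act, up to a common denominator `d(θ)`, on a free
`ℤ[θ]`-lattice. -/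
lemma exists_rep {κ : Type*} [Fintype κ] (θ : ℂ) (hθ : Transcendental ℤ θ) (x : κ → ℂ)
    (hx : ∀ k, IsAlgebraic (IntermediateField.adjoin ℚ {θ}) (x k)) :
    ∃ (δ : ℕ) (_ : Nonempty (Fin δ)) (v : Fin δ → ℂ) (d : ℂ) (D : ℕ) (h : ℝ),
      (∀ w : Fin δ → ℤ[X], ∑ i, aeval θ (w i) * v i = 0 → w = 0) ∧ d ≠ 0 ∧ 1 ≤ h ∧
      Sz θ v d D h ∧ ∀ k, Sz θ v (d * x k) D h := by
  classical
  let F := IntermediateField.adjoin ℚ ({θ} : Set ℂ)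
  let K := IntermediateField.adjoin F (Set.range x)
  have : FiniteDimensional F K := IntermediateField.finiteDimensional_adjoin (by
    rintro _ ⟨k, rfl⟩
    exact (hx k).isIntegral)
  let b := Module.finBasis F K
  let δ := Module.finrank F K
  have hδ : 0 < δ := Module.finrank_pos
  have hne : Nonempty (Fin δ) := ⟨⟨0, hδ⟩⟩
  let v : Fin δ → ℂ := fun i => (b i : ℂ)
  let xK : κ → K := fun k => ⟨x k, IntermediateField.subset_adjoin _ _ ⟨k, rfl⟩⟩
  let c : κ × Fin δ × Fin δ → F := fun q => b.repr (xK q.1 * b q.2.1) q.2.2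
  obtain ⟨d, hd, hp⟩ := exists_common_denominator θ (fun q => (c q : ℂ)) (fun q => (c q).2)
  choose p hp using hp
  have hd0 : aeval θ d ≠ 0 := fun h => hθ ⟨d, hd, h⟩
  have hmat : ∀ k, ∀ i, ∑ j, aeval θ (p (k, i, j)) * v j = (aeval θ d * x k) * v i := by
    intro k i
    have h1 := b.sum_repr (xK k * b i)
    have h2 := congrArg (fun z : K => (z : ℂ)) h1
    simp only [IntermediateField.coe_mul] at h2
    have h3 : ((∑ j, b.repr (xK k * b i) j • b j : K) : ℂ) = ∑ j, (c (k, i, j) : ℂ) * v j := by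
      rw [show ((∑ j, b.repr (xK k * b i) j • b j : K) : ℂ) =
        algebraMap K ℂ (∑ j, b.repr (xK k * b i) j • b j) from rfl, map_sum]
      rfl
    rw [h3] at h2
    calc _ = aeval θ d * ∑ j, (c (k, i, j) : ℂ) * v j := by
          rw [Finset.mul_sum]
          exact Finset.sum_congr rfl fun j _ => by rw [← hp]; ring
      _ = _ := by rw [h2]; simp [xK, v]; ring
  have hS : ∀ k, ∃ D H, Sz θ v (aeval θ d * x k) D H := by
    intro k
    let M : Matrix (Fin δ) (Fin δ) ℤ[X] := fun i j => p (k, i, j)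
    refine ⟨∑ i, ∑ j, (M i j).natDegree, ∑ i, ∑ j, plen (M i j), M, hmat k, fun i j => ?_,
      fun i => ?_⟩
    · exact (Finset.single_le_sum (f := fun j => (M i j).natDegree) (fun _ _ => Nat.zero_le _)
        (Finset.mem_univ j)).trans (Finset.single_le_sum
        (f := fun i => ∑ j, (M i j).natDegree) (fun _ _ => Nat.zero_le _) (Finset.mem_univ i))
    · exact Finset.single_le_sum (f := fun i => ∑ j, plen (M i j))
        (fun _ _ => Finset.sum_nonneg fun _ _ => plen_nonneg _) (Finset.mem_univ i)
  have hSd : Sz θ v (aeval θ d) d.natDegree (plen d) := by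
    refine ⟨fun i j => if i = j then d else 0, fun i => ?_, fun i j => ?_, fun i => ?_⟩
    · simp [apply_ite (aeval θ), ite_mul]
    · dsimp only
      split_ifs <;> simp
    · simp [apply_ite plen, plen_zero]
  choose Dk Hk hDk using hS
  refine ⟨δ, hne, v, aeval θ d, d.natDegree + ∑ k, Dk k, 1 + plen d + ∑ k, Hk k, ?_, hd0, ?_,
    ?_, ?_⟩
  · intro w hw
    have hF : ∀ i, aeval θ (w i) ∈ F := fun i => by
      have h1 := aeval_mem_adjoin_singleton ℤ (p := w i) θ
      have : Algebra.adjoin ℤ {θ} ≤ F.toSubalgebra.restrictScalars ℤ :=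
        Algebra.adjoin_le (by
          intro y hy
          exact IntermediateField.subset_adjoin ℚ _ hy)
      exact this h1
    let wF : Fin δ → F := fun i => ⟨aeval θ (w i), hF i⟩
    have h1 : ∑ i, wF i • b i = 0 := by
      apply Subtype.ext
      rw [show ((∑ j, wF j • b j : K) : ℂ) = algebraMap K ℂ (∑ j, wF j • b j) from rfl, map_sum]
      exact hw
    have h2 := Fintype.linearIndependent_iff.1 b.linearIndependent wF h1
    funext i
    by_contra hwi
    exact hθ ⟨w i, hwi, congrArg (fun z : F => (z : ℂ)) (h2 i)⟩
  · have := plen_nonneg d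
    have : 0 ≤ ∑ k, Hk k := Finset.sum_nonneg fun k _ => (hDk k).nonneg
    linarith
  · have : 0 ≤ ∑ k, Hk k := Finset.sum_nonneg fun k _ => (hDk k).nonneg
    exact hSd.mono (Nat.le_add_right _ _) (by linarith)
  · intro k
    have := plen_nonneg d
    have h2 := Finset.single_le_sum (f := Hk) (fun k _ => (hDk k).nonneg) (Finset.mem_univ k)
    refine (hDk k).mono ?_ (by linarith)
    exact (Finset.single_le_sum (f := Dk) (fun _ _ => Nat.zero_le _) (Finset.mem_univ k)).trans
      (Nat.le_add_left _ _)

end exists_rep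

end PeriodTrdeg

/-! ### The Weierstrass zeta function and its quasi-periods -/

namespace PeriodTrdeg

section zeta
open Filter Topology

variable (L : PeriodPair)

/-- The summand of the Weierstrass zeta function; for `l = 0` it is `1 / z`. -/
noncomputable def zetaTerm (l z : ℂ) : ℂ := 1 / (z - l) + 1 / l + z / l ^ 2

/-- The Weierstrass zeta function with the summand of `l₀` left out. -/
noncomputable def zetaExcept (l₀ z : ℂ) : ℂ :=
  ∑' l : L.lattice, if l.1 = l₀ then 0 else zetaTerm l z

/-- The Weierstrass zeta function of a lattice. -/
noncomputable def zeta (z : ℂ) : ℂ := ∑' l : L.lattice, zetaTerm l z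

lemma zetaTerm_bound (r : ℝ) (hr : 0 < r) (s : ℂ) (hs : ‖s‖ < r) (l : ℂ) (h : 2 * r ≤ ‖l‖) :
    ‖zetaTerm l s‖ ≤ 2 * r ^ 2 * ‖l‖ ^ (-3 : ℝ) := by
  have hsl : s - l ≠ 0 := by
    intro h0
    rw [sub_eq_zero.1 h0] at hs
    linarith
  have hl : 0 < ‖l‖ := by linarith
  have hl0 : l ≠ 0 := norm_pos_iff.1 hl
  have h1 : zetaTerm l s = s ^ 2 / (l ^ 2 * (s - l)) := by
    rw [zetaTerm]; field_simp; ring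
  have h2 : ‖l‖ / 2 ≤ ‖s - l‖ := by
    rw [norm_sub_rev]
    exact le_trans (by linarith) (norm_sub_norm_le l s)
  rw [h1, norm_div, norm_mul, norm_pow, norm_pow, Real.rpow_neg hl.le]
  norm_cast
  rw [← div_eq_mul_inv, div_le_div_iff₀ (by positivity) (by positivity)]
  calc ‖s‖ ^ 2 * ‖l‖ ^ 3 ≤ r ^ 2 * ‖l‖ ^ 3 := by gcongr
    _ = 2 * r ^ 2 * (‖l‖ ^ 2 * (‖l‖ / 2)) := by ring
    _ ≤ _ := by gcongr

lemma hasDerivAt_zetaTerm {l z : ℂ} (h : z ≠ l) :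
    HasDerivAt (zetaTerm l) (-(1 / (z - l) ^ 2 - 1 / l ^ 2)) z := by
  have h1 : z - l ≠ 0 := sub_ne_zero.2 h
  have := ((((hasDerivAt_id z).sub_const l).fun_inv h1).add_const (1 / l)).add
    ((hasDerivAt_id z).div_const (l ^ 2))
  refine (this.congr_deriv ?_).congr_of_eventuallyEq (Eventually.of_forall fun w => ?_)
  · simp [id]; ring
  · simp [zetaTerm, id]

/-- Locally uniform convergence, by comparison with the sum of `‖l‖⁻³` (`zetaTerm_bound`). -/
lemma hasSumLocallyUniformly_zetaExcept (l₀ : ℂ) :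
    HasSumLocallyUniformly (fun (l : L.lattice) (z : ℂ) => if l.1 = l₀ then 0 else zetaTerm l z)
      (zetaExcept L l₀) := by
  refine L.hasSumLocallyUniformly_aux (u := fun r l => 2 * r ^ 2 * ‖l‖ ^ (-3 : ℝ)) _
    (fun _ _ => (ZLattice.summable_norm_rpow _ _ (by simp; norm_num)).mul_left _) fun r hr =>
    Filter.eventually_atTop.mpr ⟨2 * r, ?_⟩
  rintro _ h s hs l rfl
  split_ifs
  · simp only [norm_zero]; positivity
  · exact zetaTerm_bound r hr s hs l h

lemma summable_zetaExcept (l₀ z : ℂ) :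
    Summable (fun l : L.lattice => if l.1 = l₀ then 0 else zetaTerm l z) :=
  ⟨_, (hasSumLocallyUniformly_zetaExcept L l₀).hasSum (x := z)⟩

lemma zetaExcept_of_notMem {l₀ : ℂ} (hl : l₀ ∉ L.lattice) : zetaExcept L l₀ = zeta L := by
  funext z
  refine tsum_congr fun l => if_neg ?_
  rintro rfl
  exact hl l.2

lemma zetaExcept_add {l₀ : ℂ} (hl : l₀ ∈ L.lattice) (z : ℂ) :
    zetaExcept L l₀ z + zetaTerm l₀ z = zeta L z := by
  have h1 : zetaTerm l₀ z = ∑' i : L.lattice, if i = ⟨l₀, hl⟩ then zetaTerm l₀ z else 0 := by simp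
  rw [h1, zetaExcept, ← Summable.tsum_add (summable_zetaExcept L l₀ z)
    (summable_of_hasFiniteSupport ((Set.finite_singleton ⟨l₀, hl⟩).subset (by simp)))]
  refine tsum_congr fun l => ?_
  by_cases h : l = ⟨l₀, hl⟩
  · subst h; simp
  · have : l.1 ≠ l₀ := fun h' => h (Subtype.ext h')
    simp [h, this]

lemma differentiableOn_zetaExcept (l₀ : ℂ) :
    DifferentiableOn ℂ (zetaExcept L l₀) (L.lattice \ {l₀})ᶜ := by
  refine (hasSumLocallyUniformly_zetaExcept L l₀).hasSumLocallyUniformlyOn.differentiableOn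
    (.of_forall fun s => .fun_sum fun i hi => ?_) L.isOpen_compl_lattice_sdiff
  split_ifs with h
  · simp
  · intro x hx
    exact (hasDerivAt_zetaTerm (by rintro rfl; simp_all)).differentiableAt.differentiableWithinAt

lemma deriv_zetaExcept (l₀ : ℂ) :
    Set.EqOn (deriv (zetaExcept L l₀)) (fun z => -L.weierstrassPExcept l₀ z)
      (L.lattice \ {l₀})ᶜ := by
  have hne : ∀ i : L.lattice, i.1 ≠ l₀ → ∀ x ∈ ((L.lattice : Set ℂ) \ {l₀})ᶜ, x ≠ i.1 := by
    rintro i hi x hx rfl; simp_all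
  have hd : ∀ i : L.lattice, ∀ x ∈ ((L.lattice : Set ℂ) \ {l₀})ᶜ,
      HasDerivAt (fun z => if i.1 = l₀ then 0 else zetaTerm i z)
        (-(if i = l₀ then 0 else (1 / (x - i) ^ 2 - 1 / (i : ℂ) ^ 2))) x := by
    intro i x hx
    split_ifs with h
    · simpa using hasDerivAt_const x (0 : ℂ)
    · exact hasDerivAt_zetaTerm (hne i h x hx)
  refine ((hasSumLocallyUniformly_zetaExcept L l₀).tendstoLocallyUniformlyOn.deriv
    (.of_forall fun s => ?_) L.isOpen_compl_lattice_sdiff).unique ?_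
  · exact .fun_sum fun i _ x hx => (hd i x hx).differentiableAt.differentiableWithinAt
  · have h := ((L.hasSumLocallyUniformly_weierstrassPExcept l₀).tendstoLocallyUniformlyOn
      (s := ((L.lattice : Set ℂ) \ {l₀})ᶜ)).neg
    refine h.congr ?_
    intro s x hx
    simp only [Function.comp_apply, Pi.neg_apply]
    rw [deriv_fun_sum fun i _ => (hd i x hx).differentiableAt, ← Finset.sum_neg_distrib]
    exact Finset.sum_congr rfl fun i _ => ((hd i x hx).deriv).symm

lemma hasDerivAt_zeta {z : ℂ} (hz : z ∉ L.lattice) :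
    HasDerivAt (zeta L) (-L.weierstrassP z) z := by
  have h := L.ω₁_div_two_notMem_lattice
  have hmem : z ∈ ((L.lattice : Set ℂ) \ {L.ω₁ / 2})ᶜ := fun h => hz h.1
  have h1 := ((differentiableOn_zetaExcept L (L.ω₁ / 2)).differentiableAt
    (L.isOpen_compl_lattice_sdiff.mem_nhds hmem)).hasDerivAt
  rw [deriv_zetaExcept L _ hmem] at h1
  rwa [zetaExcept_of_notMem L h, L.weierstrassPExcept_of_notMem _ h] at h1

lemma analyticAt_zetaExcept (l₀ : ℂ) : AnalyticAt ℂ (zetaExcept L l₀) l₀ :=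
  (differentiableOn_zetaExcept L l₀).analyticAt (L.isOpen_compl_lattice_sdiff.mem_nhds (by simp))

lemma isOpen_latticeCompl : IsOpen ((L.lattice : Set ℂ)ᶜ) := L.isClosed_lattice.isOpen_compl

lemma analyticAt_zeta {z : ℂ} (hz : z ∉ L.lattice) : AnalyticAt ℂ (zeta L) z := by
  have : DifferentiableOn ℂ (zeta L) ((L.lattice : Set ℂ)ᶜ) := fun x hx =>
    (hasDerivAt_zeta L hx).differentiableAt.differentiableWithinAt
  exact this.analyticAt ((isOpen_latticeCompl L).mem_nhds hz)

lemma zeta_neg (z : ℂ) : zeta L (-z) = -zeta L z := by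
  rw [zeta, zeta, ← (Equiv.neg L.lattice).tsum_eq, ← tsum_neg]
  refine tsum_congr fun l => ?_
  simp only [zetaTerm, Equiv.neg_apply, NegMemClass.coe_neg]
  rw [show -z - -(l : ℂ) = -(z - l) by ring, one_div, inv_neg, one_div, inv_neg]
  ring

lemma countable_lattice : (L.lattice : Set ℂ).Countable := by
  have : Countable L.lattice := L.latticeEquivProd.toEquiv.countable_iff.2 inferInstance
  exact Set.to_countable _

lemma isPreconnected_latticeCompl : IsPreconnected ((L.lattice : Set ℂ)ᶜ) :=
  ((countable_lattice L).isConnected_compl_of_one_lt_rank (by simp)).isPreconnected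

/-- Quasi-periodicity: `ζ(z + l) - ζ(z)` has derivative zero on the complement of the lattice, which
is connected. -/
lemma exists_zeta_add {l : ℂ} (hl : l ∈ L.lattice) :
    ∃ c, ∀ z ∉ L.lattice, zeta L (z + l) = zeta L z + c := by
  have hmem : ∀ z, z ∉ L.lattice → z + l ∉ L.lattice := fun z hz h =>
    hz (by simpa using L.lattice.sub_mem h hl)
  have hd : ∀ z ∈ ((L.lattice : Set ℂ)ᶜ),
      HasDerivAt (fun z => zeta L (z + l) - zeta L z) 0 z := by
    intro z hz
    have h := ((hasDerivAt_zeta L (hmem z hz)).comp_add_const z l).sub (hasDerivAt_zeta L hz)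
    have h2 := L.weierstrassP_add_coe z ⟨l, hl⟩
    simp only at h2
    rw [h2, sub_self] at h
    exact h
  obtain ⟨c, hc⟩ := (isOpen_latticeCompl L).exists_is_const_of_deriv_eq_zero
    (isPreconnected_latticeCompl L)
    (fun z hz => (hd z hz).differentiableAt.differentiableWithinAt) (fun z hz => (hd z hz).deriv)
  exact ⟨c, fun z hz => by linear_combination hc z hz⟩

/-- The constant is found at `z = -l / 2`, since `ζ` is odd. -/
lemma zeta_add_of_half {l : ℂ} (hl : l ∈ L.lattice) (hl2 : l / 2 ∉ L.lattice) {z : ℂ}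
    (hz : z ∉ L.lattice) : zeta L (z + l) = zeta L z + 2 * zeta L (l / 2) := by
  obtain ⟨c, hc⟩ := exists_zeta_add L hl
  have h := hc (-(l / 2)) (fun h => hl2 (by simpa using L.lattice.neg_mem h))
  rw [show -(l / 2) + l = l / 2 by ring, zeta_neg] at h
  rw [hc z hz]
  linear_combination -h

/-- The quasi-period `η₁ = 2 ζ(ω₁ / 2)` of the zeta function along `ω₁`. -/
noncomputable def eta₁ : ℂ := 2 * zeta L (L.ω₁ / 2)

/-- The quasi-period `η₂ = 2 ζ(ω₂ / 2)` of the zeta function along `ω₂`. -/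
noncomputable def eta₂ : ℂ := 2 * zeta L (L.ω₂ / 2)

lemma lattice_pt_mem (m n : ℤ) : m * L.ω₁ + n * L.ω₂ ∈ L.lattice :=
  PeriodPair.mem_lattice.2 ⟨m, n, rfl⟩

lemma add_lattice_notMem {z l : ℂ} (hz : z ∉ L.lattice) (hl : l ∈ L.lattice) :
    z + l ∉ L.lattice := fun h => hz (by simpa using L.lattice.sub_mem h hl)

lemma zeta_add_int_mul {l : ℂ} (hl : l ∈ L.lattice) (hl2 : l / 2 ∉ L.lattice) {z : ℂ}
    (hz : z ∉ L.lattice) (m : ℤ) : zeta L (z + m * l) = zeta L z + m * (2 * zeta L (l / 2)) := by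
  have hm : ∀ m : ℤ, (m : ℂ) * l ∈ L.lattice := fun m => by
    simpa using L.lattice.smul_mem m hl
  induction m with
  | zero => simp
  | succ k ih =>
    have := zeta_add_of_half L hl hl2 (add_lattice_notMem L hz (hm k))
    push_cast at this ih ⊢
    rw [add_mul, one_mul, ← add_assoc, this, ih]; ring
  | pred k ih =>
    have := zeta_add_of_half L hl hl2 (add_lattice_notMem L hz (hm (-k - 1)))
    push_cast at this ih ⊢
    rw [show z + (-(k : ℂ) - 1) * l + l = z + -(k : ℂ) * l by ring, ih] at this
    linear_combination -this

lemma zeta_add (m n : ℤ) {z : ℂ} (hz : z ∉ L.lattice) :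
    zeta L (z + (m * L.ω₁ + n * L.ω₂)) = zeta L z + (m * eta₁ L + n * eta₂ L) := by
  rw [← add_assoc, zeta_add_int_mul L L.ω₂_mem_lattice L.ω₂_div_two_notMem_lattice,
    zeta_add_int_mul L L.ω₁_mem_lattice L.ω₁_div_two_notMem_lattice hz, eta₁, eta₂]
  · ring
  · exact add_lattice_notMem L hz (by simpa using L.lattice.smul_mem m L.ω₁_mem_lattice)

lemma weierstrassP_add (m n : ℤ) (z : ℂ) :
    L.weierstrassP (z + (m * L.ω₁ + n * L.ω₂)) = L.weierstrassP z :=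
  L.weierstrassP_add_coe z ⟨_, lattice_pt_mem L m n⟩

lemma derivWeierstrassP_add (m n : ℤ) (z : ℂ) :
    L.derivWeierstrassP (z + (m * L.ω₁ + n * L.ω₂)) = L.derivWeierstrassP z :=
  L.derivWeierstrassP_add_coe z ⟨_, lattice_pt_mem L m n⟩

end zeta

end PeriodTrdeg

/-! ### The ℘-function and nondegeneracy of the period matrix -/

namespace PeriodTrdeg

section zeta2
open Filter Topology

variable (L : PeriodPair)

lemma hasDerivAt_weierstrassP {z : ℂ} (hz : z ∉ L.lattice) :
    HasDerivAt L.weierstrassP (L.derivWeierstrassP z) z := by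
  rw [← L.deriv_weierstrassP]
  exact (L.analyticOnNhd_weierstrassP z hz).differentiableAt.hasDerivAt

lemma eventually_notMem_lattice {z : ℂ} (hz : z ∉ L.lattice) : ∀ᶠ w in 𝓝 z, w ∉ L.lattice :=
  (isOpen_latticeCompl L).mem_nhds hz

lemma eventually_notMem_lattice' (z : ℂ) : ∀ᶠ w in 𝓝[≠] z, w ∉ L.lattice := by
  have := nhdsWithin_le_nhds (s := {z}ᶜ) (L.compl_lattice_sdiff_singleton_mem_nhds z)
  filter_upwards [this, self_mem_nhdsWithin] with w hw hne h
  exact hw ⟨h, hne⟩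

lemma infinite_range_weierstrassP : (L.weierstrassP '' ((L.lattice : Set ℂ)ᶜ)).Infinite := by
  intro hfin
  obtain ⟨M, hM⟩ := hfin.isBounded.exists_norm_le
  have h1 : Tendsto L.weierstrassP (𝓝[≠] 0) (Bornology.cobounded ℂ) := by
    rw [tendsto_cobounded_iff_meromorphicOrderAt_neg (L.meromorphic_weierstrassP 0),
      L.order_weierstrassP 0 L.lattice.zero_mem]
    decide
  have h2 := tendsto_norm_cobounded_atTop.comp h1
  obtain ⟨z, hz1, hz2⟩ := ((h2.eventually_gt_atTop M).and (eventually_notMem_lattice' L 0)).exists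
  exact absurd (hM _ ⟨z, hz2, rfl⟩) (not_le.2 hz1)

lemma exists_derivWeierstrassP_ne_zero : ∃ z ∉ L.lattice, L.derivWeierstrassP z ≠ 0 := by
  by_contra! h
  obtain ⟨c, hc⟩ := (isOpen_latticeCompl L).exists_is_const_of_deriv_eq_zero
    (isPreconnected_latticeCompl L)
    (fun z hz => (hasDerivAt_weierstrassP L hz).differentiableAt.differentiableWithinAt)
    (fun z hz => by rw [(hasDerivAt_weierstrassP L hz).deriv]; exact h z hz)
  refine infinite_range_weierstrassP L ((Set.finite_singleton c).subset ?_)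
  rintro _ ⟨z, hz, rfl⟩
  exact hc z hz

/-- The second order differential equation `℘'' = 6 ℘² - g₂ / 2`. -/
lemma hasDerivAt_derivWeierstrassP {z : ℂ} (hz : z ∉ L.lattice) :
    HasDerivAt L.derivWeierstrassP (6 * L.weierstrassP z ^ 2 - L.g₂ / 2) z := by
  have ha : AnalyticOnNhd ℂ (fun z => deriv L.derivWeierstrassP z
      - (6 * L.weierstrassP z ^ 2 - L.g₂ / 2)) ((L.lattice : Set ℂ)ᶜ) := by
    intro w hw
    have h1 := L.analyticOnNhd_weierstrassP w hw
    have h2 := (L.analyticOnNhd_derivWeierstrassP w hw).deriv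
    fun_prop
  have hd : ∀ w ∉ L.lattice, HasDerivAt L.derivWeierstrassP (deriv L.derivWeierstrassP w) w :=
    fun w hw => (L.analyticOnNhd_derivWeierstrassP w hw).differentiableAt.hasDerivAt
  have hprod : ∀ w ∈ ((L.lattice : Set ℂ)ᶜ), L.derivWeierstrassP w • (deriv L.derivWeierstrassP w
      - (6 * L.weierstrassP w ^ 2 - L.g₂ / 2)) = 0 := by
    intro w hw
    have h1 := (hd w hw).pow 2
    have hP := hasDerivAt_weierstrassP L hw
    have h2 := (((hP.pow 3).const_mul 4).sub (hP.const_mul L.g₂)).sub_const L.g₃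
    have h3 := h2.congr_of_eventuallyEq (f₁ := fun z => L.derivWeierstrassP z ^ 2) (by
      filter_upwards [eventually_notMem_lattice L hw] with x hx
      simpa using L.derivWeierstrassP_sq x hx)
    have h4 := h1.unique h3
    simp only [smul_eq_mul]
    push_cast at h4
    simp only [pow_one] at h4
    linear_combination h4 / 2
  have h5 : deriv L.derivWeierstrassP z - (6 * L.weierstrassP z ^ 2 - L.g₂ / 2) = 0 := by
    rcases L.analyticOnNhd_derivWeierstrassP.eq_zero_or_eq_zero_of_smul_eq_zero ha hprod
      (isPreconnected_latticeCompl L) with h | h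
    · obtain ⟨w, hw, hne⟩ := exists_derivWeierstrassP_ne_zero L
      exact absurd (h w hw) hne
    · exact h z hz
  exact (hd z hz).congr_deriv (sub_eq_zero.1 h5)

lemma derivWeierstrassP_half : L.derivWeierstrassP (L.ω₁ / 2) = 0 := by
  have h := L.derivWeierstrassP_add_coe (-(L.ω₁ / 2)) ⟨_, L.ω₁_mem_lattice⟩
  simp only at h
  rw [show -(L.ω₁ / 2) + L.ω₁ = L.ω₁ / 2 by ring, L.derivWeierstrassP_neg] at h
  linear_combination h / 2

/-- The value `e₁ = ℘(ω₁ / 2)` is a root of the cubic. -/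
lemma weierstrassP_half : 4 * L.weierstrassP (L.ω₁ / 2) ^ 3
    - L.g₂ * L.weierstrassP (L.ω₁ / 2) - L.g₃ = 0 := by
  rw [← L.derivWeierstrassP_sq _ L.ω₁_div_two_notMem_lattice, derivWeierstrassP_half]
  simp

lemma order_weierstrassP_sub_ne_top {u : ℂ} (hu : u ∉ L.lattice) :
    analyticOrderAt (fun z => L.weierstrassP z - L.weierstrassP u) u ≠ ⊤ := by
  intro h
  rw [analyticOrderAt_eq_top] at h
  have ha : AnalyticOnNhd ℂ (fun z => L.weierstrassP z - L.weierstrassP u)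
      ((L.lattice : Set ℂ)ᶜ) := L.analyticOnNhd_weierstrassP.sub analyticOnNhd_const
  have h0 := ha.eqOn_zero_of_preconnected_of_eventuallyEq_zero (isPreconnected_latticeCompl L) hu h
  refine infinite_range_weierstrassP L ((Set.finite_singleton (L.weierstrassP u)).subset ?_)
  rintro _ ⟨z, hz, rfl⟩
  exact sub_eq_zero.1 (h0 hz)

/-- The function `℘` takes infinitely many values and hence satisfies no quadratic equation. -/
lemma quadratic_eq_zero {A B C : ℂ}
    (h : ∀ z ∉ L.lattice, A * L.weierstrassP z ^ 2 + B * L.weierstrassP z + C = 0) :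
    A = 0 ∧ B = 0 ∧ C = 0 := by
  let q : Polynomial ℂ := Polynomial.C A * Polynomial.X ^ 2 + Polynomial.C B * Polynomial.X
    + Polynomial.C C
  have hq : q = 0 := by
    refine Polynomial.eq_zero_of_infinite_isRoot q
      ((infinite_range_weierstrassP L).mono ?_)
    rintro _ ⟨z, hz, rfl⟩
    simpa [q] using h z hz
  have e2 := congrArg (fun p => Polynomial.coeff p 2) hq
  have e1 := congrArg (fun p => Polynomial.coeff p 1) hq
  have e0 := congrArg (fun p => Polynomial.coeff p 0) hq
  refine ⟨?_, ?_, ?_⟩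
  · simpa [q, Polynomial.coeff_X, Polynomial.coeff_C] using e2
  · simpa [q, Polynomial.coeff_X, Polynomial.coeff_C] using e1
  · simpa [q, Polynomial.coeff_X, Polynomial.coeff_C] using e0

lemma omega₁_ne_zero : L.ω₁ ≠ 0 := by
  intro h
  apply L.ω₁_div_two_notMem_lattice
  rw [h]; simp

/-- A Legendre-type nondegeneracy: if the quasi-periods were proportional to the periods, then
`ζ(z) - c z` would be elliptic and `(ζ(z) - c z)² - ℘(z)` a constant; differentiating shows that
the cubic has a double root. -/
lemma legendre_ne_zero (hdisc : L.g₂ ^ 3 - 27 * L.g₃ ^ 2 ≠ 0) :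
    L.ω₁ * eta₂ L - L.ω₂ * eta₁ L ≠ 0 := by
  intro h0
  have hω := omega₁_ne_zero L
  obtain ⟨c, hc1⟩ : ∃ c, eta₁ L = c * L.ω₁ := ⟨eta₁ L / L.ω₁, by field_simp⟩
  have hc2 : eta₂ L = c * L.ω₂ := by
    apply mul_left_cancel₀ hω
    rw [hc1] at h0
    linear_combination h0
  -- `φ` is the regular part at `0` of the elliptic function `ζ(z) - c z`.
  let φ : ℂ → ℂ := fun z => zetaExcept L 0 z - c * z
  have hφ : AnalyticAt ℂ φ 0 := by
    have := analyticAt_zetaExcept L 0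
    fun_prop
  have hφ0 : φ 0 = 0 := by
    simp only [φ, mul_zero, sub_zero, zetaExcept]
    refine (tsum_congr fun l => ?_).trans tsum_zero
    split_ifs with h
    · rfl
    · simp [zetaTerm]
  let f : ℂ → ℂ := fun z => zeta L z - c * z
  let g : ℂ → ℂ := fun z => 2 * dslope φ 0 z + φ z ^ 2 - L.weierstrassPExcept 0 z
  have hg : AnalyticAt ℂ g 0 := by
    have h1 : AnalyticAt ℂ (dslope φ 0) 0 := by
      obtain ⟨p, hp⟩ := hφ
      exact ⟨_, hp.has_fpower_series_dslope_fslope⟩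
    have h2 := L.analyticAt_weierstrassPExcept 0
    fun_prop
  classical
  let H : ℂ → ℂ := fun z => if z ∈ L.lattice then g 0 else f z ^ 2 - L.weierstrassP z
  have hHper : ∀ z, ∀ l ∈ L.lattice, H (z + l) = H z := by
    intro z l hl
    by_cases hz : z ∈ L.lattice
    · simp only [H, if_pos hz, if_pos (L.lattice.add_mem hz hl)]
    · simp only [H, if_neg hz, if_neg (add_lattice_notMem L hz hl)]
      obtain ⟨m, n, rfl⟩ := PeriodPair.mem_lattice.1 hl
      simp only [f]
      rw [weierstrassP_add, zeta_add L m n hz, hc1, hc2]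
      ring
  have hH0 : H =ᶠ[𝓝 0] g := by
    have h1 := eventually_nhdsWithin_iff.1 (eventually_notMem_lattice' L 0)
    filter_upwards [h1] with z hz
    by_cases hz0 : z = 0
    · simp [H, hz0]
    · have hz := hz hz0
      simp only [H, if_neg hz, f, g]
      have h2 := zetaExcept_add L L.lattice.zero_mem z
      have h3 := L.weierstrassPExcept_add 0 z
      have h4 : dslope φ 0 z = φ z / z := by
        rw [dslope_of_ne _ hz0, slope_def_field, hφ0]; simp
      simp only [ZeroMemClass.coe_zero] at h3
      rw [← h2, ← h3, h4]
      simp only [zetaTerm, φ, sub_zero, div_zero, add_zero]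
      simp only [ne_eq, OfNat.ofNat_ne_zero, not_false_eq_true, zero_pow, div_zero, sub_zero,
        add_zero]
      field_simp
      ring
  have hHan : ∀ z, AnalyticAt ℂ H z := by
    intro z
    by_cases hz : z ∈ L.lattice
    · have h1 : AnalyticAt ℂ H (z + -z) := by
        rw [add_neg_cancel]; exact hg.congr hH0.symm
      have h2 : AnalyticAt ℂ (fun w => H (w + -z)) z :=
        h1.comp_of_eq (f := fun w => w + -z) (by fun_prop) rfl
      exact h2.congr (Eventually.of_forall fun w => hHper w _ (L.lattice.neg_mem hz))
    · have h1 := L.analyticOnNhd_weierstrassP z hz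
      have h2 := analyticAt_zeta L hz
      have h3 : AnalyticAt ℂ (fun z => f z ^ 2 - L.weierstrassP z) z := by fun_prop
      refine h3.congr ?_
      filter_upwards [eventually_notMem_lattice L hz] with w hw
      simp [H, hw]
  have hHdiff : Differentiable ℂ H := fun z => (hHan z).differentiableAt
  have hconst : ∀ z, H z = H 0 := fun z =>
    hHdiff.apply_eq_apply_of_bounded (IsZLattice.isCompact_range_of_periodic L.lattice _
      hHdiff.continuous fun z w hw => hHper z w hw).isBounded z 0
  obtain ⟨k, hk⟩ : ∃ k, ∀ z ∉ L.lattice, f z ^ 2 = L.weierstrassP z + k := by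
    refine ⟨H 0, fun z hz => ?_⟩
    rw [← hconst z]
    simp [H, hz]
  have hquad : ∀ z ∉ L.lattice, 4 * (L.weierstrassP z + k) * (L.weierstrassP z + c) ^ 2
      = 4 * L.weierstrassP z ^ 3 - L.g₂ * L.weierstrassP z - L.g₃ := by
    intro z hz
    have h1 : HasDerivAt f (-L.weierstrassP z - c) z := by
      exact ((hasDerivAt_zeta L hz).sub ((hasDerivAt_id z).const_mul c)).congr_deriv (by ring)
    have h2 := h1.pow 2
    have h3 := ((hasDerivAt_weierstrassP L hz).add_const k).congr_of_eventuallyEq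
      (f₁ := fun z => f z ^ 2) (by
        filter_upwards [eventually_notMem_lattice L hz] with x hx using hk x hx)
    have h4 := h2.unique h3
    rw [← L.derivWeierstrassP_sq z hz, ← h4, ← hk z hz]
    push_cast
    ring
  obtain ⟨e2, e1, e0⟩ := quadratic_eq_zero L (A := 4 * (k + 2 * c))
    (B := 4 * c ^ 2 + 8 * k * c + L.g₂) (C := 4 * k * c ^ 2 + L.g₃)
    fun z hz => by linear_combination hquad z hz
  have hk' : k = -2 * c := by linear_combination e2 / 4
  have hg2 : L.g₂ = 12 * c ^ 2 := by rw [hk'] at e1; linear_combination e1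
  have hg3 : L.g₃ = 8 * c ^ 3 := by rw [hk'] at e0; linear_combination e0
  apply hdisc
  rw [hg2, hg3]; ring

end zeta2

section frozen

lemma indep_of_im_pos {ω₁ ω₂ : ℂ} (hτ : 0 < (ω₂ / ω₁).im) :
    LinearIndependent ℝ ![ω₁, ω₂] := by
  have h1 : ω₁ ≠ 0 := by rintro rfl; simp at hτ
  rw [LinearIndependent.pair_iff]
  intro s t h
  simp only [Complex.real_smul] at h
  have h2 : (s : ℂ) + t * (ω₂ / ω₁) = 0 := by field_simp; linear_combination h
  have h3 := congrArg Complex.im h2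
  simp only [Complex.add_im, Complex.ofReal_im, Complex.im_ofReal_mul, zero_add,
    Complex.zero_im] at h3
  have ht : t = 0 := (mul_eq_zero.1 h3).resolve_right hτ.ne'
  subst ht
  simpa using h2

variable (L : PeriodPair)

/-- Comparison of the sums over nonzero pairs of integers with the sums over the whole lattice; the
term of the origin is `0` by the convention for division by zero. -/
lemma tsum_lattice_eq (h : ℂ → ℂ) (h0 : h 0 = 0) :
    ∑' l : L.lattice, h l = ∑' v : {v : ℤ × ℤ // v ≠ 0}, h (latticePt L.ω₁ L.ω₂ v.1) := by
  rw [← L.latticeEquivProd.symm.toEquiv.tsum_eq]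
  simp only [LinearEquiv.coe_toEquiv, L.latticeEquiv_symm_apply]
  refine (tsum_subtype_eq_of_support_subset (s := {v : ℤ × ℤ | v ≠ 0}) ?_).symm
  rintro v hv rfl
  apply hv
  simp [h0]

lemma weierstrassG2_eq : weierstrassG2 L.ω₁ L.ω₂ = L.g₂ := by
  rw [weierstrassG2, eisenstein, PeriodPair.g₂, PeriodPair.G,
    tsum_lattice_eq L (fun l => (l ^ 4)⁻¹) (by simp)]
  rfl

lemma weierstrassG3_eq : weierstrassG3 L.ω₁ L.ω₂ = L.g₃ := by
  rw [weierstrassG3, eisenstein, PeriodPair.g₃, PeriodPair.G,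
    tsum_lattice_eq L (fun l => (l ^ 6)⁻¹) (by simp)]
  rfl

lemma weierstrassZeta_eq (z : ℂ) : weierstrassZeta L.ω₁ L.ω₂ z = zeta L z := by
  rw [weierstrassZeta, ← zetaExcept_add L L.lattice.zero_mem z, add_comm, zetaExcept,
    tsum_lattice_eq L (fun l => if l = 0 then 0 else zetaTerm l z) (by simp)]
  congr 1
  · refine tsum_congr fun v => ?_
    rw [if_neg]
    · rfl
    · intro h
      apply v.2
      have h1 : L.latticeEquivProd.symm v.1 = 0 :=
        Subtype.ext ((L.latticeEquiv_symm_apply v.1).trans h)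
      simpa using h1
  · simp [zetaTerm]

end frozen

end PeriodTrdeg

/-! ### The zero estimate -/

namespace PeriodTrdeg

section zeroEstimate
open Filter Topology Finset

/-- The case of one variable: a polynomial of degree less than `2Λ` with `s ≥ 2Λ` integer zeros
vanishes. -/
lemma grid_aux (Λ s : ℕ) (hs : 2 * Λ ≤ s) (c : ℕ → ℕ → ℂ) (A B a b : ℂ)
    (h : ∀ m < s, ∑ i ∈ range Λ, ∑ k ∈ range Λ,
      c i k * ((m : ℂ) * A + a) ^ i * ((m : ℂ) * B + b) ^ k = 0) (x : ℂ) :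
    ∑ i ∈ range Λ, ∑ k ∈ range Λ, c i k * (x * A + a) ^ i * (x * B + b) ^ k = 0 := by
  classical
  set p : Polynomial ℂ := ∑ i ∈ range Λ, ∑ k ∈ range Λ, Polynomial.C (c i k) *
    (Polynomial.X * Polynomial.C A + Polynomial.C a) ^ i *
    (Polynomial.X * Polynomial.C B + Polynomial.C b) ^ k with hp
  have heval : ∀ y, p.eval y = ∑ i ∈ range Λ, ∑ k ∈ range Λ,
      c i k * (y * A + a) ^ i * (y * B + b) ^ k := by
    intro y
    simp only [hp, Polynomial.eval_finsetSum, Polynomial.eval_mul, Polynomial.eval_pow,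
      Polynomial.eval_add, Polynomial.eval_C, Polynomial.eval_X]
  rcases Nat.eq_zero_or_pos Λ with rfl | hΛ
  · simp
  have hlin : ∀ A a : ℂ, (Polynomial.X * Polynomial.C A + Polynomial.C a).natDegree ≤ 1 := by
    intro A a
    compute_degree
  have hdeg : p.natDegree ≤ 2 * Λ - 2 := by
    refine Polynomial.natDegree_sum_le_of_forall_le _ _ fun i hi => ?_
    refine Polynomial.natDegree_sum_le_of_forall_le _ _ fun k hk => ?_
    have hi' := mem_range.1 hi
    have hk' := mem_range.1 hk
    refine Polynomial.natDegree_mul_le.trans ?_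
    refine (add_le_add Polynomial.natDegree_mul_le le_rfl).trans ?_
    have h1 := Polynomial.natDegree_pow_le_of_le i (hlin A a)
    have h2 := Polynomial.natDegree_pow_le_of_le k (hlin B b)
    rw [Polynomial.natDegree_C]
    omega
  have hp0 : p = 0 := by
    refine Polynomial.eq_zero_of_natDegree_lt_card_of_eval_eq_zero p
      (f := fun m : Fin s => ((m : ℕ) : ℂ)) ?_ ?_ ?_
    · intro m n hmn
      exact Fin.ext (Nat.cast_injective (R := ℂ) hmn)
    · intro m
      rw [heval]
      exact h m m.2
    · rw [Fintype.card_fin]; omega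
  rw [← heval, hp0, Polynomial.eval_zero]

/-- A polynomial of degree less than `Λ` in each of two variables, which vanishes at an `s × s` grid
of points of the lattice spanned by the independent vectors `(ω₁, η₁)` and `(ω₂, η₂)`, is zero. -/
lemma grid_eq_zero (Λ s : ℕ) (hs : 2 * Λ ≤ s) (c : ℕ → ℕ → ℂ) (ω₁ ω₂ η₁ η₂ : ℂ)
    (hdet : ω₁ * η₂ - ω₂ * η₁ ≠ 0)
    (h : ∀ m < s, ∀ n < s, ∑ i ∈ range Λ, ∑ k ∈ range Λ,
      c i k * ((m : ℂ) * ω₁ + n * ω₂) ^ i * ((m : ℂ) * η₁ + n * η₂) ^ k = 0) :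
    ∀ i < Λ, ∀ k < Λ, c i k = 0 := by
  have h1 : ∀ n < s, ∀ x : ℂ, ∑ i ∈ range Λ, ∑ k ∈ range Λ,
      c i k * (x * ω₁ + n * ω₂) ^ i * (x * η₁ + n * η₂) ^ k = 0 := fun n hn x =>
    grid_aux Λ s hs c _ _ _ _ (fun m hm => h m hm n hn) x
  have h2 : ∀ x y : ℂ, ∑ i ∈ range Λ, ∑ k ∈ range Λ,
      c i k * (y * ω₂ + x * ω₁) ^ i * (y * η₂ + x * η₁) ^ k = 0 := fun x y =>
    grid_aux Λ s hs c _ _ _ _ (fun n hn => by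
      simpa only [add_comm] using h1 n hn x) y
  have h3 : ∀ a b : ℂ, ∑ i ∈ range Λ, ∑ k ∈ range Λ, c i k * a ^ i * b ^ k = 0 := by
    intro a b
    have := h2 ((a * η₂ - b * ω₂) / (ω₁ * η₂ - ω₂ * η₁))
      ((b * ω₁ - a * η₁) / (ω₁ * η₂ - ω₂ * η₁))
    have ha : (b * ω₁ - a * η₁) / (ω₁ * η₂ - ω₂ * η₁) * ω₂
        + (a * η₂ - b * ω₂) / (ω₁ * η₂ - ω₂ * η₁) * ω₁ = a := by
      rw [div_mul_eq_mul_div, div_mul_eq_mul_div, ← add_div, div_eq_iff hdet]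
      ring
    have hb : (b * ω₁ - a * η₁) / (ω₁ * η₂ - ω₂ * η₁) * η₂
        + (a * η₂ - b * ω₂) / (ω₁ * η₂ - ω₂ * η₁) * η₁ = b := by
      rw [div_mul_eq_mul_div, div_mul_eq_mul_div, ← add_div, div_eq_iff hdet]
      ring
    rwa [ha, hb] at this
  have h4 : ∀ b : ℂ, ∀ i < Λ, ∑ k ∈ range Λ, c i k * b ^ k = 0 := by
    intro b i hi
    have hp : ∑ i ∈ range Λ, Polynomial.C (∑ k ∈ range Λ, c i k * b ^ k) * Polynomial.X ^ i
        = 0 := by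
      refine Polynomial.funext fun a => ?_
      rw [Polynomial.eval_finsetSum, Polynomial.eval_zero, ← h3 a b]
      refine sum_congr rfl fun i _ => ?_
      simp only [Polynomial.eval_mul, Polynomial.eval_C, Polynomial.eval_pow, Polynomial.eval_X,
        sum_mul]
      exact sum_congr rfl fun k _ => by ring
    have := congrArg (fun p => Polynomial.coeff p i) hp
    simpa only [Polynomial.finsetSum_coeff, Polynomial.coeff_C_mul_X_pow, sum_ite_eq, mem_range, hi,
      if_true, Polynomial.coeff_zero] using this
  intro i hi k hk
  have hp : ∑ k ∈ range Λ, Polynomial.C (c i k) * Polynomial.X ^ k = 0 := by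
    refine Polynomial.funext fun b => ?_
    rw [Polynomial.eval_finsetSum, Polynomial.eval_zero, ← h4 b i hi]
    exact sum_congr rfl fun k _ => by simp
  have := congrArg (fun p => Polynomial.coeff p k) hp
  simpa [Polynomial.finsetSum_coeff, Polynomial.coeff_X_pow, hk] using this

variable (L : PeriodPair)

/-- The auxiliary function `∑ P i j k * z ^ i * ℘(z) ^ j * ζ(z) ^ k`, the sum being over exponents
smaller than `Λ`. -/
noncomputable def auxF (Λ : ℕ) (P : ℕ → ℕ → ℕ → ℂ) (z : ℂ) : ℂ :=
  ∑ i ∈ range Λ, ∑ j ∈ range Λ, ∑ k ∈ range Λ,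
    P i j k * z ^ i * L.weierstrassP z ^ j * zeta L z ^ k

lemma analyticAt_weierstrassP' {z : ℂ} (hz : z ∉ L.lattice) : AnalyticAt ℂ L.weierstrassP z := by
  have := L.differentiableOn_weierstrassP.analyticAt ((isOpen_latticeCompl L).mem_nhds hz)
  exact this

lemma analyticAt_auxF (Λ : ℕ) (P : ℕ → ℕ → ℕ → ℂ) {z : ℂ} (hz : z ∉ L.lattice) :
    AnalyticAt ℂ (auxF L Λ P) z := by
  unfold auxF
  refine Finset.analyticAt_fun_sum _ fun i _ => Finset.analyticAt_fun_sum _ fun j _ =>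
    Finset.analyticAt_fun_sum _ fun k _ => ?_
  exact ((analyticAt_const.mul (analyticAt_id.pow _)).mul
    ((analyticAt_weierstrassP' L hz).pow _)).mul ((analyticAt_zeta L hz).pow _)

lemma add_pow_range {Λ i : ℕ} (hi : i < Λ) (w x : ℂ) :
    (w + x) ^ i = ∑ i' ∈ range Λ, x ^ i' * ((i.choose i' : ℂ) * w ^ (i - i')) := by
  rw [add_comm w x, add_pow]
  rw [← sum_subset (range_subset_range.2 (Nat.succ_le_of_lt hi))]
  · exact sum_congr rfl fun j _ => by ring
  · intro j _ hj
    rw [mem_range, not_lt] at hj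
    rw [Nat.choose_eq_zero_of_lt (by omega)]
    simp

/-- The coefficient of `ξ ^ i' * υ ^ k'` when `z` and `ζ` are replaced by `z + ξ` and `ζ + υ` in
the auxiliary function. -/
noncomputable def taylorF (Λ : ℕ) (P : ℕ → ℕ → ℕ → ℂ) (i' k' : ℕ) (z : ℂ) : ℂ :=
  ∑ i ∈ range Λ, ∑ j ∈ range Λ, ∑ k ∈ range Λ,
    P i j k * ((i.choose i' : ℂ) * z ^ (i - i')) * L.weierstrassP z ^ j *
      ((k.choose k' : ℂ) * zeta L z ^ (k - k'))

lemma analyticAt_taylorF (Λ : ℕ) (P : ℕ → ℕ → ℕ → ℂ) (i' k' : ℕ) {z : ℂ} (hz : z ∉ L.lattice) :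
    AnalyticAt ℂ (taylorF L Λ P i' k') z := by
  unfold taylorF
  refine Finset.analyticAt_fun_sum _ fun i _ => Finset.analyticAt_fun_sum _ fun j _ =>
    Finset.analyticAt_fun_sum _ fun k _ => ?_
  exact ((analyticAt_const.mul (analyticAt_const.mul (analyticAt_id.pow _))).mul
    ((analyticAt_weierstrassP' L hz).pow _)).mul
    (analyticAt_const.mul ((analyticAt_zeta L hz).pow _))

lemma sum_comm₃ {β : Type*} (s : Finset ℕ) (r : Finset β) (g : ℕ → ℕ → ℕ → β → ℂ) :
    ∑ i ∈ s, ∑ j ∈ s, ∑ k ∈ s, ∑ b ∈ r, g i j k b =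
      ∑ b ∈ r, ∑ i ∈ s, ∑ j ∈ s, ∑ k ∈ s, g i j k b := by
  rw [sum_comm (s := r)]
  refine sum_congr rfl fun i _ => ?_
  rw [sum_comm (s := r)]
  refine sum_congr rfl fun j _ => ?_
  rw [sum_comm (s := r)]

/-- The auxiliary function at a translate by a period, expanded by the quasi-periodicity of
`z` and `ζ`. -/
lemma auxF_add (Λ : ℕ) (P : ℕ → ℕ → ℕ → ℂ) (m n : ℤ) {z : ℂ} (hz : z ∉ L.lattice) :
    auxF L Λ P (z + (m * L.ω₁ + n * L.ω₂)) = ∑ i' ∈ range Λ, ∑ k' ∈ range Λ,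
      ((m * L.ω₁ + n * L.ω₂) ^ i' * (m * eta₁ L + n * eta₂ L) ^ k') * taylorF L Λ P i' k' z := by
  have h : auxF L Λ P (z + (m * L.ω₁ + n * L.ω₂)) =
      ∑ i ∈ range Λ, ∑ j ∈ range Λ, ∑ k ∈ range Λ, ∑ i' ∈ range Λ, ∑ k' ∈ range Λ,
      ((m * L.ω₁ + n * L.ω₂) ^ i' * (m * eta₁ L + n * eta₂ L) ^ k') *
      (P i j k * ((i.choose i' : ℂ) * z ^ (i - i')) * L.weierstrassP z ^ j *
      ((k.choose k' : ℂ) * zeta L z ^ (k - k'))) := by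
    unfold auxF
    refine sum_congr rfl fun i hi => sum_congr rfl fun j _ => sum_congr rfl fun k hk => ?_
    rw [zeta_add L m n hz, weierstrassP_add, add_pow_range (mem_range.1 hi),
      add_pow_range (mem_range.1 hk)]
    simp only [mul_sum, sum_mul]
    rw [sum_comm]
    exact sum_congr rfl fun i' _ => sum_congr rfl fun k' _ => by ring
  rw [h]
  rw [sum_comm₃]
  refine sum_congr rfl fun i' _ => ?_
  rw [sum_comm₃]
  refine sum_congr rfl fun k' _ => ?_
  unfold taylorF
  simp only [mul_sum]

/-- **Zero estimate.** If `auxF` vanishes to order `T` at all points of a `s × s` grid, where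
`s ≥ 2 * Λ` and `T` exceeds `Λ` times the multiplicity of `℘ - ℘ u` at `u`, then all coefficients
vanish. -/
lemma zero_estimate (Λ : ℕ) (P : ℕ → ℕ → ℕ → ℂ) {u : ℂ} (hu : u ∉ L.lattice) (o T s : ℕ)
    (ho : analyticOrderAt (fun z => L.weierstrassP z - L.weierstrassP u) u = o)
    (hT : Λ * o < T) (hs : 2 * Λ ≤ s) (hdet : L.ω₁ * eta₂ L - L.ω₂ * eta₁ L ≠ 0)
    (h : ∀ m < s, ∀ n < s, ∀ t < T,
      iteratedDeriv t (auxF L Λ P) (u + ((m : ℤ) * L.ω₁ + (n : ℤ) * L.ω₂)) = 0) :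
    ∀ i < Λ, ∀ j < Λ, ∀ k < Λ, P i j k = 0 := by
  have h1 : ∀ t < T, ∀ i' < Λ, ∀ k' < Λ, iteratedDeriv t (taylorF L Λ P i' k') u = 0 := by
    intro t ht
    refine grid_eq_zero Λ s hs (fun i' k' => iteratedDeriv t (taylorF L Λ P i' k') u) _ _ _ _ hdet
      fun m hm n hn => ?_
    have h2 := h m hm n hn t ht
    have h3 := congrFun (iteratedDeriv_comp_add_const t (auxF L Λ P)
      (((m : ℤ) : ℂ) * L.ω₁ + ((n : ℤ) : ℂ) * L.ω₂)) u
    rw [h2] at h3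
    have h4 : (fun z => auxF L Λ P (z + (((m : ℤ) : ℂ) * L.ω₁ + ((n : ℤ) : ℂ) * L.ω₂))) =ᶠ[𝓝 u]
        fun z => ∑ i' ∈ range Λ, ∑ k' ∈ range Λ,
      ((((m : ℤ) : ℂ) * L.ω₁ + ((n : ℤ) : ℂ) * L.ω₂) ^ i' *
        (((m : ℤ) : ℂ) * eta₁ L + ((n : ℤ) : ℂ) * eta₂ L) ^ k') * taylorF L Λ P i' k' z := by
      filter_upwards [eventually_notMem_lattice L hu] with z hz
      exact auxF_add L Λ P m n hz
    rw [h4.iteratedDeriv_eq, iteratedDeriv_fun_sum] at h3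
    · rw [← h3]
      refine sum_congr rfl fun i _ => ?_
      rw [iteratedDeriv_fun_sum]
      · refine sum_congr rfl fun k _ => ?_
        rw [iteratedDeriv_const_mul _ (analyticAt_taylorF L Λ P i k hu).contDiffAt]
        push_cast
        ring
      · intro k _
        exact (analyticAt_const.mul (analyticAt_taylorF L Λ P i k hu)).contDiffAt
    · intro i _
      exact (Finset.analyticAt_fun_sum _ fun k _ =>
        analyticAt_const.mul (analyticAt_taylorF L Λ P i k hu)).contDiffAt
  by_contra hne
  push Not at hne
  classical
  -- the lexicographically largest pair `(i, k)` for which some coefficient is nonzero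
  obtain ⟨i₀, hi₀, hmaxi⟩ := exists_max_image
    ((range Λ).filter fun i => ∃ j < Λ, ∃ k < Λ, P i j k ≠ 0) id (by
      obtain ⟨i, hi, j, hj, k, hk, hP⟩ := hne
      exact ⟨i, mem_filter.2 ⟨mem_range.2 hi, j, hj, k, hk, hP⟩⟩)
  rw [mem_filter, mem_range] at hi₀
  obtain ⟨k₀, hk₀, hmaxk⟩ := exists_max_image
    ((range Λ).filter fun k => ∃ j < Λ, P i₀ j k ≠ 0) id (by
      obtain ⟨-, j, hj, k, hk, hP⟩ := hi₀
      exact ⟨k, mem_filter.2 ⟨mem_range.2 hk, j, hj, hP⟩⟩)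
  rw [mem_filter, mem_range] at hk₀
  obtain ⟨hk₀, j₀, hj₀, hP⟩ := hk₀
  set p : Polynomial ℂ := ∑ j ∈ range Λ, Polynomial.C (P i₀ j k₀) * Polynomial.X ^ j with hp
  have hcoeff : ∀ j < Λ, p.coeff j = P i₀ j k₀ := by
    intro j hj
    simp only [hp, Polynomial.finsetSum_coeff, Polynomial.coeff_C_mul_X_pow, sum_ite_eq, mem_range,
      hj, if_true]
  have hp0 : p ≠ 0 := fun h0 => hP (by rw [← hcoeff j₀ hj₀, h0, Polynomial.coeff_zero])
  have hpdeg : p.natDegree < Λ := by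
    refine lt_of_le_of_lt (Polynomial.natDegree_sum_le_of_forall_le _ (n := Λ - 1) _
      fun j hj => (Polynomial.natDegree_C_mul_X_pow_le _ _).trans ?_) (by omega)
    have := mem_range.1 hj
    omega
  have hf : taylorF L Λ P i₀ k₀ = fun z => p.eval (L.weierstrassP z) := by
    funext z
    unfold taylorF
    rw [sum_eq_single i₀, hp, Polynomial.eval_finsetSum]
    · refine sum_congr rfl fun j hj => ?_
      rw [sum_eq_single k₀]
      · simp
      · intro k hk hkk
        rcases lt_or_gt_of_ne hkk with h2 | h2
        · rw [Nat.choose_eq_zero_of_lt h2]; simp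
        · have : P i₀ j k = 0 := by
            by_contra h3
            exact absurd (hmaxk k (mem_filter.2 ⟨hk, j, mem_range.1 hj, h3⟩)) (not_le.2 h2)
          rw [this]; simp
      · intro h2; exact absurd (mem_range.2 hk₀) h2
    · intro i hi hii
      refine sum_eq_zero fun j hj => sum_eq_zero fun k hk => ?_
      rcases lt_or_gt_of_ne hii with h2 | h2
      · rw [Nat.choose_eq_zero_of_lt h2]; simp
      · have : P i j k = 0 := by
          by_contra h3
          exact absurd (hmaxi i (mem_filter.2 ⟨hi, j, mem_range.1 hj, k, mem_range.1 hk, h3⟩))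
            (not_le.2 h2)
        rw [this]; simp
    · intro h2; exact absurd (mem_range.2 hi₀.1) h2
  have hord : (T : ℕ∞) ≤ analyticOrderAt (taylorF L Λ P i₀ k₀) u :=
    (natCast_le_analyticOrderAt_iff_iteratedDeriv_eq_zero
      (analyticAt_taylorF L Λ P i₀ k₀ hu)).2 fun t ht => h1 t ht i₀ hi₀.1 k₀ hk₀
  obtain ⟨q, hq, hqd⟩ := Polynomial.exists_eq_pow_rootMultiplicity_mul_and_not_dvd p hp0
    (L.weierstrassP u)
  set r := p.rootMultiplicity (L.weierstrassP u) with hr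
  have hrle : r ≤ p.natDegree := by
    rw [hr]
    calc _ ≤ Multiset.card p.roots := by rw [← Polynomial.count_roots]; exact Multiset.count_le_card _ _
      _ ≤ _ := Polynomial.card_roots' p
  have hw := analyticAt_weierstrassP' L hu
  have hqa : AnalyticAt ℂ (fun z => q.eval (L.weierstrassP z)) u := by
    have := hw.aeval_polynomial q
    simpa [Polynomial.coe_aeval_eq_eval] using this
  have hf2 : taylorF L Λ P i₀ k₀ = (fun z => L.weierstrassP z - L.weierstrassP u) ^ r *
      fun z => q.eval (L.weierstrassP z) := by
    rw [hf]
    funext z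
    conv_lhs => rw [hq]
    simp
  have hwa : AnalyticAt ℂ (fun z => L.weierstrassP z - L.weierstrassP u) u :=
    hw.sub analyticAt_const
  rw [hf2, analyticOrderAt_mul (hwa.pow r) hqa, analyticOrderAt_pow hwa, ho,
    hqa.analyticOrderAt_eq_zero.2 fun h0 => hqd (Polynomial.dvd_iff_isRoot.2 h0),
    add_zero] at hord
  have h5 : T ≤ r * o := by
    rw [nsmul_eq_mul] at hord
    exact_mod_cast hord
  have h6 : r * o ≤ Λ * o := Nat.mul_le_mul_right _ (by omega)
  omega

end zeroEstimate
end PeriodTrdeg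

/-! ### Removable singularities and the maximum principle -/

namespace PeriodTrdeg

section maxModulus
open Filter Topology Finset

/-- Values of a function at removable singularities can be corrected simultaneously. -/
lemma exists_analytic_extension (f : ℂ → ℂ) : ∃ G : ℂ → ℂ, ∀ x k, AnalyticAt ℂ k x →
    f =ᶠ[𝓝[≠] x] k → G =ᶠ[𝓝 x] k := by
  have key : ∀ x k, ContinuousAt k x → f =ᶠ[𝓝[≠] x] k → limUnder (𝓝[≠] x) f = k x := by
    intro x k hk hf
    refine Tendsto.limUnder_eq ?_
    exact (hk.tendsto.mono_left nhdsWithin_le_nhds).congr' hf.symm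
  refine ⟨fun x => limUnder (𝓝[≠] x) f, fun x k hk hf => ?_⟩
  have h1 : ∀ᶠ y in 𝓝[≠] x, f =ᶠ[𝓝[≠] y] k := by
    rw [EventuallyEq, eventually_nhdsWithin_iff, ← eventually_eventually_nhds] at hf
    rw [eventually_nhdsWithin_iff]
    filter_upwards [hf] with y hy hyx
    refine nhdsWithin_le_nhds ?_
    filter_upwards [hy, isOpen_compl_singleton.mem_nhds hyx] with z hz hzx using hz hzx
  rw [eventually_nhdsWithin_iff] at h1
  filter_upwards [h1, hk.eventually_analyticAt] with y hy hky
  by_cases hyx : y = x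
  · subst hyx
    exact key y k hky.continuousAt hf
  · exact key y k hky.continuousAt (hy hyx)

/-- The leading Taylor coefficient at a zero of order at least `n`. -/
lemma iteratedDeriv_of_eq_pow_mul (n : ℕ) : ∀ (F g : ℂ → ℂ) (x : ℂ), AnalyticAt ℂ g x →
    (F =ᶠ[𝓝 x] fun z => (z - x) ^ n * g z) →
    iteratedDeriv n F x = (n.factorial : ℂ) * g x := by
  induction n with
  | zero =>
    intro F g x _ h
    simpa using h.eq_of_nhds
  | succ n ih =>
    intro F g x hg h
    rw [iteratedDeriv_succ']
    rw [ih (deriv F) (fun z => (n + 1 : ℕ) * g z + (z - x) * deriv g z) x]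
    · simp [Nat.factorial_succ]; ring
    · exact (analyticAt_const.mul hg).add ((analyticAt_id.sub analyticAt_const).mul hg.deriv)
    · refine h.deriv.trans ?_
      filter_upwards [hg.eventually_analyticAt] with z hz
      have h1 := (((hasDerivAt_id z).sub_const x).pow (n + 1)).mul hz.differentiableAt.hasDerivAt
      have h2 : deriv (fun z => (z - x) ^ (n + 1) * g z) z = _ := h1.deriv
      rw [h2]
      simp
      ring

/-- The maximum principle for a function with poles of order at most `D` at the points of `V` and
prescribed zeros at the points of `W`, applied after multiplying by the product of the `(z - v) ^ D`
and dividing by the zeros. -/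
lemma max_modulus {U : Set ℂ} (hU : Bornology.IsBounded U) (F : ℂ → ℂ) (V W : Finset ℂ)
    (D : ℕ) (μ : ℂ → ℕ) (z₀ : ℂ) (hz₀ : z₀ ∈ W) (hz₀U : z₀ ∈ closure U)
    (hF : ∀ x ∈ closure U, x ∉ V → AnalyticAt ℂ F x)
    (hV : ∀ x ∈ V, ∃ k, AnalyticAt ℂ k x ∧ (fun z => (z - x) ^ D * F z) =ᶠ[𝓝[≠] x] k)
    (hW : ∀ x ∈ W, AnalyticAt ℂ F x ∧ ∀ i < μ x, iteratedDeriv i F x = 0)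
    (B R r c ρ : ℝ) (hr : 0 < r) (hc : 0 < c)
    (hfr : ∀ z ∈ frontier U, z ∉ V ∧ ‖F z‖ ≤ B ∧ (∀ v ∈ V, ‖z - v‖ ≤ R) ∧
      ∀ w ∈ W, r ≤ ‖z - w‖)
    (hcV : ∀ v ∈ V, c ≤ ‖z₀ - v‖) (hρ : ∀ w ∈ W, w ≠ z₀ → ‖z₀ - w‖ ≤ ρ) (hB : 0 ≤ B)
    (hR : 0 ≤ R) :
    ‖iteratedDeriv (μ z₀) F z₀‖ / (μ z₀).factorial * c ^ (D * #V) ≤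
      B * R ^ (D * #V) * ρ ^ (∑ w ∈ W.erase z₀, μ w) / r ^ (∑ w ∈ W, μ w) := by
  classical
  set Q : ℂ → ℂ := fun z => ∏ v ∈ V, (z - v) ^ D with hQ
  set Z : Finset ℂ → ℂ → ℂ := fun W z => ∏ w ∈ W, (z - w) ^ μ w with hZ
  have hQa : ∀ (V : Finset ℂ) x, AnalyticAt ℂ (fun z => ∏ v ∈ V, (z - v) ^ D) x := fun V x =>
    Finset.analyticAt_fun_prod _ fun v _ => (analyticAt_id.sub analyticAt_const).pow _
  have hZa : ∀ (W : Finset ℂ) x, AnalyticAt ℂ (Z W) x := fun W x =>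
    Finset.analyticAt_fun_prod _ fun v _ => (analyticAt_id.sub analyticAt_const).pow _
  have hZ0 : ∀ (W : Finset ℂ) x, x ∉ W → Z W x ≠ 0 := fun W x hx =>
    prod_ne_zero_iff.2 fun w hw => pow_ne_zero _ (sub_ne_zero.2 fun h => hx (h ▸ hw))
  obtain ⟨G, hG⟩ := exists_analytic_extension fun z => F z * Q z / Z W z
  have hGW : ∀ x ∈ W, ∃ g, AnalyticAt ℂ g x ∧ (F =ᶠ[𝓝 x] fun z => (z - x) ^ μ x * g z) ∧
      G =ᶠ[𝓝 x] fun z => g z * Q z / Z (W.erase x) z := by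
    intro x hx
    obtain ⟨hFx, hFi⟩ := hW x hx
    obtain ⟨g, hg, hFg⟩ := (natCast_le_analyticOrderAt hFx).1
      ((natCast_le_analyticOrderAt_iff_iteratedDeriv_eq_zero hFx).2 hFi)
    refine ⟨g, hg, hFg.mono fun z hz => by simpa using hz, hG x _ ?_ ?_⟩
    · exact (hg.mul (hQa V x)).div (hZa _ x) (hZ0 _ x (by simp))
    · rw [EventuallyEq, eventually_nhdsWithin_iff]
      filter_upwards [hFg] with z hz hzx
      have hzx' : (z - x) ^ μ x ≠ 0 := pow_ne_zero _ (sub_ne_zero.2 hzx)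
      have : Z W z = (z - x) ^ μ x * Z (W.erase x) z := (mul_prod_erase W _ hx).symm
      rw [hz, this, smul_eq_mul, mul_assoc, mul_div_mul_left _ _ hzx']
  have hGa : ∀ x ∈ closure U, AnalyticAt ℂ G x := by
    intro x hx
    by_cases hxW : x ∈ W
    · obtain ⟨g, hg, -, h⟩ := hGW x hxW
      exact ((hg.mul (hQa V x)).div (hZa _ x) (hZ0 _ x (by simp))).congr h.symm
    by_cases hxV : x ∈ V
    · obtain ⟨k, hk, hkF⟩ := hV x hxV
      have ha : AnalyticAt ℂ (fun z => k z * (∏ v ∈ V.erase x, (z - v) ^ D) / Z W z) x :=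
        (hk.mul (hQa _ x)).div (hZa _ x) (hZ0 _ x hxW)
      refine ha.congr (hG x _ ha ?_).symm
      filter_upwards [hkF] with z hz
      rw [← hz, hQ]
      simp only
      rw [← mul_prod_erase V (fun v => (z - v) ^ D) hxV]
      ring
    · have ha : AnalyticAt ℂ (fun z => F z * Q z / Z W z) x :=
        ((hF x hx hxV).mul (hQa _ x)).div (hZa _ x) (hZ0 _ x hxW)
      exact ha.congr (hG x _ ha (EventuallyEq.refl _ _)).symm
  have hbound : ‖G z₀‖ ≤ B * R ^ (D * #V) / r ^ (∑ w ∈ W, μ w) := by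
    refine Complex.norm_le_of_forall_mem_frontier_norm_le hU ?_ ?_ hz₀U
    · exact DifferentiableOn.diffContOnCl fun x hx =>
        (hGa x hx).differentiableAt.differentiableWithinAt
    · intro z hz
      obtain ⟨hzV, hzB, hzR, hzr⟩ := hfr z hz
      have hzW : z ∉ W := fun h => by
        have := hzr z h
        simp at this
        linarith
      have ha : AnalyticAt ℂ (fun z => F z * Q z / Z W z) z :=
        ((hF z (frontier_subset_closure hz) hzV).mul (hQa _ z)).div (hZa _ z) (hZ0 _ z hzW)
      rw [(hG z _ ha (EventuallyEq.refl _ _)).eq_of_nhds, norm_div, norm_mul]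
      have h1 : ‖Q z‖ ≤ R ^ (D * #V) := by
        rw [hQ, norm_prod, pow_mul]
        refine le_trans ?_ (le_of_eq (prod_const (s := V) (R ^ D)))
        refine prod_le_prod (fun _ _ => norm_nonneg _) fun v hv => ?_
        rw [norm_pow]
        exact pow_le_pow_left₀ (norm_nonneg _) (hzR v hv) _
      have h2 : r ^ (∑ w ∈ W, μ w) ≤ ‖Z W z‖ := by
        rw [hZ, norm_prod, ← prod_pow_eq_pow_sum]
        refine prod_le_prod (fun _ _ => by positivity) fun w hw => ?_
        rw [norm_pow]
        exact pow_le_pow_left₀ hr.le (hzr w hw) _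
      gcongr
  obtain ⟨g, hg, hFg, hGg⟩ := hGW z₀ hz₀
  rw [hGg.eq_of_nhds, norm_div, norm_mul] at hbound
  rw [iteratedDeriv_of_eq_pow_mul _ F g z₀ hg hFg, norm_mul, Complex.norm_natCast,
    mul_div_cancel_left₀ _ (by positivity)]
  have h1 : c ^ (D * #V) ≤ ‖Q z₀‖ := by
    rw [hQ, norm_prod, pow_mul]
    refine le_trans (le_of_eq (prod_const (s := V) (c ^ D)).symm) ?_
    refine prod_le_prod (fun _ _ => by positivity) fun v hv => ?_
    rw [norm_pow]
    exact pow_le_pow_left₀ hc.le (hcV v hv) _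
  have h2 : ‖Z (W.erase z₀) z₀‖ ≤ ρ ^ (∑ w ∈ W.erase z₀, μ w) := by
    rw [hZ, norm_prod, ← prod_pow_eq_pow_sum]
    refine prod_le_prod (fun _ _ => norm_nonneg _) fun w hw => ?_
    rw [norm_pow]
    exact pow_le_pow_left₀ (norm_nonneg _)
      (hρ w (mem_of_mem_erase hw) (ne_of_mem_erase hw)) _
  have h3 : 0 < ‖Z (W.erase z₀) z₀‖ := norm_pos_iff.2 (hZ0 _ _ (by simp))
  rw [div_le_iff₀ h3] at hbound
  calc ‖g z₀‖ * c ^ (D * #V) ≤ ‖g z₀‖ * ‖Q z₀‖ := by gcongr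
    _ ≤ _ := hbound
    _ ≤ B * R ^ (D * #V) / r ^ (∑ w ∈ W, μ w) * ρ ^ (∑ w ∈ W.erase z₀, μ w) := by gcongr
    _ = _ := by ring

end maxModulus
end PeriodTrdeg

/-! ### Parallelograms adapted to the lattice -/

namespace PeriodTrdeg

section geometry
open Filter Topology Finset

variable (L : PeriodPair)

/-- The first real coordinate of a complex number with respect to the basis `ω₁, ω₂`. -/
noncomputable def coord₁ : ℂ →ₗ[ℝ] ℝ := L.basis.coord 0

/-- The second real coordinate of a complex number with respect to the basis `ω₁, ω₂`. -/
noncomputable def coord₂ : ℂ →ₗ[ℝ] ℝ := L.basis.coord 1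

/-- The norm whose balls are the parallelograms with sides parallel to the periods. -/
noncomputable def nu (z : ℂ) : ℝ := max |coord₁ L z| |coord₂ L z|

lemma coord_add (x y : ℝ) :
    coord₁ L ((x : ℂ) * L.ω₁ + (y : ℂ) * L.ω₂) = x ∧
      coord₂ L ((x : ℂ) * L.ω₁ + (y : ℂ) * L.ω₂) = y := by
  have h : (x : ℂ) * L.ω₁ + (y : ℂ) * L.ω₂ = x • L.basis 0 + y • L.basis 1 := by
    simp
  rw [h, coord₁, coord₂]
  simp only [map_add, map_smul, Module.Basis.coord_apply, Module.Basis.repr_self, smul_eq_mul]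
  simp

lemma eq_coord (z : ℂ) : z = (coord₁ L z : ℂ) * L.ω₁ + (coord₂ L z : ℂ) * L.ω₂ := by
  have h := L.basis.sum_repr z
  rw [Fin.sum_univ_two] at h
  simpa [coord₁, coord₂] using h.symm

lemma nu_nonneg (z : ℂ) : 0 ≤ nu L z := le_max_of_le_left (abs_nonneg _)

lemma nu_sub_le (z w : ℂ) : nu L (z - w) ≤ nu L z + nu L w := by
  refine max_le ?_ ?_
  · rw [map_sub]
    exact (abs_sub _ _).trans (add_le_add (le_max_left _ _) (le_max_left _ _))
  · rw [map_sub]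
    exact (abs_sub _ _).trans (add_le_add (le_max_right _ _) (le_max_right _ _))

lemma nu_le_add (z w : ℂ) : nu L z ≤ nu L (z - w) + nu L w := by
  refine max_le ?_ ?_
  · have : coord₁ L z = coord₁ L (z - w) + coord₁ L w := by rw [← map_add, sub_add_cancel]
    rw [this]
    exact (abs_add_le _ _).trans (add_le_add (le_max_left _ _) (le_max_left _ _))
  · have : coord₂ L z = coord₂ L (z - w) + coord₂ L w := by rw [← map_add, sub_add_cancel]
    rw [this]
    exact (abs_add_le _ _).trans (add_le_add (le_max_right _ _) (le_max_right _ _))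

lemma norm_le_nu (z : ℂ) : ‖z‖ ≤ (‖L.ω₁‖ + ‖L.ω₂‖) * nu L z := by
  conv_lhs => rw [eq_coord L z]
  refine (norm_add_le _ _).trans ?_
  rw [norm_mul, norm_mul, Complex.norm_real, Complex.norm_real, Real.norm_eq_abs,
    Real.norm_eq_abs, add_mul, mul_comm ‖L.ω₁‖, mul_comm ‖L.ω₂‖]
  gcongr
  · exact le_max_left _ _
  · exact le_max_right _ _

lemma exists_nu_le : ∃ C : ℝ, 0 < C ∧ ∀ z, nu L z ≤ C * ‖z‖ := by
  refine ⟨‖LinearMap.toContinuousLinearMap (coord₁ L)‖ +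
    ‖LinearMap.toContinuousLinearMap (coord₂ L)‖ + 1, by positivity, fun z => ?_⟩
  have h1 := (LinearMap.toContinuousLinearMap (coord₁ L)).le_opNorm z
  have h2 := (LinearMap.toContinuousLinearMap (coord₂ L)).le_opNorm z
  simp only [LinearMap.coe_toContinuousLinearMap', Real.norm_eq_abs] at h1 h2
  have h3 := norm_nonneg z
  refine max_le ?_ ?_
  · nlinarith [norm_nonneg (LinearMap.toContinuousLinearMap (coord₂ L))]
  · nlinarith [norm_nonneg (LinearMap.toContinuousLinearMap (coord₁ L))]

lemma continuous_nu : Continuous (nu L) := by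
  unfold nu
  exact ((coord₁ L).continuous_of_finiteDimensional.abs).max
    ((coord₂ L).continuous_of_finiteDimensional.abs)

lemma nu_lattice_pt (x y : ℝ) : nu L ((x : ℂ) * L.ω₁ + (y : ℂ) * L.ω₂) = max |x| |y| := by
  rw [nu, (coord_add L x y).1, (coord_add L x y).2]

lemma exists_of_mem_lattice {z : ℂ} (hz : z ∈ L.lattice) :
    ∃ m n : ℤ, z = (m : ℂ) * L.ω₁ + (n : ℂ) * L.ω₂ := by
  obtain ⟨m, n, h⟩ := PeriodPair.mem_lattice.1 hz
  exact ⟨m, n, h.symm⟩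

/-- A number with a coordinate in `1/2 + ℤ` is not a lattice point. -/
lemma notMem_lattice_of_coord {z : ℂ} (m : ℤ)
    (h : coord₁ L z = m + 1 / 2 ∨ coord₂ L z = m + 1 / 2) : z ∉ L.lattice := by
  intro hz
  obtain ⟨a, b, rfl⟩ := exists_of_mem_lattice L hz
  have h1 := coord_add L (a : ℝ) (b : ℝ)
  push_cast at h1
  rw [h1.1, h1.2] at h
  rcases h with h | h
  · have : ((2 * a : ℤ) : ℝ) = ((2 * m + 1 : ℤ) : ℝ) := by push_cast; linarith
    have := Int.cast_injective (α := ℝ) this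
    omega
  · have : ((2 * b : ℤ) : ℝ) = ((2 * m + 1 : ℤ) : ℝ) := by push_cast; linarith
    have := Int.cast_injective (α := ℝ) this
    omega

/-- On the midlines of the fundamental parallelogram `℘` and `ζ` are bounded. -/
lemma exists_bound_midlines : ∃ M : ℝ, 0 < M ∧ ∀ x ∈ Set.Icc (0 : ℝ) 1, ∀ w : ℂ,
    (w = ((1 / 2 : ℝ) : ℂ) * L.ω₁ + (x : ℂ) * L.ω₂ ∨
      w = (x : ℂ) * L.ω₁ + ((1 / 2 : ℝ) : ℂ) * L.ω₂) →
    w ∉ L.lattice ∧ ‖L.weierstrassP w‖ ≤ M ∧ ‖zeta L w‖ ≤ M := by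
  have hmid : ∀ x : ℝ, ∀ w : ℂ, (w = ((1 / 2 : ℝ) : ℂ) * L.ω₁ + (x : ℂ) * L.ω₂ ∨
      w = (x : ℂ) * L.ω₁ + ((1 / 2 : ℝ) : ℂ) * L.ω₂) → w ∉ L.lattice := by
    intro x w hw
    refine notMem_lattice_of_coord L 0 ?_
    rcases hw with rfl | rfl
    · left; rw [(coord_add L _ _).1]; simp
    · right; rw [(coord_add L _ _).2]; simp
  have key : ∀ f : ℂ → ℂ, (∀ z ∉ L.lattice, ContinuousAt f z) → ∃ M : ℝ,
      ∀ x ∈ Set.Icc (0 : ℝ) 1, ‖f (((1 / 2 : ℝ) : ℂ) * L.ω₁ + (x : ℂ) * L.ω₂)‖ ≤ M ∧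
        ‖f ((x : ℂ) * L.ω₁ + ((1 / 2 : ℝ) : ℂ) * L.ω₂)‖ ≤ M := by
    intro f hf
    obtain ⟨M₁, h₁⟩ := (isCompact_Icc (a := (0 : ℝ)) (b := 1)).exists_bound_of_continuousOn
      (f := fun x : ℝ => f (((1 / 2 : ℝ) : ℂ) * L.ω₁ + (x : ℂ) * L.ω₂)) (fun x _ =>
        ((hf _ (hmid x _ (Or.inl rfl))).comp (f := fun x : ℝ =>
          ((1 / 2 : ℝ) : ℂ) * L.ω₁ + (x : ℂ) * L.ω₂) (by fun_prop)).continuousWithinAt)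
    obtain ⟨M₂, h₂⟩ := (isCompact_Icc (a := (0 : ℝ)) (b := 1)).exists_bound_of_continuousOn
      (f := fun x : ℝ => f ((x : ℂ) * L.ω₁ + ((1 / 2 : ℝ) : ℂ) * L.ω₂)) (fun x _ =>
        ((hf _ (hmid x _ (Or.inr rfl))).comp (f := fun x : ℝ =>
          (x : ℂ) * L.ω₁ + ((1 / 2 : ℝ) : ℂ) * L.ω₂) (by fun_prop)).continuousWithinAt)
    exact ⟨max M₁ M₂, fun x hx => ⟨(h₁ x hx).trans (le_max_left _ _),
      (h₂ x hx).trans (le_max_right _ _)⟩⟩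
  obtain ⟨M₁, h₁⟩ := key L.weierstrassP fun z hz => (analyticAt_weierstrassP' L hz).continuousAt
  obtain ⟨M₂, h₂⟩ := key (zeta L) fun z hz => (analyticAt_zeta L hz).continuousAt
  refine ⟨max (max M₁ M₂) 1, by positivity, fun x hx w hw => ⟨hmid x w hw, ?_, ?_⟩⟩
  · refine le_trans ?_ ((le_max_left M₁ M₂).trans (le_max_left _ _))
    rcases hw with rfl | rfl
    exacts [(h₁ x hx).1, (h₁ x hx).2]
  · refine le_trans ?_ ((le_max_right M₁ M₂).trans (le_max_left _ _))
    rcases hw with rfl | rfl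
    exacts [(h₂ x hx).1, (h₂ x hx).2]

/-- On the boundary of the parallelogram `nu < N + 1 / 2` the function `℘` is bounded and `ζ` grows
at most linearly with `N`. -/
lemma exists_bound_frontier : ∃ M : ℝ, 1 ≤ M ∧ ∀ N : ℕ, 1 ≤ N → ∀ z, nu L z = N + 1 / 2 →
    z ∉ L.lattice ∧ ‖z‖ ≤ M * N ∧ ‖L.weierstrassP z‖ ≤ M * N ∧ ‖zeta L z‖ ≤ M * N := by
  obtain ⟨M, hM, hbd⟩ := exists_bound_midlines L
  refine ⟨1 + 2 * (‖L.ω₁‖ + ‖L.ω₂‖) + M + 2 * (‖eta₁ L‖ + ‖eta₂ L‖), ?_, fun N hN z hz => ?_⟩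
  · have := norm_nonneg L.ω₁
    have := norm_nonneg L.ω₂
    have := norm_nonneg (eta₁ L)
    have := norm_nonneg (eta₂ L)
    linarith
  have hN' : (1 : ℝ) ≤ N := by exact_mod_cast hN
  have hfl : ∀ a : ℝ, |a| ≤ N + 1 / 2 → |((⌊a⌋ : ℤ) : ℝ)| ≤ N + 1 := by
    intro a ha
    have h1 : ⌊a⌋ ≤ (N : ℤ) := by
      have : ⌊a⌋ < (N : ℤ) + 1 := by
        rw [Int.floor_lt]; push_cast; linarith [(abs_le.1 ha).2]
      omega
    have h2 : -((N : ℤ) + 1) ≤ ⌊a⌋ := by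
      rw [Int.le_floor]; push_cast; linarith [(abs_le.1 ha).1]
    rw [abs_le]
    constructor
    · exact_mod_cast h2
    · exact_mod_cast h1.trans (by omega)
  have hfr : ∀ a : ℝ, |a| = N + 1 / 2 → a - ((⌊a⌋ : ℤ) : ℝ) = 1 / 2 := by
    intro a ha
    rcases abs_choice a with h | h
    · have : ⌊a⌋ = (N : ℤ) := by
        rw [Int.floor_eq_iff]; push_cast; constructor <;> linarith
      rw [this]; push_cast; linarith
    · have : ⌊a⌋ = -(N : ℤ) - 1 := by
        rw [Int.floor_eq_iff]; push_cast; constructor <;> linarith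
      rw [this]; push_cast; linarith
  set a := coord₁ L z with ha
  set b := coord₂ L z with hb
  have ha1 : |a| ≤ N + 1 / 2 := hz ▸ le_max_left _ _
  have hb1 : |b| ≤ N + 1 / 2 := hz ▸ le_max_right _ _
  set w : ℂ := ((a - ((⌊a⌋ : ℤ) : ℝ) : ℝ) : ℂ) * L.ω₁ + ((b - ((⌊b⌋ : ℤ) : ℝ) : ℝ) : ℂ) * L.ω₂
    with hw
  have hzw : z = w + (((⌊a⌋ : ℤ) : ℂ) * L.ω₁ + ((⌊b⌋ : ℤ) : ℂ) * L.ω₂) := by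
    rw [hw, eq_coord L z, ← ha, ← hb]
    push_cast
    ring
  have hfrac : ∀ a : ℝ, a - ((⌊a⌋ : ℤ) : ℝ) ∈ Set.Icc (0 : ℝ) 1 := fun a =>
    ⟨by linarith [Int.floor_le a], by linarith [Int.lt_floor_add_one a]⟩
  have hmain : w ∉ L.lattice ∧ ‖L.weierstrassP w‖ ≤ M ∧ ‖zeta L w‖ ≤ M := by
    have hab : |a| = N + 1 / 2 ∨ |b| = N + 1 / 2 := by
      rw [← hz, nu, ← ha, ← hb]
      rcases max_choice |a| |b| with h | h
      · left; exact h.symm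
      · right; exact h.symm
    rcases hab with h | h
    · exact hbd _ (hfrac b) w (Or.inl (by rw [hw, hfr a h]))
    · exact hbd _ (hfrac a) w (Or.inr (by rw [hw, hfr b h]))
  obtain ⟨hwl, hwp, hwz⟩ := hmain
  have e1 := norm_nonneg L.ω₁
  have e2 := norm_nonneg L.ω₂
  have e3 := norm_nonneg (eta₁ L)
  have e4 := norm_nonneg (eta₂ L)
  refine ⟨?_, ?_, ?_, ?_⟩
  · rw [hzw]
    exact add_lattice_notMem L hwl (lattice_pt_mem L _ _)
  · refine (norm_le_nu L z).trans ?_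
    rw [hz]
    nlinarith [mul_nonneg hM.le (by linarith : (0 : ℝ) ≤ N), mul_nonneg e1 (by linarith : (0 : ℝ) ≤ N - 1),
      mul_nonneg e2 (by linarith : (0 : ℝ) ≤ N - 1)]
  · rw [hzw, weierstrassP_add]
    refine hwp.trans ?_
    nlinarith
  · rw [hzw, zeta_add L _ _ hwl]
    refine (norm_add_le _ _).trans ?_
    have h1 : ‖((⌊a⌋ : ℤ) : ℂ) * eta₁ L + ((⌊b⌋ : ℤ) : ℂ) * eta₂ L‖ ≤
        (N + 1) * ‖eta₁ L‖ + (N + 1) * ‖eta₂ L‖ := by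
      refine (norm_add_le _ _).trans ?_
      rw [norm_mul, norm_mul, Complex.norm_intCast, Complex.norm_intCast]
      gcongr
      · exact hfl a ha1
      · exact hfl b hb1
    nlinarith [mul_nonneg hM.le (by linarith : (0 : ℝ) ≤ N - 1), mul_nonneg e3 (by linarith : (0 : ℝ) ≤ N - 1),
      mul_nonneg e4 (by linarith : (0 : ℝ) ≤ N - 1), mul_nonneg e1 (by linarith : (0 : ℝ) ≤ N),
      mul_nonneg e2 (by linarith : (0 : ℝ) ≤ N)]

end geometry
end PeriodTrdeg

/-! ### The analytic estimate -/

namespace PeriodTrdeg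

section estimate
open Filter Topology Finset

variable (L : PeriodPair)

lemma sq_mul_weierstrassP {x : ℂ} (hx : x ∈ L.lattice) : ∃ k, AnalyticAt ℂ k x ∧
    (fun z => (z - x) ^ 2 * L.weierstrassP z) =ᶠ[𝓝[≠] x] k := by
  refine ⟨fun z => (z - x) ^ 2 * (L.weierstrassPExcept x z - 1 / x ^ 2) + 1, ?_, ?_⟩
  · have h1 : AnalyticAt ℂ (L.weierstrassPExcept x) x :=
      (L.differentiableOn_weierstrassPExcept x).analyticAt
        (L.compl_lattice_sdiff_singleton_mem_nhds x)
    exact (((analyticAt_id.sub analyticAt_const).pow 2).mul (h1.sub analyticAt_const)).add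
      analyticAt_const
  · filter_upwards [self_mem_nhdsWithin] with z hz
    have hzx : z - x ≠ 0 := sub_ne_zero.2 hz
    rw [← L.weierstrassPExcept_add ⟨x, hx⟩ z]
    simp only
    have : (z - x) ^ 2 * (1 / (z - x) ^ 2) = 1 := mul_one_div_cancel (pow_ne_zero 2 hzx)
    linear_combination this

lemma mul_zeta {x : ℂ} (hx : x ∈ L.lattice) : ∃ k, AnalyticAt ℂ k x ∧
    (fun z => (z - x) * zeta L z) =ᶠ[𝓝[≠] x] k := by
  refine ⟨fun z => (z - x) * (zetaExcept L x z + 1 / x + z * (1 / x ^ 2)) + 1, ?_, ?_⟩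
  · exact ((analyticAt_id.sub analyticAt_const).mul (((analyticAt_zetaExcept L x).add
      analyticAt_const).add (analyticAt_id.mul analyticAt_const))).add analyticAt_const
  · filter_upwards [self_mem_nhdsWithin] with z hz
    have hzx : z - x ≠ 0 := sub_ne_zero.2 hz
    rw [← zetaExcept_add L hx z, zetaTerm]
    have : (z - x) * (1 / (z - x)) = 1 := mul_one_div_cancel hzx
    linear_combination this

/-- The poles of the auxiliary function have order at most `3 * Λ`. -/
lemma pow_mul_auxF (Λ : ℕ) (P : ℕ → ℕ → ℕ → ℂ) {x : ℂ} (hx : x ∈ L.lattice) :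
    ∃ k, AnalyticAt ℂ k x ∧ (fun z => (z - x) ^ (3 * Λ) * auxF L Λ P z) =ᶠ[𝓝[≠] x] k := by
  obtain ⟨p, hp, hp'⟩ := sq_mul_weierstrassP L hx
  obtain ⟨q, hq, hq'⟩ := mul_zeta L hx
  refine ⟨fun z => ∑ i ∈ range Λ, ∑ j ∈ range Λ, ∑ k ∈ range Λ,
    P i j k * z ^ i * ((z - x) ^ (3 * Λ - 2 * j - k) * p z ^ j * q z ^ k), ?_, ?_⟩
  · refine Finset.analyticAt_fun_sum _ fun i _ => Finset.analyticAt_fun_sum _ fun j _ =>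
      Finset.analyticAt_fun_sum _ fun k _ => ?_
    exact (analyticAt_const.mul (analyticAt_id.pow _)).mul
      ((((analyticAt_id.sub analyticAt_const).pow _).mul (hp.pow _)).mul (hq.pow _))
  · filter_upwards [hp', hq'] with z h1 h2
    rw [auxF]
    simp only [mul_sum]
    refine sum_congr rfl fun i _ => sum_congr rfl fun j hj => sum_congr rfl fun k hk => ?_
    rw [← h1, ← h2]
    have h3 : (z - x) ^ (3 * Λ) = (z - x) ^ (3 * Λ - 2 * j - k) * ((z - x) ^ 2) ^ j *
        (z - x) ^ k := by
      rw [← pow_mul, ← pow_add, ← pow_add]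
      congr 1
      have := mem_range.1 hj
      have := mem_range.1 hk
      omega
    rw [h3, mul_pow ((z - x) ^ 2), mul_pow (z - x)]
    generalize (z - x) ^ (3 * Λ - 2 * j - k) = a
    generalize z - x = b
    ring

/-- The translates `ω₁ / 2 + m * ω₁ + n * ω₂` of the half period. -/
noncomputable def gridPt (m n : ℤ) : ℂ := L.ω₁ / 2 + (m * L.ω₁ + n * L.ω₂)

lemma gridPt_eq (m n : ℤ) :
    gridPt L m n = ((m + 1 / 2 : ℝ) : ℂ) * L.ω₁ + ((n : ℝ) : ℂ) * L.ω₂ := by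
  rw [gridPt]
  push_cast
  ring

lemma coord_gridPt (m n : ℤ) : coord₁ L (gridPt L m n) = m + 1 / 2 ∧
    coord₂ L (gridPt L m n) = n := by
  rw [gridPt_eq]
  exact coord_add L _ _

lemma gridPt_notMem (m n : ℤ) : gridPt L m n ∉ L.lattice :=
  notMem_lattice_of_coord L m (Or.inl (coord_gridPt L m n).1)

lemma gridPt_inj {m n m' n' : ℤ} (h : gridPt L m n = gridPt L m' n') : m = m' ∧ n = n' := by
  have h1 := coord_gridPt L m n
  rw [h, (coord_gridPt L m' n').1, (coord_gridPt L m' n').2] at h1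
  refine ⟨?_, ?_⟩
  · have := h1.1
    have h2 : (m' : ℝ) = m := by linarith
    exact_mod_cast h2.symm
  · exact_mod_cast h1.2.symm

lemma norm_auxF_le (Λ : ℕ) (P : ℕ → ℕ → ℕ → ℂ) {z : ℂ} {H B : ℝ} (hB : 1 ≤ B) (hH : 0 ≤ H)
    (hP : ∀ i < Λ, ∀ j < Λ, ∀ k < Λ, ‖P i j k‖ ≤ H)
    (h1 : ‖z‖ ≤ B) (h2 : ‖L.weierstrassP z‖ ≤ B) (h3 : ‖zeta L z‖ ≤ B) :
    ‖auxF L Λ P z‖ ≤ Λ ^ 3 * H * B ^ (3 * Λ) := by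
  rw [auxF]
  have hterm : ∀ i ∈ range Λ, ∀ j ∈ range Λ, ∀ k ∈ range Λ,
      ‖P i j k * z ^ i * L.weierstrassP z ^ j * zeta L z ^ k‖ ≤ H * B ^ (3 * Λ) := by
    intro i hi j hj k hk
    rw [mem_range] at hi hj hk
    rw [norm_mul, norm_mul, norm_mul, norm_pow, norm_pow, norm_pow]
    calc _ ≤ H * B ^ i * B ^ j * B ^ k := by
          gcongr
          exact hP i hi j hj k hk
      _ = H * B ^ (i + j + k) := by ring
      _ ≤ _ := by
          gcongr
          omega
  calc _ ≤ ∑ i ∈ range Λ, ∑ j ∈ range Λ, ∑ k ∈ range Λ, H * B ^ (3 * Λ) :=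
        norm_sum_le_of_le _ fun i hi => norm_sum_le_of_le _ fun j hj =>
          norm_sum_le_of_le _ fun k hk => hterm i hi j hj k hk
    _ = _ := by
        simp only [sum_const, card_range, nsmul_eq_mul]
        ring

/-- The **analytic upper bound**: at a point `gridPt m₀ n₀` near a grid of zeros of order `T`, the
first non-vanishing derivative of the auxiliary function is small. -/
lemma analytic_estimate : ∃ M : ℕ, 1 ≤ M ∧ ∀ (Λ s T t : ℕ) (P : ℕ → ℕ → ℕ → ℂ) (H : ℝ)
    (m₀ n₀ : ℕ), 1 ≤ Λ → 1 ≤ s → 0 ≤ H → (∀ i < Λ, ∀ j < Λ, ∀ k < Λ, ‖P i j k‖ ≤ H) →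
    (∀ m < s, ∀ n < s, ∀ t' < T, iteratedDeriv t' (auxF L Λ P) (gridPt L (m : ℤ) (n : ℤ)) = 0) →
    m₀ ≤ s → n₀ ≤ s → t < T →
    (∀ t' < t, iteratedDeriv t' (auxF L Λ P) (gridPt L (m₀ : ℤ) (n₀ : ℤ)) = 0) →
    ‖iteratedDeriv t (auxF L Λ P) (gridPt L (m₀ : ℤ) (n₀ : ℤ))‖ / t.factorial ≤
      Λ ^ 3 * H * ((M : ℝ) * s) ^ (M * Λ * s ^ 2) * Real.exp (-((T : ℝ) * s ^ 2)) := by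
  classical
  obtain ⟨M₁, hM₁, hfront⟩ := exists_bound_frontier L
  obtain ⟨C₂, hC₂, hnu⟩ := exists_nu_le L
  set C₁ : ℝ := ‖L.ω₁‖ + ‖L.ω₂‖ with hC₁
  have hC₁0 : 0 ≤ C₁ := by positivity
  obtain ⟨K, hK⟩ := exists_nat_ge (C₂ * (Real.exp 1 * C₁ + 1) + 2)
  have hK2 : 2 ≤ K := by
    have : (2 : ℝ) ≤ K := le_trans (by have := Real.exp_pos 1; nlinarith [mul_nonneg hC₂.le (mul_nonneg this.le hC₁0)]) hK
    exact_mod_cast this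
  obtain ⟨M₂, hM₂⟩ := exists_nat_ge (max (M₁ * K) (6 * C₁ * C₂ * K))
  have hM₂K : 1 ≤ M₂ := by
    have hK1 : (1 : ℝ) ≤ K := by exact_mod_cast (by omega : 1 ≤ K)
    have : (1 : ℝ) ≤ M₂ := (one_le_mul_of_one_le_of_one_le hM₁ hK1).trans
      ((le_max_left _ _).trans hM₂)
    exact_mod_cast this
  refine ⟨max M₂ (3 + 27 * K ^ 2), le_max_of_le_left hM₂K, ?_⟩
  intro Λ s T t P H m₀ n₀ hΛ hs hH hP hvan hm₀ hn₀ ht hlow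
  set F := auxF L Λ P with hF
  set z₀ := gridPt L (m₀ : ℤ) (n₀ : ℤ) with hz₀
  have hs' : (1 : ℝ) ≤ s := by exact_mod_cast hs
  have hK' : (2 : ℝ) ≤ K := by exact_mod_cast hK2
  -- Inside the box all derivatives of order less than `T` vanish.
  by_cases hin : m₀ < s ∧ n₀ < s
  · rw [hvan m₀ hin.1 n₀ hin.2 t ht]
    simp only [norm_zero, zero_div]
    positivity
  set grid : Finset ℂ := (range s ×ˢ range s).image fun p => gridPt L (p.1 : ℤ) (p.2 : ℤ) with hgrid
  have hz₀grid : z₀ ∉ grid := by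
    intro h
    simp only [hgrid, mem_image, mem_product, mem_range] at h
    obtain ⟨p, hp, hpe⟩ := h
    obtain ⟨h1, h2⟩ := gridPt_inj L hpe
    exact hin ⟨by omega, by omega⟩
  have hcard : #grid = s ^ 2 := by
    rw [hgrid, card_image_of_injOn, card_product, card_range, sq]
    intro p _ q _ h
    obtain ⟨h1, h2⟩ := gridPt_inj L h
    exact Prod.ext (by exact_mod_cast h1) (by exact_mod_cast h2)
  -- The boundary is so far away that every zero contributes a factor less than `exp (-1)`.
  set N : ℕ := K * s with hN
  have hNK : (N : ℝ) = K * s := by push_cast [hN]; ring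
  have hN1 : 1 ≤ N := Nat.one_le_iff_ne_zero.2 (by positivity)
  set V : Finset ℂ := ((Icc (-(N : ℤ)) N) ×ˢ (Icc (-(N : ℤ)) N)).image
    fun p => (p.1 : ℂ) * L.ω₁ + (p.2 : ℂ) * L.ω₂ with hV
  have hVcard : #V ≤ (2 * N + 1) ^ 2 := by
    refine card_image_le.trans ?_
    rw [card_product, Int.card_Icc, sq]
    apply le_of_eq
    congr 1 <;> omega
  have hVnu : ∀ v ∈ V, v ∈ L.lattice ∧ nu L v ≤ N := by
    intro v hv
    simp only [hV, mem_image, mem_product, mem_Icc] at hv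
    obtain ⟨⟨a, b⟩, ⟨⟨h1, h2⟩, h3, h4⟩, rfl⟩ := hv
    refine ⟨lattice_pt_mem L a b, ?_⟩
    have := nu_lattice_pt L (a : ℝ) (b : ℝ)
    push_cast at this
    simp only at h1 h2 h3 h4 ⊢
    rw [this]
    refine max_le (abs_le.2 ⟨?_, ?_⟩) (abs_le.2 ⟨?_, ?_⟩) <;> exact_mod_cast (by assumption)
  have hgnu : ∀ m n : ℕ, m ≤ s → n ≤ s → nu L (gridPt L (m : ℤ) (n : ℤ)) ≤ s + 1 / 2 := by
    intro m n hm hn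
    have hm' : (m : ℝ) ≤ s := by exact_mod_cast hm
    have hn' : (n : ℝ) ≤ s := by exact_mod_cast hn
    rw [nu, (coord_gridPt L _ _).1, (coord_gridPt L _ _).2]
    push_cast
    rw [abs_of_nonneg (by positivity), abs_of_nonneg (by positivity)]
    exact max_le (by linarith) (by linarith)
  set W : Finset ℂ := insert z₀ grid with hWdef
  have hWpt : ∀ w ∈ W, ∃ m n : ℕ, m ≤ s ∧ n ≤ s ∧ w = gridPt L (m : ℤ) (n : ℤ) := by
    intro w hw
    rcases mem_insert.1 hw with rfl | hw
    · exact ⟨m₀, n₀, hm₀, hn₀, rfl⟩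
    · simp only [hgrid, mem_image, mem_product, mem_range] at hw
      obtain ⟨p, hp, rfl⟩ := hw
      exact ⟨p.1, p.2, hp.1.le, hp.2.le, rfl⟩
  set μ : ℂ → ℕ := fun w => if w = z₀ then t else T with hμ
  have hμ₀ : μ z₀ = t := if_pos rfl
  have hμs : ∑ w ∈ W.erase z₀, μ w = T * s ^ 2 := by
    rw [hWdef, erase_insert hz₀grid, ← hcard, mul_comm, ← smul_eq_mul, ← sum_const]
    exact sum_congr rfl fun w hw => if_neg fun h : w = z₀ => hz₀grid (h ▸ hw)
  have hμW : ∑ w ∈ W, μ w = t + T * s ^ 2 := by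
    rw [← add_sum_erase W μ (mem_insert_self _ _), hμ₀, hμs]
  set U : Set ℂ := {z | nu L z < N + 1 / 2} with hU
  have hclosure : ∀ z ∈ closure U, nu L z ≤ N + 1 / 2 := fun z hz =>
    closure_lt_subset_le (continuous_nu L) continuous_const hz
  have hfrontier : ∀ z ∈ frontier U, nu L z = N + 1 / 2 := fun z hz =>
    frontier_lt_subset_eq (continuous_nu L) continuous_const hz
  have hUb : Bornology.IsBounded U := by
    rw [isBounded_iff_forall_norm_le]
    refine ⟨C₁ * (N + 1 / 2), fun z hz => (norm_le_nu L z).trans ?_⟩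
    exact mul_le_mul_of_nonneg_left (le_of_lt hz) hC₁0
  have hz₀U : z₀ ∈ closure U := by
    refine subset_closure (lt_of_le_of_lt (hgnu m₀ n₀ hm₀ hn₀) ?_)
    rw [hNK]
    nlinarith
  have hlatV : ∀ x ∈ closure U, x ∈ L.lattice → x ∈ V := by
    intro x hx hxl
    obtain ⟨a, b, rfl⟩ := exists_of_mem_lattice L hxl
    have h1 := hclosure _ hx
    have h2 := nu_lattice_pt L (a : ℝ) (b : ℝ)
    push_cast at h2
    rw [h2] at h1
    have h3 : ∀ a : ℤ, |(a : ℝ)| ≤ N + 1 / 2 → -(N : ℤ) ≤ a ∧ a ≤ N := by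
      intro a ha
      have ha' : |(a : ℝ)| < N + 1 := by linarith
      have : |a| < (N : ℤ) + 1 := by exact_mod_cast ha'
      rw [abs_lt] at this
      omega
    simp only [hV, mem_image, mem_product, mem_Icc]
    exact ⟨(a, b), ⟨h3 a ((le_max_left _ _).trans h1), h3 b ((le_max_right _ _).trans h1)⟩, rfl⟩
  set r : ℝ := (K - 1) * s / C₂ with hr
  have hr1 : 1 ≤ r ∧ Real.exp 1 * (C₁ * s) ≤ r := by
    rw [hr, le_div_iff₀ hC₂, le_div_iff₀ hC₂]
    have h0 := Real.exp_pos 1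
    have h1 : C₂ * (Real.exp 1 * C₁ + 1) ≤ K - 1 := by linarith
    have h2 := mul_le_mul_of_nonneg_right h1 (by linarith : (0 : ℝ) ≤ s)
    have h3 : 0 ≤ C₂ * (Real.exp 1 * C₁) * s := by positivity
    constructor
    · nlinarith
    · nlinarith
  have hr0 : 0 < r := by linarith [hr1.1]
  set BB : ℝ := Λ ^ 3 * H * (M₁ * N) ^ (3 * Λ) with hBB
  have hM₁N : 1 ≤ M₁ * N := one_le_mul_of_one_le_of_one_le hM₁ (by exact_mod_cast hN1)
  have main := max_modulus (U := U) hUb F V W (3 * Λ) μ z₀ (mem_insert_self _ _) hz₀U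
    (fun x hx hxV => analyticAt_auxF L Λ P fun h => hxV (hlatV x hx h))
    (fun x hx => pow_mul_auxF L Λ P (hVnu x hx).1)
    (fun x hx => by
      obtain ⟨m, n, -, -, rfl⟩ := hWpt x hx
      refine ⟨analyticAt_auxF L Λ P (gridPt_notMem L _ _), fun i hi => ?_⟩
      rcases mem_insert.1 hx with h | h
      · rw [h, hμ₀] at hi
        rw [h]
        exact hlow i hi
      · have hne : gridPt L (m : ℤ) (n : ℤ) ≠ z₀ := fun h' => hz₀grid (h' ▸ h)
        simp only [hμ, if_neg hne] at hi
        simp only [hgrid, mem_image, mem_product, mem_range] at h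
        obtain ⟨p, hp, hpe⟩ := h
        rw [← hpe]
        exact hvan _ hp.1 _ hp.2 i hi)
    BB (3 * C₁ * N) r (1 / (2 * C₂)) (C₁ * s) hr0 (by positivity)
    (fun z hz => by
      have hzn := hfrontier z hz
      obtain ⟨h1, h2, h3, h4⟩ := hfront N hN1 z hzn
      refine ⟨fun h => h1 (hVnu z h).1, norm_auxF_le L Λ P hM₁N hH hP h2 h3 h4, ?_, ?_⟩
      · intro v hv
        refine (norm_le_nu L _).trans ?_
        rw [mul_right_comm, mul_comm]
        refine mul_le_mul_of_nonneg_right ?_ hC₁0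
        have hN1' : (1 : ℝ) ≤ N := by exact_mod_cast hN1
        linarith [nu_sub_le L z v, (hVnu v hv).2]
      · intro w hw
        obtain ⟨m, n, hm, hn, rfl⟩ := hWpt w hw
        rw [hr, div_le_iff₀ hC₂, mul_comm ‖_‖]
        refine le_trans ?_ (hnu _)
        have h5 := nu_le_add L z (gridPt L (m : ℤ) (n : ℤ))
        have h6 := hgnu m n hm hn
        rw [hzn] at h5
        linarith)
    (fun v hv => by
      rw [div_le_iff₀ (by positivity)]
      obtain ⟨a, b, rfl⟩ := exists_of_mem_lattice L (hVnu v hv).1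
      have h1 := hnu (z₀ - ((a : ℂ) * L.ω₁ + (b : ℂ) * L.ω₂))
      have h2 : z₀ - ((a : ℂ) * L.ω₁ + (b : ℂ) * L.ω₂) = gridPt L (m₀ - a) (n₀ - b) := by
        rw [hz₀, gridPt, gridPt]; push_cast; ring
      rw [h2] at h1 ⊢
      have h3 : (1 : ℝ) / 2 ≤ nu L (gridPt L (m₀ - a) (n₀ - b)) := by
        refine le_trans ?_ (le_max_left _ _)
        rw [(coord_gridPt L _ _).1]
        generalize (m₀ : ℤ) - a = q
        rcases le_or_gt 0 q with h | h
        · have : (0 : ℝ) ≤ q := by exact_mod_cast h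
          rw [abs_of_nonneg (by linarith)]; linarith
        · have : (q : ℝ) ≤ -1 := by exact_mod_cast (by omega : q ≤ -1)
          rw [abs_of_nonpos (by linarith)]; linarith
      linarith)
    (fun w hw _ => by
      obtain ⟨m, n, hm, hn, rfl⟩ := hWpt w hw
      refine (norm_le_nu L _).trans (mul_le_mul_of_nonneg_left ?_ hC₁0)
      have h2 : z₀ - gridPt L (m : ℤ) (n : ℤ) =
          (((m₀ : ℝ) - m : ℝ) : ℂ) * L.ω₁ + (((n₀ : ℝ) - n : ℝ) : ℂ) * L.ω₂ := by
        rw [hz₀, gridPt, gridPt]; push_cast; ring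
      rw [h2, nu_lattice_pt]
      have e1 : (m : ℝ) ≤ s := by exact_mod_cast hm
      have e2 : (n : ℝ) ≤ s := by exact_mod_cast hn
      have e3 : (m₀ : ℝ) ≤ s := by exact_mod_cast hm₀
      have e4 : (n₀ : ℝ) ≤ s := by exact_mod_cast hn₀
      have f1 : (0 : ℝ) ≤ m := by positivity
      have f2 : (0 : ℝ) ≤ n := by positivity
      have f3 : (0 : ℝ) ≤ m₀ := by positivity
      have f4 : (0 : ℝ) ≤ n₀ := by positivity
      exact max_le (abs_le.2 ⟨by linarith, by linarith⟩) (abs_le.2 ⟨by linarith, by linarith⟩))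
    (by positivity) (by positivity)
  rw [hμ₀, hμs, hμW] at main
  set q := T * s ^ 2 with hq
  set e := 3 * Λ * #V with he
  set X := ‖iteratedDeriv t F z₀‖ / t.factorial with hX
  have hM₂s : (1 : ℝ) ≤ M₂ * s :=
    one_le_mul_of_one_le_of_one_le (by exact_mod_cast hM₂K) hs'
  have hMN : M₁ * N ≤ M₂ * s := by
    rw [hNK, ← mul_assoc]
    exact mul_le_mul_of_nonneg_right ((le_max_left _ _).trans hM₂) (by linarith)
  have hRN : 6 * C₁ * C₂ * N ≤ M₂ * s := by
    rw [hNK, ← mul_assoc]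
    exact mul_le_mul_of_nonneg_right ((le_max_right _ _).trans hM₂) (by linarith)
  have h1 : X ≤ BB * (6 * C₁ * C₂ * N) ^ e * ((C₁ * s) ^ q / r ^ (t + q)) := by
    have h2 : (6 * C₁ * C₂ * N) ^ e * (1 / (2 * C₂)) ^ e = (3 * C₁ * N) ^ e := by
      rw [← mul_pow]
      congr 1
      field_simp
      ring
    refine le_of_mul_le_mul_right ?_ (show 0 < (1 / (2 * C₂)) ^ e by positivity)
    refine main.trans (le_of_eq ?_)
    rw [← h2]
    ring
  have h3 : (C₁ * s) ^ q / r ^ (t + q) ≤ Real.exp (-((T : ℝ) * s ^ 2)) := by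
    have h4 : Real.exp (-((T : ℝ) * s ^ 2)) = (Real.exp 1 ^ q)⁻¹ := by
      rw [← Real.exp_nat_mul, ← Real.exp_neg, hq]
      push_cast
      ring_nf
    rw [h4, div_le_iff₀ (by positivity), inv_mul_eq_div, le_div_iff₀ (by positivity)]
    calc (C₁ * s) ^ q * Real.exp 1 ^ q = (Real.exp 1 * (C₁ * s)) ^ q := by rw [← mul_pow]; ring
      _ ≤ r ^ q := pow_le_pow_left₀ (by positivity) hr1.2 _
      _ ≤ r ^ (t + q) := pow_le_pow_right₀ hr1.1 (by omega)
  have hexp : 3 * Λ + e ≤ max M₂ (3 + 27 * K ^ 2) * Λ * s ^ 2 := by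
    have h5 : 2 * N + 1 ≤ 3 * N := by omega
    have h6 : e ≤ 3 * Λ * (3 * N) ^ 2 :=
      Nat.mul_le_mul_left _ (hVcard.trans (Nat.pow_le_pow_left h5 2))
    have h7 : 1 ≤ s ^ 2 := Nat.one_le_pow _ _ hs
    calc 3 * Λ + e ≤ 3 * Λ * s ^ 2 + 3 * Λ * (3 * N) ^ 2 :=
          add_le_add (Nat.le_mul_of_pos_right _ h7) h6
      _ = (3 + 27 * K ^ 2) * Λ * s ^ 2 := by rw [hN]; ring
      _ ≤ _ := by gcongr; exact le_max_right _ _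
  calc X ≤ BB * (6 * C₁ * C₂ * N) ^ e * ((C₁ * s) ^ q / r ^ (t + q)) := h1
    _ ≤ (Λ ^ 3 * H * (M₂ * s) ^ (3 * Λ)) * (M₂ * s) ^ e * Real.exp (-((T : ℝ) * s ^ 2)) := by
        rw [hBB]
        gcongr
    _ = Λ ^ 3 * H * ((M₂ * s) ^ (3 * Λ + e)) * Real.exp (-((T : ℝ) * s ^ 2)) := by
        rw [pow_add]; ring
    _ ≤ Λ ^ 3 * H * (((max M₂ (3 + 27 * K ^ 2) : ℕ) : ℝ) * s) ^
        (max M₂ (3 + 27 * K ^ 2) * Λ * s ^ 2) * Real.exp (-((T : ℝ) * s ^ 2)) := by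
        gcongr
        calc (M₂ * s : ℝ) ^ (3 * Λ + e) ≤ (M₂ * s : ℝ) ^ (max M₂ (3 + 27 * K ^ 2) * Λ * s ^ 2) :=
              pow_le_pow_right₀ hM₂s hexp
          _ ≤ _ := by
              gcongr
              exact_mod_cast le_max_left _ _

end estimate
end PeriodTrdeg

/-! ### Derivatives of polynomials in the Weierstrass functions -/

namespace PeriodTrdeg

section jets
open MvPolynomial

/-- The derivation of `ℤ[X₀, …, X₄]` that describes `d/dz` on the polynomials in
`z, ℘, ℘', ζ, g₂/2`, by means of `℘'' = 6 ℘² - g₂/2` and `ζ' = -℘`. -/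
noncomputable def jetD : Derivation ℤ (MvPolynomial (Fin 5) ℤ) (MvPolynomial (Fin 5) ℤ) :=
  mkDerivation ℤ ![1, X 2, 6 * X 1 ^ 2 - X 4, -X 1, 0]

/-- The values at `z` of the functions `z, ℘, ℘', ζ, g₂/2`. -/
noncomputable def jetVal (L : PeriodPair) (z : ℂ) : Fin 5 → ℂ :=
  ![z, L.weierstrassP z, L.derivWeierstrassP z, zeta L z, L.g₂ / 2]

lemma hasDerivAt_jet (L : PeriodPair) {z : ℂ} (hz : z ∉ L.lattice) (p : MvPolynomial (Fin 5) ℤ) :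
    HasDerivAt (fun w => aeval (jetVal L w) p) (aeval (jetVal L z) (jetD p)) z := by
  induction p using MvPolynomial.induction_on with
  | C a => simpa [jetD] using hasDerivAt_const z (a : ℂ)
  | add p q hp hq => simpa using hp.fun_add hq
  | mul_X p i hp =>
    have hX : HasDerivAt (fun w => jetVal L w i) (aeval (jetVal L z) (jetD (X i))) z := by
      rw [jetD, mkDerivation_X]
      fin_cases i
      · simpa [jetVal] using hasDerivAt_id' z
      · simpa [jetVal] using hasDerivAt_weierstrassP L hz
      · simpa [jetVal] using hasDerivAt_derivWeierstrassP L hz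
      · simpa [jetVal] using hasDerivAt_zeta L hz
      · simpa [jetVal] using hasDerivAt_const z (L.g₂ / 2)
    have h1 : aeval (jetVal L z) (jetD (p * X i)) = aeval (jetVal L z) (jetD p) * jetVal L z i
        + aeval (jetVal L z) p * aeval (jetVal L z) (jetD (X i)) := by
      simp only [Derivation.leibniz, map_add, smul_eq_mul, map_mul, aeval_X]
      ring
    rw [h1]
    simpa using hp.fun_mul hX

lemma iteratedDeriv_jet (L : PeriodPair) (t : ℕ) (p : MvPolynomial (Fin 5) ℤ) {z : ℂ}
    (hz : z ∉ L.lattice) :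
    iteratedDeriv t (fun w => aeval (jetVal L w) p) z = aeval (jetVal L z) (jetD^[t] p) := by
  induction t generalizing p with
  | zero => simp
  | succ t ih =>
    rw [iteratedDeriv_succ', Function.iterate_succ_apply, ← ih]
    refine Filter.EventuallyEq.iteratedDeriv_eq t ?_
    filter_upwards [eventually_notMem_lattice L hz] with w hw
    exact (hasDerivAt_jet L hw p).deriv

lemma mlen_jet_coeff (i : Fin 5) :
    mlen ((![1, X 2, 6 * X 1 ^ 2 - X 4, -X 1, 0] : Fin 5 → MvPolynomial (Fin 5) ℤ) i) ≤ 7 := by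
  have hX : ∀ i : Fin 5, (X i : MvPolynomial (Fin 5) ℤ) = monomial (Finsupp.single i 1) 1 :=
    fun i => rfl
  have h6 : (6 * X 1 ^ 2 - X 4 : MvPolynomial (Fin 5) ℤ)
      = monomial (Finsupp.single 1 2) 6 + monomial (Finsupp.single 4 1) (-1) := by
    rw [← MvPolynomial.C_mul_X_pow_eq_monomial, ← MvPolynomial.C_mul_X_eq_monomial]
    simp [sub_eq_add_neg]
  have hn : (-X 1 : MvPolynomial (Fin 5) ℤ) = monomial (Finsupp.single 1 1) (-1) := by
    rw [← MvPolynomial.C_mul_X_eq_monomial]; simp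
  have h1 : (1 : MvPolynomial (Fin 5) ℤ) = monomial 0 1 := rfl
  fin_cases i
  · simp only [Fin.zero_eta, Matrix.cons_val]
    rw [h1, mlen_monomial]; norm_num
  · simp only [Fin.reduceFinMk, Matrix.cons_val]
    rw [hX, mlen_monomial]; norm_num
  · simp only [Fin.reduceFinMk, Matrix.cons_val]
    rw [h6]
    refine (mlen_add_le _ _).trans ?_
    rw [mlen_monomial, mlen_monomial]; norm_num
  · simp only [Fin.reduceFinMk, Matrix.cons_val]
    rw [hn, mlen_monomial]; norm_num
  · simp [mlen_zero]

lemma totalDegree_jet_coeff (i : Fin 5) :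
    ((![1, X 2, 6 * X 1 ^ 2 - X 4, -X 1, 0] : Fin 5 → MvPolynomial (Fin 5) ℤ) i).totalDegree
      ≤ 2 := by
  fin_cases i
  · simp
  · simp
  · simp only [Fin.reduceFinMk, Matrix.cons_val]
    refine (totalDegree_sub _ _).trans (max_le ?_ (by simp))
    refine (totalDegree_mul _ _).trans ?_
    have h : (6 : MvPolynomial (Fin 5) ℤ) = C 6 := by simp
    rw [h, totalDegree_C, zero_add]
    exact (totalDegree_pow _ _).trans (by simp)
  · simp
  · simp

lemma jetD_eq_sum (p : MvPolynomial (Fin 5) ℤ) :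
    jetD p = ∑ m ∈ p.support, ∑ i ∈ m.support,
      monomial (m - Finsupp.single i 1) (p.coeff m * (m i : ℤ)) *
        (![1, X 2, 6 * X 1 ^ 2 - X 4, -X 1, 0] : Fin 5 → MvPolynomial (Fin 5) ℤ) i := by
  conv_lhs => rw [p.as_sum, map_sum]
  refine Finset.sum_congr rfl fun m _ => ?_
  rw [jetD, mkDerivation_monomial, Finsupp.sum, Finset.smul_sum]
  refine Finset.sum_congr rfl fun i _ => ?_
  rw [smul_eq_mul, ← smul_mul_assoc, smul_monomial, smul_eq_mul]

lemma mlen_jetD_le (p : MvPolynomial (Fin 5) ℤ) :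
    mlen (jetD p) ≤ 7 * p.totalDegree * mlen p := by
  rw [jetD_eq_sum]
  refine (mlen_sum_le _ _).trans ?_
  have h : ∀ m ∈ p.support, mlen (∑ i ∈ m.support,
      monomial (m - Finsupp.single i 1) (p.coeff m * (m i : ℤ)) *
        (![1, X 2, 6 * X 1 ^ 2 - X 4, -X 1, 0] : Fin 5 → MvPolynomial (Fin 5) ℤ) i)
      ≤ 7 * p.totalDegree * |((p.coeff m : ℤ) : ℝ)| := by
    intro m hm
    have hdeg : ((∑ i ∈ m.support, m i : ℕ) : ℝ) ≤ p.totalDegree := by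
      exact_mod_cast le_totalDegree hm
    calc _ ≤ ∑ i ∈ m.support, |((p.coeff m : ℤ) : ℝ)| * (m i : ℝ) * 7 := by
          refine (mlen_sum_le _ _).trans (Finset.sum_le_sum fun i _ => ?_)
          refine (mlen_monomial_mul _ _ _).trans ?_
          push_cast
          rw [abs_mul, Nat.abs_cast]
          exact mul_le_mul_of_nonneg_left (mlen_jet_coeff i) (by positivity)
      _ = 7 * ((∑ i ∈ m.support, m i : ℕ) : ℝ) * |((p.coeff m : ℤ) : ℝ)| := by
          push_cast
          rw [Finset.mul_sum, Finset.sum_mul]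
          exact Finset.sum_congr rfl fun i _ => by ring
      _ ≤ _ := by gcongr
  refine (Finset.sum_le_sum h).trans ?_
  rw [← Finset.mul_sum, mlen_eq (p := p) subset_rfl]

lemma totalDegree_jetD_le (p : MvPolynomial (Fin 5) ℤ) :
    (jetD p).totalDegree ≤ p.totalDegree + 1 := by
  rw [jetD_eq_sum]
  refine totalDegree_finsetSum_le fun m hm => totalDegree_finsetSum_le fun i hi => ?_
  refine (totalDegree_mul _ _).trans ?_
  have h1 := totalDegree_jet_coeff i
  have h2 := totalDegree_monomial_le (m - Finsupp.single i 1) (p.coeff m * (m i : ℤ))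
  have h3 := le_totalDegree hm
  have h4 : (m - Finsupp.single i 1).sum (fun _ => id) + 1 = m.sum fun _ => id := by
    have hle : Finsupp.single i 1 ≤ m := by
      rw [Finsupp.single_le_iff]; exact Nat.one_le_iff_ne_zero.2 (Finsupp.mem_support_iff.1 hi)
    conv_rhs => rw [← tsub_add_cancel_of_le hle]
    rw [Finsupp.sum_add_index' (by simp) (by simp)]
    simp
  simp only [Finsupp.sum, id] at h2 h3 h4
  omega

lemma totalDegree_iterate_jetD_le (t : ℕ) (p : MvPolynomial (Fin 5) ℤ) :
    (jetD^[t] p).totalDegree ≤ p.totalDegree + t := by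
  induction t with
  | zero => simp
  | succ t ih =>
    rw [Function.iterate_succ_apply']
    exact (totalDegree_jetD_le _).trans (by omega)

lemma mlen_iterate_jetD_le (t a : ℕ) (p : MvPolynomial (Fin 5) ℤ) (h : p.totalDegree + t ≤ a) :
    mlen (jetD^[t] p) ≤ (7 * a : ℝ) ^ t * mlen p := by
  induction t with
  | zero => simp
  | succ t ih =>
    rw [Function.iterate_succ_apply']
    refine (mlen_jetD_le _).trans ?_
    have h1 := totalDegree_iterate_jetD_le t p
    have h2 : ((jetD^[t] p).totalDegree : ℝ) ≤ a := by exact_mod_cast (by omega)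
    calc _ ≤ 7 * (a : ℝ) * ((7 * a : ℝ) ^ t * mlen p) := by
          gcongr
          · exact mlen_nonneg _
          · exact ih (by omega)
      _ = _ := by ring

end jets

end PeriodTrdeg

/-! ### Siegel's lemma -/

namespace PeriodTrdeg

section siegel
open Polynomial

lemma abs_coeff_le_plen (p : ℤ[X]) (c : ℕ) : |(p.coeff c : ℝ)| ≤ plen p := by
  by_cases hc : c ∈ p.support
  · exact Finset.single_le_sum (f := fun i => |(p.coeff i : ℝ)|) (fun _ _ => abs_nonneg _) hc
  · simpa [notMem_support_iff.1 hc] using plen_nonneg p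

attribute [local instance] Matrix.seminormedAddCommGroup in
/-- Siegel's lemma over `ℤ`, with at least twice as many unknowns as equations. -/
lemma exists_int_vec {α β : Type*} [Fintype α] [Fintype β] [Nonempty α] (A : Matrix α β ℤ)
    (hcard : 2 * Fintype.card α ≤ Fintype.card β) (H : ℝ) (hH : 1 ≤ H)
    (hA : ∀ a b, |(A a b : ℝ)| ≤ H) :
    ∃ t : β → ℤ, t ≠ 0 ∧ A.mulVec t = 0 ∧ ∀ b, |(t b : ℝ)| ≤ Fintype.card β * H := by
  classical
  have hα : 0 < Fintype.card α := Fintype.card_pos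
  obtain ⟨t, ht, hAt, hnorm⟩ := Int.Matrix.exists_ne_zero_int_vec_norm_le A (by omega) hα
  refine ⟨t, ht, hAt, fun b => ?_⟩
  have hA' : ‖A‖ ≤ H := by
    rw [Matrix.norm_le_iff (by linarith)]
    intro a b
    rw [Int.norm_eq_abs]
    exact hA a b
  have h2 : (2 * Fintype.card α : ℝ) ≤ Fintype.card β := by exact_mod_cast hcard
  have hα' : (1 : ℝ) ≤ Fintype.card α := by exact_mod_cast hα
  have hmax : (1 : ℝ) ≤ max 1 ‖A‖ := le_max_left _ _
  have h1 : (1 : ℝ) ≤ Fintype.card β * max 1 ‖A‖ := by nlinarith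
  calc |(t b : ℝ)| = ‖t b‖ := (Int.norm_eq_abs _).symm
    _ ≤ ‖t‖ := norm_le_pi_norm t b
    _ ≤ _ := hnorm
    _ ≤ (Fintype.card β * max 1 ‖A‖) ^ (1 : ℝ) := by
        refine Real.rpow_le_rpow_of_exponent_le h1 ?_
        rw [div_le_one (by linarith)]; linarith
    _ = Fintype.card β * max 1 ‖A‖ := Real.rpow_one _
    _ ≤ _ := by gcongr; exact max_le hH hA'

/-- Siegel's lemma over `ℤ[θ]`: a system of linear equations whose coefficients have
controlled multiplication matrices, and with enough unknowns, has a nontrivial solution in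
polynomials in `θ` of degree `< E` with integer coefficients of controlled size. -/
lemma siegel {θ : ℂ} {ι ι' κ : Type*} [Fintype ι] [Fintype ι'] [Fintype κ] [Nonempty κ]
    {v : ι → ℂ} (k₀ : ι) (hk₀ : v k₀ ≠ 0) (y : κ → ι' → ℂ) (D E : ℕ) (hE : 0 < E) (H : ℝ)
    (hH : 1 ≤ H) (hy : ∀ k i, Sz θ v (y k i) D H)
    (hcard : 2 * (Fintype.card κ * (Fintype.card ι * (E + D))) ≤ Fintype.card ι' * E) :
    ∃ p : ι' → Fin E → ℤ, p ≠ 0 ∧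
      (∀ i l, |(p i l : ℝ)| ≤ (Fintype.card ι' * E : ℕ) * H) ∧
      ∀ k, ∑ i, (∑ l, (p i l : ℂ) * θ ^ (l : ℕ)) * y k i = 0 := by
  classical
  choose M hM hdeg hlen using hy
  have : Nonempty (κ × ι × Fin (E + D)) := ⟨(Classical.arbitrary κ, k₀, ⟨0, by omega⟩)⟩
  obtain ⟨t, ht, hAt, hb⟩ := exists_int_vec
    (fun (a : κ × ι × Fin (E + D)) (b : ι' × Fin E) =>
      (X ^ (b.2 : ℕ) * M a.1 b.1 k₀ a.2.1).coeff a.2.2)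
    (by simpa using hcard) H hH
    (by
      rintro ⟨k, j, c⟩ ⟨i, l⟩
      refine (abs_coeff_le_plen _ _).trans ?_
      rw [plen_X_pow_mul]
      exact (Finset.single_le_sum (f := fun j => plen (M k i k₀ j))
        (fun _ _ => plen_nonneg _) (Finset.mem_univ j)).trans (hlen k i k₀))
  refine ⟨fun i l => t (i, l), ?_, ?_, ?_⟩
  · intro h
    exact ht (funext fun ⟨i, l⟩ => congrFun (congrFun h i) l)
  · intro i l
    simpa using hb (i, l)
  · intro k
    have hpoly : ∀ j, ∑ i, ∑ l : Fin E, C (t (i, l)) * (X ^ (l : ℕ) * M k i k₀ j) = 0 := by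
      intro j
      ext c
      rw [coeff_zero]
      by_cases hc : c < E + D
      · have := congrFun hAt (k, j, ⟨c, hc⟩)
        simp only [Matrix.mulVec, dotProduct, Fintype.sum_prod_type, Pi.zero_apply] at this
        rw [← this]
        simp only [finsetSum_coeff, coeff_C_mul]
        exact Finset.sum_congr rfl fun i _ => Finset.sum_congr rfl fun l _ => mul_comm _ _
      · simp only [finsetSum_coeff, coeff_C_mul]
        refine Finset.sum_eq_zero fun i _ => Finset.sum_eq_zero fun l _ => ?_
        rw [coeff_eq_zero_of_natDegree_lt, mul_zero]
        refine natDegree_mul_le.trans_lt ?_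
        rw [natDegree_X_pow]
        have := hdeg k i k₀ j
        have := l.2
        omega
    have h0 : (∑ i, (∑ l, (t (i, l) : ℂ) * θ ^ (l : ℕ)) * y k i) * v k₀ = 0 := by
      calc _ = ∑ i, (∑ l, (t (i, l) : ℂ) * θ ^ (l : ℕ)) *
              ∑ j, aeval θ (M k i k₀ j) * v j := by
            rw [Finset.sum_mul]
            exact Finset.sum_congr rfl fun i _ => by rw [hM k i k₀, mul_assoc]
        _ = ∑ j, aeval θ (∑ i, ∑ l : Fin E, C (t (i, l)) * (X ^ (l : ℕ) * M k i k₀ j)) * v j := by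
            simp only [map_sum, map_mul, map_pow, aeval_X, Finset.sum_mul,
              Finset.mul_sum, eq_intCast, map_intCast]
            rw [Finset.sum_comm]
            refine Finset.sum_congr rfl fun i _ => ?_
            refine Finset.sum_congr rfl fun j _ => ?_
            refine Finset.sum_congr rfl fun l _ => ?_
            ring
        _ = 0 := Finset.sum_eq_zero fun j _ => by rw [hpoly, map_zero, zero_mul]
    exact (mul_eq_zero.1 h0).resolve_right hk₀

end siegel

section jets2
open MvPolynomial

/-- The `t`-th derivative of `z^i ℘^j ζ^k`, as a polynomial in `z, ℘, ℘', ζ, g₂/2`. -/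
noncomputable def jetMon (t i j k : ℕ) : MvPolynomial (Fin 5) ℤ :=
  jetD^[t] (X 0 ^ i * X 1 ^ j * X 3 ^ k)

lemma iteratedDeriv_auxF (L : PeriodPair) (Λ : ℕ) (P : ℕ → ℕ → ℕ → ℂ) (t : ℕ) {u : ℂ}
    (hu : u ∉ L.lattice) :
    iteratedDeriv t (auxF L Λ P) u = ∑ i ∈ Finset.range Λ, ∑ j ∈ Finset.range Λ,
      ∑ k ∈ Finset.range Λ, P i j k * aeval (jetVal L u) (jetMon t i j k) := by
  have hmon : ∀ i j k : ℕ, ∀ z, z ^ i * L.weierstrassP z ^ j * zeta L z ^ k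
      = aeval (jetVal L z) (X 0 ^ i * X 1 ^ j * X 3 ^ k : MvPolynomial (Fin 5) ℤ) := by
    intro i j k z; simp [jetVal]
  have han : ∀ p : MvPolynomial (Fin 5) ℤ, AnalyticAt ℂ (fun z => aeval (jetVal L z) p) u := by
    intro p
    have : DifferentiableOn ℂ (fun z => aeval (jetVal L z) p) ((L.lattice : Set ℂ)ᶜ) :=
      fun z hz => (hasDerivAt_jet L hz p).differentiableAt.differentiableWithinAt
    exact this.analyticAt ((isOpen_latticeCompl L).mem_nhds hu)
  have heq : auxF L Λ P = fun z => ∑ i ∈ Finset.range Λ, ∑ j ∈ Finset.range Λ,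
      ∑ k ∈ Finset.range Λ, P i j k *
        aeval (jetVal L z) (X 0 ^ i * X 1 ^ j * X 3 ^ k : MvPolynomial (Fin 5) ℤ) := by
    funext z
    simp only [auxF, ← hmon]
    simp only [mul_assoc]
  have hc : ∀ c : ℂ, ∀ p : MvPolynomial (Fin 5) ℤ,
      AnalyticAt ℂ (fun z => c * aeval (jetVal L z) p) u := fun c p =>
    analyticAt_const.mul (han p)
  rw [heq, iteratedDeriv_fun_sum fun i _ => AnalyticAt.contDiffAt
    (Finset.analyticAt_fun_sum _ fun j _ => Finset.analyticAt_fun_sum _ fun k _ => hc _ _)]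
  refine Finset.sum_congr rfl fun i _ => ?_
  rw [iteratedDeriv_fun_sum fun j _ => AnalyticAt.contDiffAt
    (Finset.analyticAt_fun_sum _ fun k _ => hc _ _)]
  refine Finset.sum_congr rfl fun j _ => ?_
  rw [iteratedDeriv_fun_sum fun k _ => AnalyticAt.contDiffAt (hc _ _)]
  refine Finset.sum_congr rfl fun k _ => ?_
  rw [iteratedDeriv_const_mul _ (han _).contDiffAt, iteratedDeriv_jet L t _ hu, jetMon]

/-- The numbers `ω₁/2, ω₂/2, ℘(ω₁/2), η₁/2, η₂/2, g₂/2`: the derivatives of polynomials in `z, ℘, ζ`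
with integer coefficients, at the points `ω₁/2 + mω₁ + nω₂`, are integer polynomials in them. -/
noncomputable def baseVal (L : PeriodPair) : Fin 6 → ℂ :=
  ![L.ω₁ / 2, L.ω₂ / 2, L.weierstrassP (L.ω₁ / 2), eta₁ L / 2, eta₂ L / 2, L.g₂ / 2]

lemma sz_jetVal (L : PeriodPair) {θ : ℂ} {ι : Type*} [Fintype ι] {v : ι → ℂ} {d : ℂ} {D : ℕ}
    {h : ℝ} (hh : 0 ≤ h) (hx : ∀ r, Sz θ v (d * baseVal L r) D h) {s m n : ℕ} (hs : 1 ≤ s)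
    (hm : m ≤ s) (hn : n ≤ s) (r : Fin 5) :
    Sz θ v (d * jetVal L (gridPt L m n) r) D (5 * s * h) := by
  have hhalf : L.ω₁ / 2 ∉ L.lattice := by simpa [gridPt] using gridPt_notMem L 0 0
  have hs' : (1 : ℝ) ≤ s := by exact_mod_cast hs
  have hm' : (m : ℝ) ≤ s := by exact_mod_cast hm
  have hn' : (n : ℝ) ≤ s := by exact_mod_cast hn
  have hle : h ≤ 5 * s * h := by nlinarith
  have hlin : ∀ a b : ℂ, Sz θ v (d * a) D h → Sz θ v (d * b) D h →
      Sz θ v (d * ((2 * m + 1) * a + 2 * n * b)) D (5 * s * h) := by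
    intro a b ha hb
    have h1 := (ha.int_mul (2 * m + 1)).add (hb.int_mul (2 * n))
    refine Eq.mp ?_ (h1.mono (D' := D) (H' := 5 * s * h) le_rfl ?_)
    · congr 1
      push_cast; ring
    · have e1 : |(((2 * m + 1 : ℤ)) : ℝ)| = 2 * m + 1 := by
        push_cast; exact abs_of_nonneg (by positivity)
      have e2 : |(((2 * n : ℤ)) : ℝ)| = 2 * n := by
        push_cast; exact abs_of_nonneg (by positivity)
      rw [e1, e2, ← add_mul]
      gcongr
      linarith
  fin_cases r
  · have := hlin _ _ (hx 0) (hx 1)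
    simp only [baseVal, Matrix.cons_val] at this
    convert this using 2
    simp only [jetVal, gridPt, Fin.zero_eta, Matrix.cons_val]
    push_cast; ring
  · have := (hx 2).mono (D' := D) (H' := 5 * s * h) le_rfl hle
    convert this using 2
    simp only [jetVal, gridPt, baseVal, Fin.mk_one, Matrix.cons_val]
    rw [weierstrassP_add]
  · have h0 : Sz θ v 0 D (5 * s * h) := (Sz.zero D).mono le_rfl (hh.trans hle)
    convert h0 using 1
    simp only [jetVal, gridPt, Fin.reduceFinMk, Matrix.cons_val]
    rw [derivWeierstrassP_add, derivWeierstrassP_half, mul_zero]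
  · have := hlin _ _ (hx 3) (hx 4)
    simp only [baseVal, Matrix.cons_val] at this
    convert this using 2
    simp only [jetVal, gridPt, Fin.reduceFinMk, Matrix.cons_val]
    rw [zeta_add L _ _ hhalf, eta₁]
    push_cast; ring
  · exact (hx 5).mono (D' := D) (H' := 5 * s * h) le_rfl hle

lemma sz_jetMon (L : PeriodPair) {θ : ℂ} {ι : Type*} [Fintype ι] [DecidableEq ι] [Nonempty ι]
    {v : ι → ℂ} {d : ℂ} {D : ℕ} {h : ℝ} (hh : 1 ≤ h) (hd : Sz θ v d D h)
    (hx : ∀ r, Sz θ v (d * baseVal L r) D h) {s m n : ℕ} (hs : 1 ≤ s)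
    (hm : m ≤ s) (hn : n ≤ s) {t i j k a : ℕ} (ha : i + j + k + t ≤ a) :
    Sz θ v (d ^ a * aeval (jetVal L (gridPt L m n)) (jetMon t i j k)) (a * D)
      ((7 * a) ^ t * (5 * s * h) ^ a) := by
  have hs' : (1 : ℝ) ≤ s := by exact_mod_cast hs
  have hle : h ≤ 5 * s * h := by nlinarith
  have hX : ∀ i : Fin 5, (X i : MvPolynomial (Fin 5) ℤ) = monomial (Finsupp.single i 1) 1 :=
    fun i => rfl
  have hdeg : (X 0 ^ i * X 1 ^ j * X 3 ^ k : MvPolynomial (Fin 5) ℤ).totalDegree ≤ i + j + k := by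
    refine (totalDegree_mul _ _).trans (add_le_add ((totalDegree_mul _ _).trans
      (add_le_add ?_ ?_)) ?_) <;> simp
  have hlen : mlen (X 0 ^ i * X 1 ^ j * X 3 ^ k : MvPolynomial (Fin 5) ℤ) = 1 := by
    simp only [hX, monomial_pow, monomial_mul, mlen_monomial]
    norm_num
  have h1 := totalDegree_iterate_jetD_le t (X 0 ^ i * X 1 ^ j * X 3 ^ k)
  have h2 := mlen_iterate_jetD_le t a (X 0 ^ i * X 1 ^ j * X 3 ^ k) (by omega)
  rw [hlen, mul_one] at h2
  have := Sz.aeval (jetMon t i j k) a (by rw [jetMon]; omega) (jetVal L (gridPt L m n)) d D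
    (5 * s * h) (hd.mono le_rfl hle) (sz_jetVal L (by linarith) hx hs hm hn)
  refine this.mono le_rfl ?_
  gcongr
  exact h2

end jets2

end PeriodTrdeg

/-! ### The auxiliary function -/

namespace PeriodTrdeg

section construction
open Polynomial

/-- The coefficients, in `ℤ[θ]`, of the auxiliary function. -/
noncomputable def auxCoeff (θ : ℂ) {E : ℕ} (q : ℕ → ℕ → ℕ → Fin E → ℤ) (i j k : ℕ) : ℂ :=
  ∑ l, (q i j k l : ℂ) * θ ^ (l : ℕ)

/-- Construction of the auxiliary function, with zeros of order `≥ T` at `S²` points. -/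
lemma exists_auxCoeff (L : PeriodPair) {θ : ℂ} {δ : ℕ} [Nonempty (Fin δ)] {v : Fin δ → ℂ}
    (hind : ∀ w : Fin δ → ℤ[X], ∑ i, aeval θ (w i) * v i = 0 → w = 0)
    {d : ℂ} (hd0 : d ≠ 0) {D : ℕ} {h : ℝ} (hh : 1 ≤ h) (hd : Sz θ v d D h)
    (hx : ∀ r, Sz θ v (d * baseVal L r) D h) (Λ T S E a : ℕ) (H : ℝ) (hH : 1 ≤ H)
    (hS : 1 ≤ S) (hT : 1 ≤ T) (hE : 0 < E) (ha : a = 3 * Λ + T)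
    (hHeq : (7 * a : ℝ) ^ T * (5 * S * h) ^ a ≤ H)
    (hcard : 2 * (S * (S * T) * (δ * (E + a * D))) ≤ Λ * (Λ * Λ) * E) :
    ∃ q : ℕ → ℕ → ℕ → Fin E → ℤ, (∃ i < Λ, ∃ j < Λ, ∃ k < Λ, q i j k ≠ 0) ∧
      (∀ i j k l, |(q i j k l : ℝ)| ≤ (Λ * (Λ * Λ) * E : ℕ) * H) ∧
      ∀ m < S, ∀ n < S, ∀ t < T,
        iteratedDeriv t (auxF L Λ (auxCoeff θ q)) (gridPt L (m : ℤ) (n : ℤ)) = 0 := by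
  classical
  obtain ⟨k₀⟩ := ‹Nonempty (Fin δ)›
  have : Nonempty (Fin δ) := ⟨k₀⟩
  have hk₀ : v k₀ ≠ 0 := by
    intro h0
    have h1 := hind (Pi.single k₀ 1) (by
      rw [Finset.sum_eq_single k₀]
      · simp [h0]
      · intro b _ hb; simp [hb]
      · simp)
    simpa using congrFun h1 k₀
  have : Nonempty (Fin S × Fin S × Fin T) := ⟨(⟨0, hS⟩, ⟨0, hS⟩, ⟨0, hT⟩)⟩
  obtain ⟨p, hp0, hpH, hp⟩ := siegel (θ := θ) (v := v) k₀ hk₀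
    (fun (b : Fin S × Fin S × Fin T) (c : Fin Λ × Fin Λ × Fin Λ) =>
      d ^ a * MvPolynomial.aeval (jetVal L (gridPt L ((b.1 : ℕ) : ℤ) ((b.2.1 : ℕ) : ℤ)))
        (jetMon b.2.2 c.1 c.2.1 c.2.2)) (a * D) E hE H hH
    (by
      rintro ⟨m, n, t⟩ ⟨i, j, k⟩
      have hS' : (1 : ℝ) ≤ S := by exact_mod_cast hS
      refine (sz_jetMon L hh hd hx hS m.2.le n.2.le (a := a) ?_).mono le_rfl
        (le_trans ?_ hHeq)
      · dsimp only; omega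
      · have h7 : (1 : ℝ) ≤ 7 * a := by
          have : (1 : ℝ) ≤ a := by exact_mod_cast (by omega)
          linarith
        gcongr
        exact t.2.le)
    (by simpa using hcard)
  have hpH' : ∀ i l, |(p i l : ℝ)| ≤ (Λ * (Λ * Λ) * E : ℕ) * H := by simpa using hpH
  refine ⟨fun i j k l => if h : i < Λ ∧ j < Λ ∧ k < Λ then
    p (⟨i, h.1⟩, ⟨j, h.2.1⟩, ⟨k, h.2.2⟩) l else 0, ?_, ?_, ?_⟩
  · obtain ⟨⟨i, j, k⟩, hijk⟩ := Function.ne_iff.1 hp0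
    refine ⟨i, i.2, j, j.2, k, k.2, ?_⟩
    simpa using hijk
  · intro i j k l
    dsimp only
    split_ifs
    · exact hpH' _ _
    · simp; positivity
  · intro m hm n hn t ht
    rw [iteratedDeriv_auxF L _ _ _ (gridPt_notMem L _ _)]
    have h1 := hp (⟨m, hm⟩, ⟨n, hn⟩, ⟨t, ht⟩)
    simp only [Fintype.sum_prod_type] at h1
    have h2 : d ^ a * ∑ i ∈ Finset.range Λ, ∑ j ∈ Finset.range Λ, ∑ k ∈ Finset.range Λ,
        auxCoeff θ (fun i j k l => if h : i < Λ ∧ j < Λ ∧ k < Λ then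
          p (⟨i, h.1⟩, ⟨j, h.2.1⟩, ⟨k, h.2.2⟩) l else 0) i j k *
          MvPolynomial.aeval (jetVal L (gridPt L (m : ℤ) (n : ℤ))) (jetMon t i j k) = 0 := by
      rw [← h1]
      simp only [Finset.sum_range, Finset.mul_sum]
      refine Finset.sum_congr rfl fun i _ => Finset.sum_congr rfl fun j _ =>
        Finset.sum_congr rfl fun k _ => ?_
      simp only [auxCoeff, Fin.is_lt, and_self, dite_true, Fin.eta]
      ring
    exact (mul_eq_zero.1 h2).resolve_left (pow_ne_zero _ hd0)

lemma auxCoeff_ne_zero {θ : ℂ} (hθ : Transcendental ℤ θ) {E : ℕ} {q : ℕ → ℕ → ℕ → Fin E → ℤ}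
    {i j k : ℕ} (hq : q i j k ≠ 0) : auxCoeff θ q i j k ≠ 0 := by
  intro h0
  apply hq
  have h1 : aeval θ (∑ l, C (q i j k l) * X ^ (l : ℕ)) = 0 := by
    rw [← h0, auxCoeff]
    simp
  have h2 := transcendental_iff.1 hθ _ h1
  funext l
  have h3 := congrArg (fun p => p.coeff (l : ℕ)) h2
  simp only [finsetSum_coeff, coeff_C_mul_X_pow, coeff_zero] at h3
  rw [Finset.sum_eq_single l] at h3
  · simpa using h3
  · intro b _ hb
    rw [if_neg]
    exact fun h => hb (Fin.ext h.symm)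
  · simp

/-- The box of zeros of size `S` is contained in a maximal one, of some size `s`, which is bounded
by the zero estimate; just outside of it there is a first nonvanishing derivative of order less than
`T`. -/
lemma exists_first_nonzero (L : PeriodPair) {u : ℂ} (hu : u = L.ω₁ / 2) {o Λ T S : ℕ}
    (ho : analyticOrderAt (fun z => L.weierstrassP z - L.weierstrassP u) u = o)
    (hT : Λ * o < T) (hdet : L.ω₁ * eta₂ L - L.ω₂ * eta₁ L ≠ 0)
    (P : ℕ → ℕ → ℕ → ℂ) (hP : ∃ i < Λ, ∃ j < Λ, ∃ k < Λ, P i j k ≠ 0)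
    (hvan : ∀ m < S, ∀ n < S, ∀ t < T,
      iteratedDeriv t (auxF L Λ P) (gridPt L (m : ℤ) (n : ℤ)) = 0) :
    ∃ s m₀ n₀ t, S ≤ s ∧ s < 2 * Λ ∧ m₀ ≤ s ∧ n₀ ≤ s ∧ t < T ∧
      (∀ m < s, ∀ n < s, ∀ t < T,
        iteratedDeriv t (auxF L Λ P) (gridPt L (m : ℤ) (n : ℤ)) = 0) ∧
      (∀ t' < t, iteratedDeriv t' (auxF L Λ P) (gridPt L (m₀ : ℤ) (n₀ : ℤ)) = 0) ∧
      iteratedDeriv t (auxF L Λ P) (gridPt L (m₀ : ℤ) (n₀ : ℤ)) ≠ 0 := by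
  classical
  set V : ℕ → Prop := fun s => ∀ m < s, ∀ n < s, ∀ t < T,
    iteratedDeriv t (auxF L Λ P) (gridPt L (m : ℤ) (n : ℤ)) = 0 with hV
  have hmono : ∀ s s', s ≤ s' → V s' → V s := fun s s' hss h m hm n hn t ht =>
    h m (by omega) n (by omega) t ht
  have hnot : ¬ V (2 * Λ) := by
    intro h
    obtain ⟨i, hi, j, hj, k, hk, hne⟩ := hP
    refine hne (zero_estimate L Λ P (u := u) ?_ o T (2 * Λ) ho hT le_rfl hdet ?_ i hi j hj k hk)
    · rw [hu]; simpa [gridPt] using gridPt_notMem L 0 0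
    · intro m hm n hn t ht
      rw [hu]
      exact h m hm n hn t ht
  have hex : ∃ s, ¬ V s := ⟨_, hnot⟩
  have hs1 := Nat.find_spec hex
  have hle : Nat.find hex ≤ 2 * Λ := Nat.find_min' hex hnot
  have hS' : S < Nat.find hex := by
    by_contra hcon
    exact hs1 (hmono _ _ (not_lt.1 hcon) hvan)
  obtain ⟨s, hs⟩ : ∃ s, Nat.find hex = s + 1 := ⟨Nat.find hex - 1, by omega⟩
  have hVs : V s := not_not.1 (Nat.find_min hex (m := s) (by omega))
  rw [hs] at hs1
  simp only [hV] at hs1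
  push Not at hs1
  obtain ⟨m₀, hm₀, n₀, hn₀, t₁, ht₁, hne⟩ := hs1
  have hex2 : ∃ t, iteratedDeriv t (auxF L Λ P) (gridPt L (m₀ : ℤ) (n₀ : ℤ)) ≠ 0 := ⟨t₁, hne⟩
  refine ⟨s, m₀, n₀, Nat.find hex2, by omega, by omega, by omega, by omega,
    (Nat.find_min' hex2 hne).trans_lt ht₁, hVs, ?_, Nat.find_spec hex2⟩
  intro t' ht'
  exact not_not.1 (Nat.find_min hex2 ht')

/-- The size of the value of a derivative of the auxiliary function at a point of the grid. -/
lemma sz_auxF (L : PeriodPair) {θ : ℂ} {δ : ℕ} [Nonempty (Fin δ)] {v : Fin δ → ℂ}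
    {d : ℂ} {D : ℕ} {h : ℝ} (hh : 1 ≤ h) (hd : Sz θ v d D h)
    (hx : ∀ r, Sz θ v (d * baseVal L r) D h) (Λ E s m n t a : ℕ) (hs : 1 ≤ s)
    (hm : m ≤ s) (hn : n ≤ s) (ha : 3 * Λ + t ≤ a) {q : ℕ → ℕ → ℕ → Fin E → ℤ} {A H : ℝ}
    (hq : ∀ i j k l, |(q i j k l : ℝ)| ≤ A) (hA : 0 ≤ A)
    (hH : (7 * a : ℝ) ^ t * (5 * s * h) ^ a ≤ H) :
    Sz θ v (d ^ a * iteratedDeriv t (auxF L Λ (auxCoeff θ q)) (gridPt L (m : ℤ) (n : ℤ)))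
      (E + a * D) ((Λ * (Λ * Λ) * E : ℕ) * (A * H)) := by
  have hterm : ∀ i ∈ Finset.range Λ, ∀ j ∈ Finset.range Λ, ∀ k ∈ Finset.range Λ,
      ∀ l ∈ (Finset.univ : Finset (Fin E)), Sz θ v ((q i j k l : ℂ) * (θ ^ (l : ℕ) *
        (d ^ a * MvPolynomial.aeval (jetVal L (gridPt L (m : ℤ) (n : ℤ))) (jetMon t i j k))))
        (E + a * D) (A * H) := by
    intro i hi j hj k hk l _
    rw [Finset.mem_range] at hi hj hk
    refine (((sz_jetMon L hh hd hx hs hm hn (a := a) (by omega)).X_pow_mul (l : ℕ)).int_mul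
      (q i j k l)).mono (by have := l.2; omega) ?_
    exact mul_le_mul (hq i j k l) hH (by positivity) hA
  have := Sz.sum _ _ _ _ fun i hi => Sz.sum _ _ _ _ fun j hj => Sz.sum _ _ _ _ fun k hk =>
    Sz.sum _ _ _ _ (hterm i hi j hj k hk)
  convert this using 1
  · rw [iteratedDeriv_auxF L _ _ _ (gridPt_notMem L _ _)]
    simp only [auxCoeff, Finset.mul_sum, Finset.sum_mul]
    refine Finset.sum_congr rfl fun i _ => Finset.sum_congr rfl fun j _ =>
        Finset.sum_congr rfl fun k _ => Finset.sum_congr rfl fun l _ => ?_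
    ring
  · simp only [Finset.sum_const, Finset.card_range, Finset.card_univ, Fintype.card_fin,
      nsmul_eq_mul]
    push_cast
    ring

lemma norm_auxCoeff_le {θ : ℂ} {t₀ : ℝ} (ht₀ : 1 ≤ t₀) (hθt : ‖θ‖ ≤ t₀) {E : ℕ}
    {q : ℕ → ℕ → ℕ → Fin E → ℤ} {A : ℝ} (hA : 0 ≤ A) (hq : ∀ i j k l, |(q i j k l : ℝ)| ≤ A)
    (i j k : ℕ) : ‖auxCoeff θ q i j k‖ ≤ E * (A * t₀ ^ E) := by
  refine (norm_sum_le _ _).trans ?_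
  have : ∀ l ∈ (Finset.univ : Finset (Fin E)), ‖(q i j k l : ℂ) * θ ^ (l : ℕ)‖ ≤ A * t₀ ^ E := by
    intro l _
    rw [norm_mul, norm_pow, Complex.norm_intCast]
    refine mul_le_mul (hq i j k l) ?_ (by positivity) hA
    calc ‖θ‖ ^ (l : ℕ) ≤ t₀ ^ (l : ℕ) := by gcongr
      _ ≤ t₀ ^ E := pow_le_pow_right₀ ht₀ l.2.le
  refine (Finset.sum_le_sum this).trans ?_
  simp

/-- One step of the transcendence argument, before the choice of the parameters. -/
lemma transcendence_step (L : PeriodPair) {θ : ℂ} (hθ : Transcendental ℤ θ) {δ : ℕ}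
    [Nonempty (Fin δ)] {v : Fin δ → ℂ}
    (hind : ∀ w : Fin δ → ℤ[X], ∑ i, aeval θ (w i) * v i = 0 → w = 0)
    {d : ℂ} (hd0 : d ≠ 0) {D : ℕ} {h : ℝ} (hh : 1 ≤ h) (hd : Sz θ v d D h)
    (hx : ∀ r, Sz θ v (d * baseVal L r) D h) {M : ℕ}
    (hM : ∀ (Λ s T t : ℕ) (P : ℕ → ℕ → ℕ → ℂ) (H : ℝ)
      (m₀ n₀ : ℕ), 1 ≤ Λ → 1 ≤ s → 0 ≤ H → (∀ i < Λ, ∀ j < Λ, ∀ k < Λ, ‖P i j k‖ ≤ H) →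
      (∀ m < s, ∀ n < s, ∀ t' < T,
        iteratedDeriv t' (auxF L Λ P) (gridPt L (m : ℤ) (n : ℤ)) = 0) →
      m₀ ≤ s → n₀ ≤ s → t < T →
      (∀ t' < t, iteratedDeriv t' (auxF L Λ P) (gridPt L (m₀ : ℤ) (n₀ : ℤ)) = 0) →
      ‖iteratedDeriv t (auxF L Λ P) (gridPt L (m₀ : ℤ) (n₀ : ℤ))‖ / t.factorial ≤
        Λ ^ 3 * H * ((M : ℝ) * s) ^ (M * Λ * s ^ 2) * Real.exp (-((T : ℝ) * s ^ 2)))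
    {o : ℕ} (ho : analyticOrderAt (fun z => L.weierstrassP z - L.weierstrassP (L.ω₁ / 2))
      (L.ω₁ / 2) = o)
    (hdet : L.ω₁ * eta₂ L - L.ω₂ * eta₁ L ≠ 0) {t₀ : ℝ} (ht₀ : 1 ≤ t₀) (hθt : ‖θ‖ ≤ t₀)
    (k : Fin δ) (Λ T S E a : ℕ) (H A : ℝ) (hH : 1 ≤ H)
    (hS : 1 ≤ S) (hT : 1 ≤ T) (hE : 0 < E) (ha : a = 3 * Λ + T)
    (hHeq : (7 * a : ℝ) ^ T * (5 * (2 * Λ : ℕ) * h) ^ a ≤ H)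
    (hA : A = (Λ * (Λ * Λ) * E : ℕ) * H)
    (hcard : 2 * (S * (S * T) * (δ * (E + a * D))) ≤ Λ * (Λ * Λ) * E)
    (hTo : Λ * o < T) (hSΛ : S ≤ 2 * Λ) :
    ∃ (s : ℕ) (Q : ℤ[X]), S ≤ s ∧ s ≤ 2 * Λ ∧ Q ≠ 0 ∧ Q.natDegree ≤ δ * (E + a * D) ∧
      Real.log (mahler Q) ≤ δ * Real.log (A * A) ∧
      ‖aeval θ Q‖ * ‖v k‖ ≤ ‖d‖ ^ a * (T.factorial * (Λ ^ 3 * (E * (A * t₀ ^ E)) *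
        ((M : ℝ) * s) ^ (M * Λ * s ^ 2) * Real.exp (-((T : ℝ) * s ^ 2)))) *
        (∑ j, ‖v j‖) * (A * A * t₀ ^ (E + a * D)) ^ δ := by
  have hΛ : 1 ≤ Λ := by omega
  have hh0 : 0 ≤ h := by linarith
  have hA1 : 1 ≤ A := by
    have h1 : 1 ≤ Λ * (Λ * Λ) * E := by
      have : 0 < Λ * (Λ * Λ) * E := by positivity
      omega
    have h2 : (1 : ℝ) ≤ (Λ * (Λ * Λ) * E : ℕ) := by exact_mod_cast h1
    rw [hA]; nlinarith
  have ha1 : (1 : ℝ) ≤ 7 * a := by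
    have : (1 : ℝ) ≤ a := by exact_mod_cast (by omega)
    linarith
  have hbound : ∀ s t : ℕ, s ≤ 2 * Λ → t ≤ T → (7 * a : ℝ) ^ t * (5 * s * h) ^ a ≤ H := by
    intro s t hs ht
    refine le_trans ?_ hHeq
    gcongr
  obtain ⟨q, hq0, hqA, hqv⟩ := exists_auxCoeff L hind hd0 hh hd hx Λ T S E a H hH hS hT hE ha
    (hbound S T hSΛ le_rfl) hcard
  rw [← hA] at hqA
  obtain ⟨s, m₀, n₀, t, hSs, hsΛ, hm₀, hn₀, ht, hvan, hfirst, hne⟩ :=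
    exists_first_nonzero L rfl ho hTo hdet (auxCoeff θ q)
      (by
        obtain ⟨i, hi, j, hj, k, hk, hq⟩ := hq0
        exact ⟨i, hi, j, hj, k, hk, auxCoeff_ne_zero hθ hq⟩) hqv
  have hs1 : 1 ≤ s := hS.trans hSs
  have hsz := sz_auxF L hh hd hx Λ E s m₀ n₀ t a hs1 hm₀ hn₀ (by omega) hqA (by linarith)
    (hbound s t hsΛ.le ht.le)
  have hAA : ((Λ * (Λ * Λ) * E : ℕ) : ℝ) * (A * H) = A * A := by
    conv_rhs => rw [hA]
    rw [hA]; ring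
  rw [hAA] at hsz
  obtain ⟨Q, hQ0, hQdeg, hQm, hQv⟩ := hsz.exists_polynomial
    (mul_ne_zero (pow_ne_zero _ hd0) hne) hind (by nlinarith) t₀ ht₀ hθt k
  rw [Fintype.card_fin] at hQdeg hQm hQv
  refine ⟨s, Q, hSs, hsΛ.le, hQ0, hQdeg, hQm, hQv.trans ?_⟩
  have hest := hM Λ s T t (auxCoeff θ q) (E * (A * t₀ ^ E)) m₀ n₀ hΛ hs1 (by positivity)
    (fun i _ j _ k _ => norm_auxCoeff_le ht₀ hθt (by linarith) hqA i j k) hvan hm₀ hn₀ ht hfirst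
  rw [div_le_iff₀ (by positivity)] at hest
  rw [norm_mul, norm_pow]
  gcongr
  refine hest.trans ?_
  rw [mul_comm]
  gcongr

end construction

end PeriodTrdeg

/-! ### Choice of parameters -/

namespace PeriodTrdeg

section parameters
open Polynomial

lemma pow_le_exp {x y z : ℝ} (hx : 0 ≤ x) (h : x ≤ Real.exp y) (k : ℕ) (hk : k * y ≤ z) :
    x ^ k ≤ Real.exp z := by
  calc x ^ k ≤ Real.exp y ^ k := by gcongr
    _ = Real.exp (k * y) := (Real.exp_nat_mul y k).symm
    _ ≤ _ := Real.exp_le_exp.2 hk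

lemma mul_le_exp {x x' y y' : ℝ} (hx' : 0 ≤ x') (h : x ≤ Real.exp y)
    (h' : x' ≤ Real.exp y') : x * x' ≤ Real.exp (y + y') := by
  rw [Real.exp_add]
  exact mul_le_mul h h' hx' (Real.exp_pos _).le

/-- The contribution of the individual factors, when `n` exceeds every constant involved. -/
lemma final_bound {N : ℝ} (hN : 100 ≤ N) {δ a T E s M Λ D : ℕ} {A nd nv ni t₀ : ℝ}
    (hT : (T : ℝ) = N ^ 10) (hE : (E : ℝ) = N ^ 10) (haN : (a : ℝ) ≤ 2 * N ^ 10)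
    (hΛ : (Λ : ℝ) ≤ N ^ 9) (hMΛ : 22 * ((M : ℝ) * Λ) ≤ N ^ 9) (hMs : (M : ℝ) * s ≤ N ^ 11)
    (hs : N ^ 7 ≤ s) (hδ : (δ : ℝ) ≤ N)
    (hED : ((E + a * D : ℕ) : ℝ) ≤ N ^ 11) (hA0 : 0 ≤ A) (hA : A ≤ Real.exp (70 * N ^ 11))
    (hnd0 : 0 ≤ nd) (hnd : nd ≤ N) (hnv0 : 0 ≤ nv) (hnv : nv ≤ N) (hni0 : 0 ≤ ni) (hni : ni ≤ N)
    (ht0 : 0 ≤ t₀) (ht : t₀ ≤ N) :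
    nd ^ a * (T.factorial * (Λ ^ 3 * (E * (A * t₀ ^ E)) *
        ((M : ℝ) * s) ^ (M * Λ * s ^ 2) * Real.exp (-((T : ℝ) * s ^ 2)))) *
        nv * (A * A * t₀ ^ (E + a * D)) ^ δ * ni ≤ Real.exp (-N ^ 22) := by
  have hNe : N ≤ Real.exp N := by have := Real.add_one_le_exp N; linarith
  have hN1 : 1 ≤ N := by linarith
  have hN11 : N ≤ N ^ 11 := le_self_pow₀ hN1 (by norm_num)
  have hNpow : ∀ k : ℕ, N ^ k ≤ Real.exp (k * N) := fun k => pow_le_exp (by linarith) hNe k le_rfl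
  have hNN : N ≤ Real.exp (N ^ 11) := hNe.trans (Real.exp_le_exp.2 hN11)
  have f1 : nd ^ a ≤ Real.exp (2 * N ^ 11) := by
    refine pow_le_exp hnd0 (hnd.trans hNe) a ?_
    calc (a : ℝ) * N ≤ 2 * N ^ 10 * N := by gcongr
      _ = _ := by ring
  have f2 : (T.factorial : ℝ) ≤ Real.exp (10 * N ^ 11) := by
    have h1 : (T.factorial : ℝ) ≤ (T : ℝ) ^ T := by exact_mod_cast Nat.factorial_le_pow T
    refine h1.trans (pow_le_exp (by positivity) (y := 10 * N) ?_ T ?_)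
    · rw [hT]; exact_mod_cast hNpow 10
    · rw [hT]; exact le_of_eq (by ring)
  have f3 : (Λ : ℝ) ^ 3 ≤ Real.exp (27 * N ^ 11) := by
    refine pow_le_exp (by positivity) (y := 9 * N) ?_ 3 (by push_cast; linarith)
    exact hΛ.trans (by exact_mod_cast hNpow 9)
  have f4 : (E : ℝ) ≤ Real.exp (10 * N ^ 11) := by
    rw [hE]
    refine (hNpow 10).trans (Real.exp_le_exp.2 ?_)
    push_cast; linarith
  have f5 : t₀ ^ E ≤ Real.exp (N ^ 11) := by
    refine pow_le_exp ht0 (ht.trans hNe) E ?_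
    rw [hE]; exact le_of_eq (by ring)
  have f6 : ((M : ℝ) * s) ^ (M * Λ * s ^ 2) ≤ Real.exp (N ^ 10 * s ^ 2 / 2) := by
    refine pow_le_exp (by positivity) (y := 11 * N) ?_ _ ?_
    · exact hMs.trans (by exact_mod_cast hNpow 11)
    · push_cast
      have : 22 * ((M : ℝ) * Λ) * (N * s ^ 2) ≤ N ^ 9 * (N * s ^ 2) := by gcongr
      linarith
  have f7 : (A * A * t₀ ^ (E + a * D)) ^ δ ≤ Real.exp (141 * N ^ 13) := by
    have h1 : t₀ ^ (E + a * D) ≤ Real.exp (N ^ 12) := by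
      refine pow_le_exp ht0 (ht.trans hNe) _ ?_
      calc ((E + a * D : ℕ) : ℝ) * N ≤ N ^ 11 * N := by gcongr
        _ = _ := by ring
    have h2 := mul_le_exp (by positivity) (mul_le_exp hA0 hA hA) h1
    refine pow_le_exp (by positivity) h2 δ ?_
    have h3 : N ^ 11 ≤ N ^ 12 := pow_le_pow_right₀ hN1 (by norm_num)
    calc (δ : ℝ) * (70 * N ^ 11 + 70 * N ^ 11 + N ^ 12) ≤ N * (141 * N ^ 12) := by
          gcongr; linarith
      _ = _ := by ring
  have g1 := mul_le_exp (by positivity) hA f5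
  have g2 := mul_le_exp (by positivity) f4 g1
  have g3 := mul_le_exp (by positivity) f3 g2
  have g4 := mul_le_exp (by positivity) g3 f6
  have g5 := mul_le_exp (by positivity) g4 (le_refl (Real.exp (-((T : ℝ) * s ^ 2))))
  have g6 := mul_le_exp (by positivity) f2 g5
  have g7 := mul_le_exp (by positivity) f1 g6
  have g8 := mul_le_exp hnv0 g7 (hnv.trans hNN)
  have g9 := mul_le_exp (by positivity) g8 f7
  have g10 := mul_le_exp hni0 g9 (hni.trans hNN)
  refine g10.trans (Real.exp_le_exp.2 ?_)
  rw [hT]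
  have k1 : N ^ 11 ≤ N ^ 13 := pow_le_pow_right₀ hN1 (by norm_num)
  have k2 : N ^ 10 * N ^ 14 ≤ N ^ 10 * (s : ℝ) ^ 2 := by
    have : (N ^ 7) ^ 2 ≤ (s : ℝ) ^ 2 := by gcongr
    calc N ^ 10 * N ^ 14 = N ^ 10 * (N ^ 7) ^ 2 := by ring
      _ ≤ _ := by gcongr
  have k3 : 100 * N ^ 13 ≤ N ^ 14 := by
    calc 100 * N ^ 13 ≤ N * N ^ 13 := by gcongr
      _ = _ := by ring
  have k4 : N ^ 14 ≤ N ^ 22 := pow_le_pow_right₀ hN1 (by norm_num)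
  have k5 : 10000 * N ^ 22 ≤ N ^ 10 * N ^ 14 := by
    calc 10000 * N ^ 22 = 100 ^ 2 * N ^ 22 := by norm_num
      _ ≤ N ^ 2 * N ^ 22 := by gcongr
      _ = _ := by ring
  linarith

/-- The quantities `ω₁, ω₂, η₁, η₂, ℘(ω₁/2), g₂` are not all algebraic over a field `ℚ(θ)`
generated by a single transcendental number. -/
theorem not_algebraic_adjoin_simple (L : PeriodPair) (hdisc : L.g₂ ^ 3 - 27 * L.g₃ ^ 2 ≠ 0)
    {θ : ℂ} (hθ : Transcendental ℤ θ)
    (hx : ∀ r, IsAlgebraic (IntermediateField.adjoin ℚ {θ}) (baseVal L r)) : False := by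
  classical
  obtain ⟨δ, hne, v, d, D, h, hind, hd0, hh, hd, hx⟩ := exists_rep θ hθ (baseVal L) hx
  obtain ⟨k⟩ := id hne
  have hvk : v k ≠ 0 := by
    intro h0
    have h1 := hind (Pi.single k 1) (by
      rw [Finset.sum_eq_single k]
      · simp [h0]
      · intro b _ hb; simp [hb]
      · simp)
    simpa using congrFun h1 k
  obtain ⟨M, hM1, hM⟩ := analytic_estimate L
  have hhalf : L.ω₁ / 2 ∉ L.lattice := by simpa [gridPt] using gridPt_notMem L 0 0
  obtain ⟨o, ho⟩ := ENat.ne_top_iff_exists.1 (order_weierstrassP_sub_ne_top L hhalf)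
  have hdet := legendre_ne_zero L hdisc
  obtain ⟨B, hB⟩ : ∃ B : ℕ, B = 2 * (δ * (1 + 2 * D)) + 1 := ⟨_, rfl⟩
  have hB1 : 1 ≤ B := by omega
  set t₀ : ℝ := max 1 ‖θ‖ with ht₀
  obtain ⟨K, hK⟩ := exists_nat_ge (h + t₀ + ‖d‖ + ∑ j, ‖v j‖ + ‖v k‖⁻¹)
  have hsum0 : 0 ≤ ∑ j, ‖v j‖ := Finset.sum_nonneg fun _ _ => norm_nonneg _
  have ht01 : 1 ≤ t₀ := le_max_left _ _
  have hnd0 := norm_nonneg d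
  have hni0 : 0 ≤ ‖v k‖⁻¹ := by positivity
  set N₀ : ℕ := 100 + K + 3 * B + B * o + (1 + 2 * D) + 22 * (M * B) + δ with hN₀
  have key : ∀ n, N₀ ≤ n → ∃ Q : ℤ[X], Q ≠ 0 ∧ Q.natDegree ≤ δ * (1 + 2 * D) * n ^ 10 ∧
      Real.log (mahler Q) ≤ 140 * δ * (n : ℝ) ^ 11 ∧
      ‖aeval θ Q‖ ≤ Real.exp (-(n : ℝ) ^ 22) := by
    intro n hn
    have hn100 : 100 ≤ n := by omega
    have hn1 : 1 ≤ n := by omega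
    have hN100 : (100 : ℝ) ≤ n := by exact_mod_cast hn100
    have hKn : (K : ℝ) ≤ n := by exact_mod_cast (by omega : K ≤ n)
    have hhn : h ≤ n := by linarith
    have htn : t₀ ≤ n := by linarith
    have hdn : ‖d‖ ≤ n := by linarith
    have hvn : ∑ j, ‖v j‖ ≤ n := by linarith
    have hin : ‖v k‖⁻¹ ≤ n := by linarith
    have hsq : ∀ c : ℕ, c ≤ n → c * n ^ 8 ≤ n ^ 9 := fun c hc => by
      calc c * n ^ 8 ≤ n * n ^ 8 := by gcongr
        _ = n ^ 9 := by ring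
    have h910 : 100 * n ^ 9 ≤ n ^ 10 := by
      calc 100 * n ^ 9 ≤ n * n ^ 9 := by gcongr
        _ = n ^ 10 := by ring
    have hpos9 : 0 < n ^ 9 := by positivity
    obtain ⟨Λ, hΛ⟩ : ∃ Λ : ℕ, Λ = B * n ^ 8 := ⟨_, rfl⟩
    have hΛ3 : 3 * Λ ≤ n ^ 9 := by
      rw [hΛ, ← mul_assoc]; exact hsq _ (by omega)
    have hS : n ^ 7 ≤ 2 * Λ := by
      rw [hΛ]
      calc n ^ 7 ≤ n ^ 8 := Nat.pow_le_pow_right hn1 (by norm_num)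
        _ ≤ B * n ^ 8 := Nat.le_mul_of_pos_left _ hB1
        _ ≤ _ := by omega
    have hTo : Λ * o < n ^ 10 := by
      have : (B * o) * n ^ 8 ≤ n ^ 9 := hsq _ (by omega)
      have e : Λ * o = (B * o) * n ^ 8 := by rw [hΛ]; ring
      omega
    obtain ⟨a, ha⟩ : ∃ a : ℕ, a = 3 * Λ + n ^ 10 := ⟨_, rfl⟩
    have ha2 : a ≤ 2 * n ^ 10 := by omega
    have hdeg : n ^ 10 + a * D ≤ (1 + 2 * D) * n ^ 10 := by
      calc n ^ 10 + a * D ≤ n ^ 10 + 2 * n ^ 10 * D := by gcongr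
        _ = _ := by ring
    have hcard : 2 * (n ^ 7 * (n ^ 7 * n ^ 10) * (δ * (n ^ 10 + a * D))) ≤
        Λ * (Λ * Λ) * n ^ 10 := by
      calc 2 * (n ^ 7 * (n ^ 7 * n ^ 10) * (δ * (n ^ 10 + a * D)))
          ≤ 2 * (n ^ 7 * (n ^ 7 * n ^ 10) * (δ * ((1 + 2 * D) * n ^ 10))) := by gcongr
        _ = (2 * (δ * (1 + 2 * D))) * n ^ 34 := by ring
        _ ≤ B ^ 3 * n ^ 34 := by
            gcongr
            exact (by omega : 2 * (δ * (1 + 2 * D)) ≤ B).trans (Nat.le_self_pow (by norm_num) B)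
        _ = _ := by rw [hΛ]; ring
    have hNe : (n : ℝ) ≤ Real.exp n := by have := Real.add_one_le_exp (n : ℝ); linarith
    have hNpow : ∀ k : ℕ, (n : ℝ) ^ k ≤ Real.exp (k * n) := fun k =>
      pow_le_exp (by linarith) hNe k le_rfl
    have ha2' : (a : ℝ) ≤ 2 * (n : ℝ) ^ 10 := by exact_mod_cast ha2
    have hΛ9 : (Λ : ℝ) ≤ (n : ℝ) ^ 9 := by exact_mod_cast (by omega : Λ ≤ n ^ 9)
    have hH : (7 * a : ℝ) ^ (n ^ 10) * (5 * (2 * Λ : ℕ) * h) ^ a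
        ≤ Real.exp (33 * (n : ℝ) ^ 11) := by
      have e1 : (7 * a : ℝ) ^ (n ^ 10) ≤ Real.exp (11 * (n : ℝ) ^ 11) := by
        refine pow_le_exp (by positivity) (y := (11 : ℕ) * n) (le_trans ?_ (hNpow 11)) _ ?_
        · calc (7 * a : ℝ) ≤ 7 * (2 * (n : ℝ) ^ 10) := by gcongr
            _ = 14 * (n : ℝ) ^ 10 := by ring
            _ ≤ n * (n : ℝ) ^ 10 := by gcongr; linarith
            _ = _ := by ring
        · push_cast; exact le_of_eq (by ring)
      have e2 : (5 * (2 * Λ : ℕ) * h) ^ a ≤ Real.exp (22 * (n : ℝ) ^ 11) := by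
        refine pow_le_exp (by positivity) (y := (11 : ℕ) * n) (le_trans ?_ (hNpow 11)) _ ?_
        · calc 5 * ((2 * Λ : ℕ) : ℝ) * h ≤ 5 * (2 * (n : ℝ) ^ 9) * n := by
                push_cast; gcongr
            _ = 10 * (n : ℝ) ^ 10 := by ring
            _ ≤ n * (n : ℝ) ^ 10 := by gcongr; linarith
            _ = _ := by ring
        · calc (a : ℝ) * ((11 : ℕ) * n) ≤ 2 * (n : ℝ) ^ 10 * ((11 : ℕ) * n) := by gcongr
            _ = _ := by push_cast; ring
      refine (mul_le_exp (by positivity) e1 e2).trans (Real.exp_le_exp.2 ?_)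
      linarith
    obtain ⟨A, hA⟩ : ∃ A : ℝ, A = (Λ * (Λ * Λ) * n ^ 10 : ℕ) * Real.exp (33 * (n : ℝ) ^ 11) :=
      ⟨_, rfl⟩
    have hn11 : (n : ℝ) ≤ (n : ℝ) ^ 11 := le_self_pow₀ (by linarith) (by norm_num)
    have hA70 : A ≤ Real.exp (70 * (n : ℝ) ^ 11) := by
      have e1 : ((Λ * (Λ * Λ) * n ^ 10 : ℕ) : ℝ) ≤ Real.exp (37 * n) := by
        refine le_trans ?_ (by exact_mod_cast hNpow 37)
        push_cast
        calc (Λ : ℝ) * (Λ * Λ) * (n : ℝ) ^ 10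
            ≤ (n : ℝ) ^ 9 * ((n : ℝ) ^ 9 * (n : ℝ) ^ 9) * (n : ℝ) ^ 10 := by gcongr
          _ = _ := by ring
      rw [hA]
      refine (mul_le_exp (Real.exp_pos _).le e1 le_rfl).trans (Real.exp_le_exp.2 ?_)
      linarith
    have hΛ1 : 1 ≤ Λ := by
      have : 1 ≤ n ^ 7 := Nat.one_le_pow _ _ hn1
      omega
    have hA0 : 0 < A := by
      rw [hA]
      have : 0 < Λ * (Λ * Λ) * n ^ 10 := by positivity
      have : (0 : ℝ) < (Λ * (Λ * Λ) * n ^ 10 : ℕ) := by exact_mod_cast this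
      positivity
    obtain ⟨s, Q, hSs, hsΛ, hQ0, hQdeg, hQm, hQv⟩ := transcendence_step L hθ hind hd0 hh hd hx hM
      ho.symm hdet ht01 (le_max_right 1 ‖θ‖) k Λ (n ^ 10) (n ^ 7) (n ^ 10) a
      (Real.exp (33 * (n : ℝ) ^ 11)) A (Real.one_le_exp (by positivity))
      (Nat.one_le_pow _ _ hn1) (Nat.one_le_pow _ _ hn1) (Nat.pow_pos hn1) ha hH hA hcard hTo hS
    refine ⟨Q, hQ0, hQdeg.trans ?_, hQm.trans ?_, ?_⟩
    · calc δ * (n ^ 10 + a * D) ≤ δ * ((1 + 2 * D) * n ^ 10) := by gcongr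
        _ = _ := by ring
    · have : Real.log (A * A) ≤ 140 * (n : ℝ) ^ 11 := by
        rw [Real.log_le_iff_le_exp (by positivity)]
        refine (mul_le_exp hA0.le hA70 hA70).trans (Real.exp_le_exp.2 ?_)
        linarith
      calc (δ : ℝ) * Real.log (A * A) ≤ δ * (140 * (n : ℝ) ^ 11) := by gcongr
        _ = _ := by ring
    · rw [← le_div_iff₀ (norm_pos_iff.2 hvk), div_eq_mul_inv] at hQv
      refine hQv.trans ?_
      refine final_bound hN100 (by push_cast; rfl) (by push_cast; rfl) ha2' hΛ9 ?_ ?_ ?_ ?_ ?_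
        hA0.le hA70 hnd0 hdn hsum0 hvn hni0 hin (by linarith) htn
      · have : 22 * (M * B) * n ^ 8 ≤ n ^ 9 := hsq _ (by omega)
        rw [hΛ]
        exact_mod_cast (by linarith : 22 * (M * (B * n ^ 8)) ≤ n ^ 9)
      · have hMn : M ≤ n := by
          have : M * 1 ≤ M * B := Nat.mul_le_mul_left _ hB1
          omega
        have : M * s ≤ n * n ^ 10 := Nat.mul_le_mul hMn (by omega)
        have e : n * n ^ 10 = n ^ 11 := by ring
        rw [e] at this
        exact_mod_cast this
      · exact_mod_cast hSs
      · exact_mod_cast (by omega : δ ≤ n)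
      · have : n ^ 10 + a * D ≤ n ^ 11 := by
          refine hdeg.trans ?_
          calc (1 + 2 * D) * n ^ 10 ≤ n * n ^ 10 := Nat.mul_le_mul_right _ (by omega)
            _ = n ^ 11 := by ring
        exact_mod_cast this
  choose! Q hQ using key
  refine gelfond_criterion θ hθ (140 * δ + δ * (1 + 2 * D) + 1) (by
    have : (0 : ℝ) ≤ 140 * δ + δ * (1 + 2 * D) := by positivity
    linarith) N₀ Q fun n hn => ?_
  obtain ⟨h0, h1, h2, h3⟩ := hQ n hn
  have hδ0 : (0 : ℝ) ≤ δ := by positivity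
  have hδD : (0 : ℝ) ≤ δ * (1 + 2 * D) := by positivity
  refine ⟨h0, ?_, h2.trans ?_, h3⟩
  · have : ((Q n).natDegree : ℝ) ≤ δ * (1 + 2 * D) * (n : ℝ) ^ 10 := by exact_mod_cast h1
    refine this.trans ?_
    gcongr
    linarith
  · gcongr
    linarith

end parameters

end PeriodTrdeg

/-! ### Reduction to one transcendental generator -/

namespace PeriodTrdeg

section reduction

open scoped IntermediateField.algebraAdjoinAdjoin in
/-- If `θ` is transcendental over `ℚ` and `y` over `ℚ(θ)`, then they are algebraically
independent. -/
lemma algebraicIndependent_pair {θ y : ℂ} (hθ : Transcendental ℚ θ)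
    (hy : ¬ IsAlgebraic (IntermediateField.adjoin ℚ {θ}) y) : AlgebraicIndependent ℚ ![y, θ] := by
  have h1 : AlgebraicIndependent ℚ (fun _ : Unit => θ) := by
    rw [algebraicIndependent_unique_type_iff]; exact hθ
  have h2 : Transcendental (Algebra.adjoin ℚ (Set.range fun _ : Unit => θ)) y := by
    rw [Set.range_const]
    intro h
    exact hy (h.extendScalars (FaithfulSMul.algebraMap_injective _ _))
  have h3 := (h1.option_iff_transcendental y).2 h2
  convert h3.comp (![none, some ()] : Fin 2 → Option Unit) (by
    intro i j h; fin_cases i <;> fin_cases j <;> simp_all)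
  ext i; fin_cases i <;> rfl

/-- A root of the cubic `4X³ - aX - b` is algebraic when `a` and `b` are. -/
lemma isAlgebraic_of_cubic {F E : Type*} [Field F] [CharZero F] [Field E] [Algebra F E]
    {a b x : E} (ha : IsAlgebraic F a) (hb : IsAlgebraic F b) (h : 4 * x ^ 3 - a * x - b = 0) :
    IsAlgebraic F x := by
  have hx : IsAlgebraic (algebraicClosure F E) x := by
    let a' : algebraicClosure F E := ⟨a, mem_algebraicClosure_iff.2 ha⟩
    let b' : algebraicClosure F E := ⟨b, mem_algebraicClosure_iff.2 hb⟩
    refine ⟨Polynomial.C 4 * Polynomial.X ^ 3 - Polynomial.C a' * Polynomial.X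
      - Polynomial.C b', ?_, ?_⟩
    · intro h0
      have : CharZero (algebraicClosure F E) :=
        charZero_of_injective_algebraMap (FaithfulSMul.algebraMap_injective F _)
      have h3 := congrArg (fun p => Polynomial.coeff p 3) h0
      simp at h3
    · have h4 : algebraMap (algebraicClosure F E) E 4 = 4 := map_ofNat _ 4
      simp only [map_sub, map_mul, map_pow, Polynomial.aeval_C, Polynomial.aeval_X, h4]
      exact h
  exact hx.restrictScalars F

/-- If a set of complex numbers generates a field without algebraically independent pairs, its
elements are algebraic over `ℚ(θ)` for a single transcendental `θ`. -/
lemma exists_simple_generator (S : Set ℂ)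
    (h : ¬ ∃ a b : IntermediateField.adjoin ℚ S, AlgebraicIndependent ℚ ![a, b]) :
    ∃ θ : ℂ, Transcendental ℤ θ ∧ ∀ x ∈ S, IsAlgebraic (IntermediateField.adjoin ℚ {θ}) x := by
  by_cases hS : ∀ x ∈ S, IsAlgebraic ℚ x
  · refine ⟨((liouvilleNumber 2 : ℝ) : ℂ), ?_, fun x hx => ?_⟩
    · have := transcendental_liouvilleNumber (m := 2) le_rfl
      have h2 := (transcendental_algebraMap_iff (R := ℤ) (S := ℝ) (A := ℂ)
        (FaithfulSMul.algebraMap_injective ℝ ℂ)).2 this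
      simpa using h2
    · exact (hS x hx).extendScalars (FaithfulSMul.algebraMap_injective _ _)
  · push Not at hS
    obtain ⟨θ, hθS, hθ⟩ := hS
    refine ⟨θ, fun hz => hθ ?_, fun x hx => ?_⟩
    · exact hz.extendScalars (FaithfulSMul.algebraMap_injective _ _)
    · by_contra hcon
      refine h ⟨⟨x, IntermediateField.subset_adjoin ℚ S hx⟩,
        ⟨θ, IntermediateField.subset_adjoin ℚ S hθS⟩, ?_⟩
      have h1 := algebraicIndependent_pair hθ hcon
      refine (AlgHom.algebraicIndependent_iff (IntermediateField.val _)
        (FaithfulSMul.algebraMap_injective (IntermediateField.adjoin ℚ S) ℂ)).1 ?_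
      have h2 : (IntermediateField.val (IntermediateField.adjoin ℚ S)) ∘
          ![⟨x, IntermediateField.subset_adjoin ℚ S hx⟩,
            ⟨θ, IntermediateField.subset_adjoin ℚ S hθS⟩] = ![x, θ] := by
        ext i; fin_cases i <;> rfl
      rw [h2]
      exact h1

end reduction

end PeriodTrdeg

/-- **The period matrix of an elliptic curve over `ℚ̄` has transcendence degree at least 2**
(André, via G-functions): for an elliptic curve `E : y² = 4x³ - g₂x - g₃` defined over the
algebraic numbers, with period lattice `ℤω₁ + ℤω₂` and quasi-periods `η₁, η₂`, the field
`ℚ(ω₁, ω₂, η₁, η₂, 2πi)` generated by the entries of a period matrix of `E` has transcendence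
degree at least `2` over `ℚ`, i.e. it contains two algebraically independent elements. -/
theorem period_matrix_trdeg_ge_two (ω₁ ω₂ : ℂ) (hτ : 0 < (ω₂ / ω₁).im)
    (hg₂ : IsAlgebraic ℚ (weierstrassG2 ω₁ ω₂)) (hg₃ : IsAlgebraic ℚ (weierstrassG3 ω₁ ω₂))
    (hdisc : weierstrassG2 ω₁ ω₂ ^ 3 - 27 * weierstrassG3 ω₁ ω₂ ^ 2 ≠ 0) :
    ∃ a b : (IntermediateField.adjoin ℚ
        ({ω₁, ω₂, quasiPeriod ω₁ ω₂ ω₁, quasiPeriod ω₁ ω₂ ω₂,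
          2 * Real.pi * Complex.I} : Set ℂ)),
      AlgebraicIndependent ℚ ![a, b] := by
  by_contra hcon
  obtain ⟨θ, hθ, hS⟩ := PeriodTrdeg.exists_simple_generator _ hcon
  let L : PeriodPair := ⟨ω₁, ω₂, PeriodTrdeg.indep_of_im_pos hτ⟩
  have e2 : weierstrassG2 ω₁ ω₂ = L.g₂ := PeriodTrdeg.weierstrassG2_eq L
  have e3 : weierstrassG3 ω₁ ω₂ = L.g₃ := PeriodTrdeg.weierstrassG3_eq L
  have q1 : quasiPeriod ω₁ ω₂ ω₁ = PeriodTrdeg.eta₁ L :=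
    congrArg (2 * ·) (PeriodTrdeg.weierstrassZeta_eq L (ω₁ / 2))
  have q2 : quasiPeriod ω₁ ω₂ ω₂ = PeriodTrdeg.eta₂ L :=
    congrArg (2 * ·) (PeriodTrdeg.weierstrassZeta_eq L (ω₂ / 2))
  rw [e2] at hg₂
  rw [e3] at hg₃
  rw [e2, e3] at hdisc
  rw [q1, q2] at hS
  have half : ∀ {x : ℂ}, IsAlgebraic (IntermediateField.adjoin ℚ {θ}) x →
      IsAlgebraic (IntermediateField.adjoin ℚ {θ}) (x / 2) := fun hx => by
    rw [div_eq_mul_inv]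
    exact hx.mul ((isAlgebraic_algebraMap (2 : IntermediateField.adjoin ℚ {θ})).inv)
  have ext : ∀ {x : ℂ}, IsAlgebraic ℚ x → IsAlgebraic (IntermediateField.adjoin ℚ {θ}) x :=
    fun hx => hx.extendScalars (FaithfulSMul.algebraMap_injective _ _)
  -- `℘(ω₁/2)` is a root of `4X³ - g₂X - g₃`, whose coefficients are algebraic numbers.
  have he : IsAlgebraic ℚ (L.weierstrassP (ω₁ / 2)) :=
    PeriodTrdeg.isAlgebraic_of_cubic hg₂ hg₃ (PeriodTrdeg.weierstrassP_half L)
  refine PeriodTrdeg.not_algebraic_adjoin_simple L hdisc hθ fun r => ?_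
  fin_cases r
  · exact half (hS ω₁ (by simp))
  · exact half (hS ω₂ (by simp))
  · exact ext he
  · exact half (hS _ (by simp))
  · exact half (hS _ (by simp))
  · exact half (ext hg₂)
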